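/- Let n = 20 and c ∈ ℝ. The quartic polynomial p(z) = 3125z⁴ − 83914629120000z³ + 429438995162964368031744z² + 1045471534388841527438982355353600z + 629847004905001626921946285352115240960000 has exactly two real roots β < γ, and the operator ((−Δ)⁵ + c|x|⁻¹⁰) with domain C₀^∞(ℝ²⁰∖{0}) is essentially self-adjoint in L²(ℝ²⁰; d²⁰x) if and only if c ∈ [0, β] ∪ [γ, ∞). -/

import Mathlib

open MeasureTheory

noncomputable section

/-- A densely defined operator `T` in a complex Hilbert space is *essentially self-adjoint*
if its adjoint `T*` is self-adjoint (equivalently, its closure is self-adjoint). -/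
def EssentiallySelfAdjoint {H : Type*} [NormedAddCommGroup H] [InnerProductSpace ℂ H]
    [CompleteSpace H] (T : H →ₗ.[ℂ] H) : Prop :=
  Dense (T.domain : Set H) ∧ IsSelfAdjoint T.adjoint

/-- The Laplacian of `f : ℝⁿ → ℂ`. -/
def laplacian {n : ℕ} (f : EuclideanSpace ℝ (Fin n) → ℂ) (x : EuclideanSpace ℝ (Fin n)) : ℂ :=
  ∑ i : Fin n, fderiv ℝ (fun y => fderiv ℝ f y (EuclideanSpace.single i (1:ℝ))) x
    (EuclideanSpace.single i (1:ℝ))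

/-- The graph of the operator given by the formal differential expression `L` with domain
`C₀^∞(ℝⁿ \ {0})`, as a subspace of `L²(ℝⁿ) × L²(ℝⁿ)`. -/
def graphOf (n : ℕ) (L : (EuclideanSpace ℝ (Fin n) → ℂ) → (EuclideanSpace ℝ (Fin n) → ℂ)) :
    Submodule ℂ (Lp ℂ 2 (volume : Measure (EuclideanSpace ℝ (Fin n))) ×
      Lp ℂ 2 (volume : Measure (EuclideanSpace ℝ (Fin n)))) :=
  Submodule.span ℂ {p | ∃ φ : EuclideanSpace ℝ (Fin n) → ℂ,
    ContDiff ℝ (⊤ : ℕ∞) φ ∧ HasCompactSupport φ ∧ (0 : EuclideanSpace ℝ (Fin n)) ∉ tsupport φ ∧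
    (p.1 : EuclideanSpace ℝ (Fin n) → ℂ) =ᵐ[volume] φ ∧
    (p.2 : EuclideanSpace ℝ (Fin n) → ℂ) =ᵐ[volume] L φ}

/-- The operator in `L²(ℝⁿ)` given by the formal differential expression `L` with domain
`C₀^∞(ℝⁿ \ {0})`. -/
def opOn (n : ℕ) (L : (EuclideanSpace ℝ (Fin n) → ℂ) → (EuclideanSpace ℝ (Fin n) → ℂ)) :
    Lp ℂ 2 (volume : Measure (EuclideanSpace ℝ (Fin n))) →ₗ.[ℂ]
      Lp ℂ 2 (volume : Measure (EuclideanSpace ℝ (Fin n))) :=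
  (graphOf n L).toLinearPMap

/-- The negative Laplacian `-Δ`. -/
def negLap {n : ℕ} (f : EuclideanSpace ℝ (Fin n) → ℂ) : EuclideanSpace ℝ (Fin n) → ℂ :=
  fun x => -laplacian f x

/-- The operator `(-Δ)⁵ + c|x|⁻¹⁰` with domain `C₀^∞(ℝ²⁰ \ {0})` in `L²(ℝ²⁰)`. -/
def T5op (c : ℝ) :
    Lp ℂ 2 (volume : Measure (EuclideanSpace ℝ (Fin 20))) →ₗ.[ℂ]
      Lp ℂ 2 (volume : Measure (EuclideanSpace ℝ (Fin 20))) :=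
  opOn 20 (fun φ x => negLap^[5] φ x + ((c * (‖x‖ ^ 10)⁻¹ : ℝ) : ℂ) * φ x)

/-- The quartic polynomial from Theorem 4.3. -/
def quartic (z : ℝ) : ℝ :=
  3125 * z ^ 4 - 83914629120000 * z ^ 3 + 429438995162964368031744 * z ^ 2 +
    1045471534388841527438982355353600 * z +
    629847004905001626921946285352115240960000

open Filter Topology
open scoped InnerProductSpace

section Abstract
variable {H : Type*} [NormedAddCommGroup H] [InnerProductSpace ℂ H]

theorem norm_sq_sub_I_smul {x y : H} (h : ⟪y, x⟫_ℂ = ⟪x, y⟫_ℂ) :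
    ‖y - Complex.I • x‖ ^ 2 = ‖y‖ ^ 2 + ‖x‖ ^ 2 := by
  rw [norm_sub_sq (𝕜 := ℂ), inner_smul_right, norm_smul, Complex.norm_I, one_mul]
  have him : (⟪y, x⟫_ℂ).im = 0 := by
    have h2 := inner_conj_symm (𝕜 := ℂ) y x
    rw [← h] at h2
    exact Complex.conj_eq_iff_im.mp h2
  simp [him]

variable [CompleteSpace H]

theorem exists_seq_tendsto_adjoint {T : H →ₗ.[ℂ] H} (hd : Dense (T.domain : Set H))
    (hs : ∀ x y : T.domain, ⟪T x, (y : H)⟫_ℂ = ⟪(x : H), T y⟫_ℂ)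
    (hp : ∀ u : H, (∀ x : T.domain, ⟪u, T x + Complex.I • (x : H)⟫_ℂ = 0) → u = 0)
    (hm : ∀ u : H, (∀ x : T.domain, ⟪u, T x - Complex.I • (x : H)⟫_ℂ = 0) → u = 0)
    (u : T.adjoint.domain) :
    ∃ z : ℕ → T.domain, Tendsto (fun n => (z n : H)) atTop (𝓝 (u : H)) ∧
      Tendsto (fun n => T (z n)) atTop (𝓝 (T.adjoint u)) := by
  let A : T.domain →ₗ[ℂ] H := T.toFun - Complex.I • T.domain.subtype
  have hA : ∀ x : T.domain, A x = T x - Complex.I • (x : H) := fun x => rfl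
  have hnA : ∀ x : T.domain, ‖A x‖ ^ 2 = ‖T x‖ ^ 2 + ‖(x : H)‖ ^ 2 := fun x =>
    norm_sq_sub_I_smul (hs x x)
  have hdense : (LinearMap.range A).topologicalClosure = ⊤ := by
    rw [Submodule.topologicalClosure_eq_top_iff, Submodule.eq_bot_iff]
    intro w hw
    rw [Submodule.mem_orthogonal'] at hw
    exact hm w fun x => hw _ ⟨x, rfl⟩
  have hmem : T.adjoint u - Complex.I • (u : H) ∈ closure (LinearMap.range A : Set H) := by
    have : T.adjoint u - Complex.I • (u : H) ∈ (LinearMap.range A).topologicalClosure := by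
      rw [hdense]; trivial
    exact this
  obtain ⟨a, ha, hlim⟩ := mem_closure_iff_seq_limit.mp hmem
  choose z hz using ha
  have hc : CauchySeq a := hlim.cauchySeq
  have hcz : CauchySeq fun n => (z n : H) := by
    rw [Metric.cauchySeq_iff] at hc ⊢
    intro ε hε
    obtain ⟨N, hN⟩ := hc ε hε
    refine ⟨N, fun m hm n hn => lt_of_le_of_lt ?_ (hN m hm n hn)⟩
    rw [dist_eq_norm, dist_eq_norm, ← hz m, ← hz n, ← map_sub]
    have := hnA (z m - z n)
    rw [AddSubgroupClass.coe_sub] at this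
    exact le_of_sq_le_sq (by nlinarith [sq_nonneg ‖T (z m - z n)‖]) (norm_nonneg _)
  obtain ⟨x, hx⟩ := cauchySeq_tendsto_of_complete hcz
  have hT : Tendsto (fun n => T (z n)) atTop
      (𝓝 (T.adjoint u - Complex.I • (u : H) + Complex.I • x)) := by
    have h1 := hlim.add (hx.const_smul Complex.I)
    refine h1.congr fun n => ?_
    rw [← hz n, hA]; simp
  have hxu : (u : H) - x = 0 := by
    apply hp
    intro v
    have h1 : ⟪T.adjoint u, (v : H)⟫_ℂ = ⟪(u : H), T v⟫_ℂ :=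
      T.adjoint_isFormalAdjoint hd u v
    have h2 : ⟪T.adjoint u - Complex.I • (u : H) + Complex.I • x, (v : H)⟫_ℂ = ⟪x, T v⟫_ℂ :=
      tendsto_nhds_unique (hT.inner tendsto_const_nhds)
        ((hx.inner tendsto_const_nhds).congr fun n => (hs (z n) v).symm)
    simp only [inner_sub_left, inner_add_left, inner_add_right, inner_smul_left, inner_smul_right,
      Complex.conj_I, h1] at h2 ⊢
    linear_combination h2
  have hxu' : x = u := (sub_eq_zero.mp hxu).symm
  subst hxu'
  refine ⟨z, hx, ?_⟩
  simpa using hT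

theorem essentiallySelfAdjoint_of_forall_eq_zero {T : H →ₗ.[ℂ] H}
    (hd : Dense (T.domain : Set H))
    (hs : ∀ x y : T.domain, ⟪T x, (y : H)⟫_ℂ = ⟪(x : H), T y⟫_ℂ)
    (hp : ∀ u : H, (∀ x : T.domain, ⟪u, T x + Complex.I • (x : H)⟫_ℂ = 0) → u = 0)
    (hm : ∀ u : H, (∀ x : T.domain, ⟪u, T x - Complex.I • (x : H)⟫_ℂ = 0) → u = 0) :
    EssentiallySelfAdjoint T := by
  refine ⟨hd, ?_⟩
  have hle : T ≤ T.adjoint := LinearPMap.IsFormalAdjoint.le_adjoint hd fun x y => hs x y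
  have hd' : Dense (T.adjoint.domain : Set H) := hd.mono hle.1
  rw [LinearPMap.isSelfAdjoint_def]
  apply le_antisymm
  · refine LinearPMap.IsFormalAdjoint.le_adjoint hd fun x y => ?_
    have hyx := T.adjoint.adjoint_isFormalAdjoint hd' y ⟨x, hle.1 x.2⟩
    rw [hle.2 (x := x) (y := ⟨x, hle.1 x.2⟩) rfl, ← inner_conj_symm, ← hyx, inner_conj_symm]
  · refine LinearPMap.IsFormalAdjoint.le_adjoint hd' fun u v => ?_
    obtain ⟨z, hz, hTz⟩ := exists_seq_tendsto_adjoint hd hs hp hm u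
    refine tendsto_nhds_unique (hTz.inner tendsto_const_nhds)
      ((hz.inner tendsto_const_nhds).congr fun n => ?_)
    have := T.adjoint_isFormalAdjoint hd v (z n)
    rw [← inner_conj_symm, this, inner_conj_symm]

theorem EssentiallySelfAdjoint.inner_eq {T : H →ₗ.[ℂ] H} (h : EssentiallySelfAdjoint T)
    {u u' v v' : H} (hu : ∀ x : T.domain, ⟪u', (x : H)⟫_ℂ = ⟪u, T x⟫_ℂ)
    (hv : ∀ x : T.domain, ⟪v', (x : H)⟫_ℂ = ⟪v, T x⟫_ℂ) : ⟪u', v⟫_ℂ = ⟪u, v'⟫_ℂ := by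
  have hsa := (LinearPMap.isSelfAdjoint_def).mp h.2
  have mu : u ∈ T.adjoint.domain := LinearPMap.mem_adjoint_domain_of_exists _ ⟨u', hu⟩
  have mv : v ∈ T.adjoint.domain := LinearPMap.mem_adjoint_domain_of_exists _ ⟨v', hv⟩
  have eu : T.adjoint ⟨u, mu⟩ = u' := LinearPMap.adjoint_apply_eq h.1 _ hu
  have ev : T.adjoint ⟨v, mv⟩ = v' := LinearPMap.adjoint_apply_eq h.1 _ hv
  have hf := T.adjoint.adjoint_isFormalAdjoint (IsSelfAdjoint.dense_domain h.2)
  rw [hsa] at hf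
  have := hf ⟨u, mu⟩ ⟨v, mv⟩
  rwa [eu, ev] at this

end Abstract

section TestFunctions
variable {n : ℕ}

/-- Smooth functions with compact support away from the origin. -/
structure IsTest (φ : EuclideanSpace ℝ (Fin n) → ℂ) : Prop where
  smooth : ContDiff ℝ (⊤ : ℕ∞) φ
  compact : HasCompactSupport φ
  zero_notMem : (0 : EuclideanSpace ℝ (Fin n)) ∉ tsupport φ

namespace IsTest
variable {φ ψ : EuclideanSpace ℝ (Fin n) → ℂ}

theorem mono (h : IsTest φ) (hs : ContDiff ℝ (⊤ : ℕ∞) ψ) (ht : tsupport ψ ⊆ tsupport φ) :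
    IsTest ψ :=
  ⟨hs, h.compact.of_isClosed_subset (isClosed_tsupport _) ht, fun h0 => h.zero_notMem (ht h0)⟩

theorem zero : IsTest (0 : EuclideanSpace ℝ (Fin n) → ℂ) :=
  ⟨contDiff_const, HasCompactSupport.zero, by simp [tsupport]⟩

theorem add (h : IsTest φ) (h' : IsTest ψ) : IsTest (φ + ψ) :=
  ⟨h.smooth.add h'.smooth, h.compact.add h'.compact, fun h0 => by
    rcases tsupport_add φ ψ h0 with h1 | h1
    exacts [h.zero_notMem h1, h'.zero_notMem h1]⟩

theorem mul_left (h : IsTest φ) {m : EuclideanSpace ℝ (Fin n) → ℂ}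
    (hm : ∀ x ≠ 0, ContDiffAt ℝ (⊤ : ℕ∞) m x) : IsTest (fun x => m x * φ x) := by
  refine h.mono (contDiff_iff_contDiffAt.2 fun x => ?_) (tsupport_mul_subset_right)
  by_cases hx : x = 0
  · subst hx
    have h0 := notMem_tsupport_iff_eventuallyEq.1 h.zero_notMem
    refine (contDiffAt_const (c := (0 : ℂ))).congr_of_eventuallyEq ?_
    filter_upwards [h0] with y hy
    simp [hy]
  · exact (hm x hx).mul h.smooth.contDiffAt

theorem smul (h : IsTest φ) (a : ℂ) : IsTest (a • φ) :=
  h.mul_left (m := fun _ => a) fun _ _ => contDiffAt_const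

theorem star (h : IsTest φ) : IsTest (fun x => starRingEnd ℂ (φ x)) := by
  refine h.mono (Complex.conjCLE.contDiff.comp h.smooth) ?_
  exact closure_mono fun x hx hx' => hx (by simp [hx'])

theorem fderiv_apply (h : IsTest φ) (v : EuclideanSpace ℝ (Fin n)) :
    IsTest (fun x => fderiv ℝ φ x v) :=
  h.mono ((h.smooth.fderiv_right (by simp)).clm_apply contDiff_const)
    (tsupport_fderiv_apply_subset ℝ v)

theorem sum {ι : Type*} (s : Finset ι) {f : ι → EuclideanSpace ℝ (Fin n) → ℂ}
    (h : ∀ i ∈ s, IsTest (f i)) : IsTest (∑ i ∈ s, f i) := by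
  classical
  induction s using Finset.induction_on with
  | empty => simpa using zero
  | insert a s ha ih =>
    rw [Finset.sum_insert ha]
    exact (h a (Finset.mem_insert_self a s)).add
      (ih fun i hi => h i (Finset.mem_insert_of_mem hi))

theorem laplacian (h : IsTest φ) : IsTest (laplacian φ) := by
  have := sum Finset.univ (fun i _ => (h.fderiv_apply (EuclideanSpace.single i (1:ℝ))).fderiv_apply
    (EuclideanSpace.single i (1:ℝ)))
  convert this using 1
  ext x
  simp [_root_.laplacian]

theorem negLap (h : IsTest φ) : IsTest (negLap φ) := by
  have := h.laplacian.smul (-1)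
  convert this using 1
  ext x
  simp [_root_.negLap]

theorem iterate_negLap (h : IsTest φ) (k : ℕ) : IsTest (_root_.negLap^[k] φ) := by
  induction k generalizing φ with
  | zero => exact h
  | succ k ih => exact ih h.negLap

theorem differentiable (h : IsTest φ) : Differentiable ℝ φ := h.smooth.differentiable (by simp)

theorem continuous (h : IsTest φ) : Continuous φ := h.smooth.continuous

theorem memLp (h : IsTest φ) (p : ENNReal) : MemLp φ p volume :=
  h.continuous.memLp_of_hasCompactSupport h.compact

theorem integrable (h : IsTest φ) : Integrable φ := memLp_one_iff_integrable.1 (h.memLp 1)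

theorem mul (h : IsTest φ) (h' : IsTest ψ) : IsTest (fun x => φ x * ψ x) :=
  h'.mul_left fun _ _ => h.smooth.contDiffAt

end IsTest

variable {φ ψ : EuclideanSpace ℝ (Fin n) → ℂ}

theorem laplacian_add (h : IsTest φ) (h' : IsTest ψ) :
    laplacian (φ + ψ) = laplacian φ + laplacian ψ := by
  ext x
  simp only [laplacian, Pi.add_apply, ← Finset.sum_add_distrib]
  refine Finset.sum_congr rfl fun i _ => ?_
  have : (fun y => fderiv ℝ (φ + ψ) y (EuclideanSpace.single i (1:ℝ))) =
      (fun y => fderiv ℝ φ y (EuclideanSpace.single i (1:ℝ))) +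
      fun y => fderiv ℝ ψ y (EuclideanSpace.single i (1:ℝ)) := by
    ext y
    simp [fderiv_add (h.differentiable y) (h'.differentiable y)]
  rw [this, fderiv_add ((h.fderiv_apply _).differentiable x) ((h'.fderiv_apply _).differentiable x)]
  simp

theorem laplacian_smul (h : IsTest φ) (a : ℂ) : laplacian (a • φ) = a • laplacian φ := by
  ext x
  simp only [laplacian, Pi.smul_apply, Finset.smul_sum]
  refine Finset.sum_congr rfl fun i _ => ?_
  have : (fun y => fderiv ℝ (a • φ) y (EuclideanSpace.single i (1:ℝ))) =
      a • fun y => fderiv ℝ φ y (EuclideanSpace.single i (1:ℝ)) := by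
    ext y
    simp [fderiv_const_smul (h.differentiable y)]
  rw [this, fderiv_const_smul ((h.fderiv_apply _).differentiable x)]
  simp

theorem laplacian_conj (φ : EuclideanSpace ℝ (Fin n) → ℂ) :
    laplacian (fun x => starRingEnd ℂ (φ x)) = fun x => starRingEnd ℂ (laplacian φ x) := by
  have key : ∀ (f : EuclideanSpace ℝ (Fin n) → ℂ) (x v : EuclideanSpace ℝ (Fin n)),
      fderiv ℝ (fun y => starRingEnd ℂ (f y)) x v = starRingEnd ℂ (fderiv ℝ f x v) := by
    intro f x v
    have := Complex.conjCLE.comp_fderiv (f := f) (x := x)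
    have h2 : (fun y => starRingEnd ℂ (f y)) = Complex.conjCLE ∘ f := by
      ext y; simp
    rw [h2, this]
    simp
  ext x
  simp only [laplacian, key, map_sum]

theorem integral_laplacian_mul (h : IsTest φ) (h' : IsTest ψ) :
    ∫ x, laplacian φ x * ψ x = ∫ x, φ x * laplacian ψ x := by
  have key : ∀ {f g : EuclideanSpace ℝ (Fin n) → ℂ} (v : EuclideanSpace ℝ (Fin n)),
      IsTest f → IsTest g → ∫ x, f x * fderiv ℝ g x v = - ∫ x, fderiv ℝ f x v * g x := by
    intro f g v hf hg
    exact integral_mul_fderiv_eq_neg_fderiv_mul_of_integrable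
      ((hf.fderiv_apply v).mul hg).integrable (hf.mul (hg.fderiv_apply v)).integrable
      (hf.mul hg).integrable (fun x _ => hf.differentiable x) (fun x _ => hg.differentiable x)
  simp only [laplacian, Finset.sum_mul, Finset.mul_sum]
  rw [integral_finsetSum, integral_finsetSum]
  · refine Finset.sum_congr rfl fun i _ => ?_
    have a := h.fderiv_apply (EuclideanSpace.single i (1:ℝ))
    have b := h'.fderiv_apply (EuclideanSpace.single i (1:ℝ))
    have h2 := key (EuclideanSpace.single i (1:ℝ)) a h'
    rw [key _ h b, h2, neg_neg]
  · intro i _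
    exact (h.mul ((h'.fderiv_apply _).fderiv_apply _)).integrable
  · intro i _
    exact (((h.fderiv_apply _).fderiv_apply _).mul h').integrable

theorem integral_negLap_mul (h : IsTest φ) (h' : IsTest ψ) :
    ∫ x, negLap φ x * ψ x = ∫ x, φ x * negLap ψ x := by
  simp only [negLap, neg_mul, mul_neg, integral_neg, integral_laplacian_mul h h']

theorem negLap_add (h : IsTest φ) (h' : IsTest ψ) : negLap (φ + ψ) = negLap φ + negLap ψ := by
  ext x
  simp [negLap, laplacian_add h h', add_comm]

theorem negLap_smul (h : IsTest φ) (a : ℂ) : negLap (a • φ) = a • negLap φ := by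
  ext x
  simp [negLap, laplacian_smul h]

theorem iterate_negLap_add (h : IsTest φ) (h' : IsTest ψ) (k : ℕ) :
    negLap^[k] (φ + ψ) = negLap^[k] φ + negLap^[k] ψ := by
  induction k generalizing φ ψ with
  | zero => rfl
  | succ k ih => rw [Function.iterate_succ_apply, negLap_add h h', ih h.negLap h'.negLap]; rfl

theorem iterate_negLap_smul (h : IsTest φ) (a : ℂ) (k : ℕ) :
    negLap^[k] (a • φ) = a • negLap^[k] φ := by
  induction k generalizing φ with
  | zero => rfl
  | succ k ih => rw [Function.iterate_succ_apply, negLap_smul h, ih h.negLap]; rfl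

theorem iterate_negLap_conj (φ : EuclideanSpace ℝ (Fin n) → ℂ) (k : ℕ) :
    negLap^[k] (fun x => starRingEnd ℂ (φ x)) = fun x => starRingEnd ℂ (negLap^[k] φ x) := by
  induction k generalizing φ with
  | zero => rfl
  | succ k ih =>
    rw [Function.iterate_succ_apply, Function.iterate_succ_apply, ← ih]
    congr 1
    ext x
    simp [negLap, laplacian_conj]

theorem integral_iterate_negLap_mul (h : IsTest φ) (h' : IsTest ψ) (k : ℕ) :
    ∫ x, negLap^[k] φ x * ψ x = ∫ x, φ x * negLap^[k] ψ x := by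
  induction k generalizing φ ψ with
  | zero => rfl
  | succ k ih =>
    rw [Function.iterate_succ_apply, ih h.negLap h', integral_negLap_mul h (h'.iterate_negLap k),
      Function.iterate_succ_apply']

/-- The formal differential expression `(-Δ)⁵ + c|x|⁻¹⁰`. -/
def diffExpr (c : ℝ) (φ : EuclideanSpace ℝ (Fin n) → ℂ) : EuclideanSpace ℝ (Fin n) → ℂ :=
  fun x => negLap^[5] φ x + ((c * (‖x‖ ^ 10)⁻¹ : ℝ) : ℂ) * φ x

theorem IsTest.potential_mul (h : IsTest φ) (c : ℝ) :
    IsTest (fun x => ((c * (‖x‖ ^ 10)⁻¹ : ℝ) : ℂ) * φ x) := by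
  refine h.mul_left (m := fun x => ((c * (‖x‖ ^ 10)⁻¹ : ℝ) : ℂ)) fun x hx => ?_
  refine (Complex.ofRealCLM.contDiff (n := (⊤ : ℕ∞))).contDiffAt.comp x ?_
  exact contDiffAt_const.mul (((contDiffAt_norm ℝ hx).pow 10).inv (by simpa using hx))

theorem IsTest.diffExpr (h : IsTest φ) (c : ℝ) : IsTest (diffExpr c φ) :=
  (h.iterate_negLap 5).add (h.potential_mul c)

theorem diffExpr_add (h : IsTest φ) (h' : IsTest ψ) (c : ℝ) :
    diffExpr c (φ + ψ) = diffExpr c φ + diffExpr c ψ := by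
  ext x
  simp only [diffExpr, iterate_negLap_add h h', Pi.add_apply]
  ring

theorem diffExpr_smul (h : IsTest φ) (c : ℝ) (a : ℂ) :
    diffExpr c (a • φ) = a • diffExpr c φ := by
  ext x
  simp only [diffExpr, iterate_negLap_smul h, Pi.smul_apply, smul_eq_mul]
  ring

theorem diffExpr_conj (φ : EuclideanSpace ℝ (Fin n) → ℂ) (c : ℝ) :
    diffExpr c (fun x => starRingEnd ℂ (φ x)) = fun x => starRingEnd ℂ (diffExpr c φ x) := by
  ext x
  simp only [diffExpr, iterate_negLap_conj, map_add, map_mul, Complex.conj_ofReal]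

theorem integral_diffExpr_mul (h : IsTest φ) (h' : IsTest ψ) (c : ℝ) :
    ∫ x, diffExpr c φ x * ψ x = ∫ x, φ x * diffExpr c ψ x := by
  simp only [diffExpr, add_mul, mul_add]
  rw [integral_add ((h.iterate_negLap 5).mul h').integrable
      ((h.potential_mul c).mul h').integrable,
    integral_add (h.mul (h'.iterate_negLap 5)).integrable
      (h.mul (h'.potential_mul c)).integrable, integral_iterate_negLap_mul h h']
  congr 2
  ext x
  ring

end TestFunctions

section Operator

theorem ae_eq_zero_of_forall_isTest {n : ℕ} [NeZero n] {f : EuclideanSpace ℝ (Fin n) → ℂ}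
    (hf : LocallyIntegrable f) (h : ∀ φ, IsTest φ → ∫ x, f x * φ x = 0) : f =ᵐ[volume] 0 := by
  have h1 := (isOpen_compl_singleton (x := (0 : EuclideanSpace ℝ (Fin n)))
    ).ae_eq_zero_of_integral_contDiff_smul_eq_zero (μ := volume) (f := f)
    (hf.locallyIntegrableOn _) (fun g hg hc hs => by
      have : IsTest (fun x => (g x : ℂ)) := by
        have ht : tsupport (fun x => (g x : ℂ)) ⊆ tsupport g :=
          closure_mono fun x hx hx' => hx (by simp [hx'])
        exact ⟨Complex.ofRealCLM.contDiff.comp hg, hc.of_isClosed_subset (isClosed_tsupport _) ht,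
          fun h0 => hs (ht h0) rfl⟩
      rw [← h _ this]
      congr 1
      ext x
      rw [Complex.real_smul, mul_comm])
  have h2 : ∀ᵐ x : EuclideanSpace ℝ (Fin n), x ≠ 0 := by
    simp [ae_iff]
  filter_upwards [h1, h2] with x hx hx'
  exact hx hx'

abbrev E20 := EuclideanSpace ℝ (Fin 20)

theorem mem_graphOf_iff (c : ℝ) (p : Lp ℂ 2 (volume : Measure E20) × Lp ℂ 2 (volume : Measure E20)) :
    p ∈ graphOf 20 (diffExpr c) ↔ ∃ φ : E20 → ℂ, IsTest φ ∧ (p.1 : E20 → ℂ) =ᵐ[volume] φ ∧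
      (p.2 : E20 → ℂ) =ᵐ[volume] diffExpr c φ := by
  constructor
  · intro hp
    induction hp using Submodule.span_induction with
    | mem p hp =>
      obtain ⟨φ, h1, h2, h3, h4, h5⟩ := hp
      exact ⟨φ, ⟨h1, h2, h3⟩, h4, h5⟩
    | zero =>
      refine ⟨0, IsTest.zero, Lp.coeFn_zero _ _ _, ?_⟩
      have := diffExpr_smul (IsTest.zero (n := 20)) c 0
      rw [zero_smul, zero_smul] at this
      rw [this]
      exact Lp.coeFn_zero _ _ _
    | add p q _ _ hp hq =>
      obtain ⟨φ, h1, h2, h3⟩ := hp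
      obtain ⟨ψ, k1, k2, k3⟩ := hq
      refine ⟨φ + ψ, h1.add k1, (Lp.coeFn_add _ _).trans (h2.add k2), ?_⟩
      rw [diffExpr_add h1 k1]
      exact (Lp.coeFn_add _ _).trans (h3.add k3)
    | smul a p _ hp =>
      obtain ⟨φ, h1, h2, h3⟩ := hp
      refine ⟨a • φ, h1.smul a, (Lp.coeFn_smul _ _).trans (h2.const_smul a), ?_⟩
      rw [diffExpr_smul h1]
      exact (Lp.coeFn_smul _ _).trans (h3.const_smul a)
  · rintro ⟨φ, ⟨h1, h2, h3⟩, h4, h5⟩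
    exact Submodule.subset_span ⟨φ, h1, h2, h3, h4, h5⟩

theorem graphOf_single_valued (c : ℝ) :
    ∀ p ∈ graphOf 20 (diffExpr c), p.1 = 0 → p.2 = 0 := by
  intro p hp h0
  obtain ⟨φ, h1, h2, h3⟩ := (mem_graphOf_iff c p).1 hp
  have hφ : φ = 0 := by
    refine (Continuous.ae_eq_iff_eq volume h1.continuous continuous_zero).1 ?_
    refine h2.symm.trans ?_
    rw [h0]
    exact Lp.coeFn_zero _ _ _
  subst hφ
  have := diffExpr_smul (IsTest.zero (n := 20)) c 0
  rw [zero_smul, zero_smul] at this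
  rw [this] at h3
  exact (Lp.eq_zero_iff_ae_eq_zero).2 h3

theorem T5op_exists_isTest (c : ℝ) (x : (T5op c).domain) :
    ∃ φ : E20 → ℂ, IsTest φ ∧ ((x : Lp ℂ 2 (volume : Measure E20)) : E20 → ℂ) =ᵐ[volume] φ ∧
      (T5op c x : E20 → ℂ) =ᵐ[volume] diffExpr c φ :=
  (mem_graphOf_iff c _).1 (Submodule.mem_graph_toLinearPMap (graphOf_single_valued c) x)

theorem IsTest.exists_T5op {φ : E20 → ℂ} (h : IsTest φ) (c : ℝ) :
    ∃ x : (T5op c).domain, ((x : Lp ℂ 2 (volume : Measure E20)) : E20 → ℂ) =ᵐ[volume] φ ∧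
      (T5op c x : E20 → ℂ) =ᵐ[volume] _root_.diffExpr c φ := by
  have h1 : ((h.memLp 2).toLp φ, ((h.diffExpr c).memLp 2).toLp _) ∈ graphOf 20 (_root_.diffExpr c) :=
    (mem_graphOf_iff c _).2 ⟨φ, h, (h.memLp 2).coeFn_toLp, ((h.diffExpr c).memLp 2).coeFn_toLp⟩
  rw [← Submodule.toLinearPMap_graph_eq _ (graphOf_single_valued c), LinearPMap.mem_graph_iff] at h1
  obtain ⟨y, hy1, hy2⟩ := h1
  refine ⟨y, ?_, ?_⟩
  · rw [hy1]
    exact (h.memLp 2).coeFn_toLp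
  · have : T5op c y = ((h.diffExpr c).memLp 2).toLp _ := hy2
    rw [this]
    exact ((h.diffExpr c).memLp 2).coeFn_toLp

theorem L2_inner_eq_integral {u v : Lp ℂ 2 (volume : Measure E20)} {f g : E20 → ℂ}
    (hf : u =ᵐ[volume] f) (hg : v =ᵐ[volume] g) :
    ⟪u, v⟫_ℂ = ∫ x, starRingEnd ℂ (f x) * g x := by
  rw [L2.inner_def]
  refine integral_congr_ae ?_
  filter_upwards [hf, hg] with x h1 h2
  rw [h1, h2, RCLike.inner_apply, mul_comm]

theorem memLp_conj {f : E20 → ℂ} (hf : MemLp f 2) : MemLp (fun x => starRingEnd ℂ (f x)) 2 :=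
  (memLp_congr_norm (Complex.continuous_conj.comp_aestronglyMeasurable hf.1) hf.1
    (by simp)).2 hf

theorem dense_domain_T5op (c : ℝ) : Dense ((T5op c).domain : Set (Lp ℂ 2 (volume : Measure E20))) := by
  rw [Submodule.dense_iff_topologicalClosure_eq_top, Submodule.topologicalClosure_eq_top_iff,
    Submodule.eq_bot_iff]
  intro u hu
  rw [Submodule.mem_orthogonal'] at hu
  have h1 := memLp_conj (Lp.memLp u)
  have h2 : (fun x => starRingEnd ℂ (u x)) =ᵐ[volume] 0 := by
    refine ae_eq_zero_of_forall_isTest (h1.locallyIntegrable (by norm_num)) fun φ hφ => ?_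
    obtain ⟨x, hx, -⟩ := hφ.exists_T5op c
    rw [← hu x x.2]
    exact (L2_inner_eq_integral (EventuallyEq.refl _ _) hx).symm
  rw [Lp.eq_zero_iff_ae_eq_zero]
  filter_upwards [h2] with x hx
  simpa using hx

theorem T5op_symmetric (c : ℝ) (x y : (T5op c).domain) :
    ⟪T5op c x, (y : Lp ℂ 2 (volume : Measure E20))⟫_ℂ =
      ⟪(x : Lp ℂ 2 (volume : Measure E20)), T5op c y⟫_ℂ := by
  obtain ⟨φ, h1, h2, h3⟩ := T5op_exists_isTest c x
  obtain ⟨ψ, k1, k2, k3⟩ := T5op_exists_isTest c y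
  rw [L2_inner_eq_integral h3 k2, L2_inner_eq_integral h2 k3,
    ← integral_diffExpr_mul h1.star k1 c, diffExpr_conj]

theorem essentiallySelfAdjoint_T5op_of_forall {c : ℝ}
    (H : ∀ s : ℂ, s.re = 0 → s ≠ 0 → ∀ U : E20 → ℂ, MemLp U 2 →
      (∀ φ, IsTest φ → ∫ x, U x * (diffExpr c φ x + s * φ x) = 0) → U =ᵐ[volume] 0) :
    EssentiallySelfAdjoint (T5op c) := by
  have key : ∀ s : ℂ, s.re = 0 → s ≠ 0 → ∀ u : Lp ℂ 2 (volume : Measure E20),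
      (∀ x : (T5op c).domain, ⟪u, T5op c x + s • (x : Lp ℂ 2 (volume : Measure E20))⟫_ℂ = 0) →
      u = 0 := by
    intro s hs hs0 u hu
    have h2 := H s hs hs0 _ (memLp_conj (Lp.memLp u)) fun φ hφ => by
      obtain ⟨x, hx, hx'⟩ := hφ.exists_T5op c
      rw [← hu x]
      refine (L2_inner_eq_integral (EventuallyEq.refl _ _) ?_).symm
      refine (Lp.coeFn_add _ _).trans (hx'.add ?_)
      exact (Lp.coeFn_smul _ _).trans (hx.const_smul s)
    rw [Lp.eq_zero_iff_ae_eq_zero]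
    filter_upwards [h2] with x hx
    simpa using hx
  refine essentiallySelfAdjoint_of_forall_eq_zero (dense_domain_T5op c) (T5op_symmetric c)
    (key Complex.I (by simp) (by simp)) fun u hu => ?_
  refine key (-Complex.I) (by simp) (by simp) u fun x => ?_
  rw [← hu x, neg_smul, sub_eq_add_neg]

theorem EssentiallySelfAdjoint.integral_eq {c : ℝ} (h : EssentiallySelfAdjoint (T5op c))
    {u u' v v' : E20 → ℂ} (hu : MemLp u 2) (hu' : MemLp u' 2) (hv : MemLp v 2) (hv' : MemLp v' 2)
    (h1 : ∀ φ, IsTest φ → ∫ x, u x * diffExpr c φ x = ∫ x, u' x * φ x)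
    (h2 : ∀ φ, IsTest φ → ∫ x, v x * diffExpr c φ x = ∫ x, v' x * φ x) :
    ∫ x, u' x * starRingEnd ℂ (v x) = ∫ x, u x * starRingEnd ℂ (v' x) := by
  have key : ∀ (w w' : E20 → ℂ) (p p' : Lp ℂ 2 (volume : Measure E20)),
      p =ᵐ[volume] (fun x => starRingEnd ℂ (w x)) → p' =ᵐ[volume] (fun x => starRingEnd ℂ (w' x)) →
      (∀ φ, IsTest φ → ∫ x, w x * diffExpr c φ x = ∫ x, w' x * φ x) →
      ∀ x : (T5op c).domain, ⟪p', (x : Lp ℂ 2 (volume : Measure E20))⟫_ℂ = ⟪p, T5op c x⟫_ℂ := by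
    intro w w' p p' hp hp' hT x
    obtain ⟨φ, k1, k2, k3⟩ := T5op_exists_isTest c x
    rw [L2_inner_eq_integral hp' k2, L2_inner_eq_integral hp k3]
    simpa using (hT φ k1).symm
  have := h.inner_eq (key u u' _ _ (memLp_conj hu).coeFn_toLp (memLp_conj hu').coeFn_toLp h1)
    (key v v' _ _ (memLp_conj hv).coeFn_toLp (memLp_conj hv').coeFn_toLp h2)
  rw [L2_inner_eq_integral (memLp_conj hu').coeFn_toLp (memLp_conj hv).coeFn_toLp,
    L2_inner_eq_integral (memLp_conj hu).coeFn_toLp (memLp_conj hv').coeFn_toLp] at this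
  simpa using this

end Operator

open Polynomial (aeval)

section SmoothFunctions

/-- The space of smooth functions `ℝ → ℂ`. -/
def smoothFn : Submodule ℂ (ℝ → ℂ) where
  carrier := {f | ContDiff ℝ (⊤ : ℕ∞) f}
  add_mem' := fun hf hg => by
    rw [Set.mem_ofPred_eq] at *
    exact hf.add hg
  zero_mem' := by
    rw [Set.mem_ofPred_eq]
    exact contDiff_const
  smul_mem' := fun a _ hf => by
    rw [Set.mem_ofPred_eq] at *
    exact hf.const_smul a

theorem mem_smoothFn {f : ℝ → ℂ} : f ∈ smoothFn ↔ ContDiff ℝ (⊤ : ℕ∞) f := by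
  rw [smoothFn, Submodule.mem_mk, AddSubmonoid.mem_mk]
  exact Set.mem_ofPred

namespace smoothFn

theorem contDiff (f : smoothFn) : ContDiff ℝ (⊤ : ℕ∞) f.1 := mem_smoothFn.1 f.2

theorem differentiable (f : smoothFn) : Differentiable ℝ f.1 := (contDiff f).differentiable (by simp)

theorem continuous (f : smoothFn) : Continuous f.1 := (contDiff f).continuous

/-- Differentiation on smooth functions. -/
def D : Module.End ℂ smoothFn where
  toFun f := ⟨deriv f.1, mem_smoothFn.2 (contDiff_infty_iff_deriv.1 (contDiff f)).2⟩
  map_add' f g := by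
    ext t
    exact deriv_add (differentiable f t) (differentiable g t)
  map_smul' a f := by
    ext t
    exact deriv_const_smul a (differentiable f t)

/-- Multiplication by `exp (a * t)` on smooth functions. -/
def E (a : ℂ) : Module.End ℂ smoothFn where
  toFun f := ⟨fun t => Complex.exp (a * t) * f.1 t,
    mem_smoothFn.2 (((contDiff_const.mul Complex.ofRealCLM.contDiff).cexp).mul (contDiff f))⟩
  map_add' f g := by
    ext t
    exact mul_add _ _ _
  map_smul' b f := by
    ext t
    exact mul_left_comm _ _ _

variable (f : smoothFn) (a b : ℂ) (t : ℝ) (P : Polynomial ℂ)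

@[simp] theorem D_apply : (D f).1 t = deriv f.1 t := rfl

@[simp] theorem E_apply : (E a f).1 t = Complex.exp (a * t) * f.1 t := rfl

theorem hasDerivAt : HasDerivAt f.1 ((D f).1 t) t := (differentiable f t).hasDerivAt

theorem E_mul_E : E a * E b = E (a + b) := by
  ext f t
  simp only [Module.End.mul_apply, E_apply, ← mul_assoc, ← Complex.exp_add]
  ring_nf

theorem E_zero : E 0 = 1 := by
  ext f t
  simp

theorem D_mul_E : D * E a = E a * (D + algebraMap ℂ _ a) := by
  ext f t
  have h1 : HasDerivAt (fun t : ℝ => Complex.exp (a * t)) (Complex.exp (a * t) * a) t := by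
    have := ((Complex.ofRealCLM.hasDerivAt (x := t)).const_mul a).cexp
    simpa using this
  have := (h1.mul (hasDerivAt f t)).deriv
  simp only [Module.End.mul_apply, LinearMap.add_apply, D_apply, E_apply, map_add, Submodule.coe_add,
    Pi.add_apply, Module.algebraMap_end_apply, map_smul, Submodule.coe_smul, Pi.smul_apply,
    smul_eq_mul]
  rw [D_apply] at this
  refine this.trans ?_
  ring

theorem aeval_mul_E : aeval D P * E a = E a * aeval D (P.comp (Polynomial.X + Polynomial.C a)) := by
  have h1 : Polynomial.aeval D (P.comp (Polynomial.X + Polynomial.C a)) =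
      aeval (D + algebraMap ℂ (Module.End ℂ smoothFn) a) P := by
    rw [Polynomial.aeval_comp]
    simp
  rw [h1]
  induction P using Polynomial.induction_on' with
  | add p q hp hq => rw [map_add, map_add, add_mul, mul_add,
      hp (by rw [Polynomial.aeval_comp]; simp), hq (by rw [Polynomial.aeval_comp]; simp)]
  | monomial n c =>
    have h2 : SemiconjBy (E a) (D + algebraMap ℂ (Module.End ℂ smoothFn) a) D := (D_mul_E a).symm
    have h3 := (h2.pow_right n).eq
    rw [Polynomial.aeval_monomial, Polynomial.aeval_monomial, mul_assoc, ← h3, ← mul_assoc,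
      ← mul_assoc, Algebra.commutes]

theorem aeval_congr {f g : smoothFn} {t : ℝ} (h : f.1 =ᶠ[𝓝 t] g.1) :
    (aeval D P f).1 =ᶠ[𝓝 t] (aeval D P g).1 := by
  induction P using Polynomial.induction_on with
  | C c =>
    simp only [Polynomial.aeval_C, Module.algebraMap_end_apply]
    filter_upwards [h] with s hs
    simp [hs]
  | add p q hp hq =>
    simp only [map_add, LinearMap.add_apply]
    filter_upwards [hp, hq] with s h1 h2
    simp [h1, h2]
  | monomial n c ih =>
    have : aeval D (Polynomial.C c * Polynomial.X ^ (n + 1)) =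
        D * aeval D (Polynomial.C c * Polynomial.X ^ n) := by
      rw [show Polynomial.C c * Polynomial.X ^ (n + 1) =
        Polynomial.X * (Polynomial.C c * Polynomial.X ^ n) by ring, map_mul, Polynomial.aeval_X]
    rw [this]
    exact ih.deriv

theorem tsupport_aeval_subset : tsupport (aeval D P f).1 ⊆ tsupport f.1 := by
  intro t ht
  by_contra h
  rw [notMem_tsupport_iff_eventuallyEq] at h
  have h1 : f.1 =ᶠ[𝓝 t] (0 : smoothFn).1 := h
  have h2 := aeval_congr P h1
  rw [map_zero] at h2
  exact notMem_tsupport_iff_eventuallyEq.2 h2 ht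

theorem tsupport_E_subset : tsupport (E a f).1 ⊆ tsupport f.1 := tsupport_mul_subset_right

theorem hasCompactSupport_aeval {f : smoothFn} (h : HasCompactSupport f.1) :
    HasCompactSupport (aeval D P f).1 :=
  h.of_isClosed_subset (isClosed_tsupport _) (tsupport_aeval_subset f P)

theorem hasCompactSupport_E {f : smoothFn} (h : HasCompactSupport f.1) :
    HasCompactSupport (E a f).1 :=
  h.of_isClosed_subset (isClosed_tsupport _) (tsupport_E_subset f a)

theorem hasCompactSupport_D {f : smoothFn} (h : HasCompactSupport f.1) :
    HasCompactSupport (D f).1 := h.deriv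

end smoothFn
end SmoothFunctions

section RadialPolynomial

/-- Evaluation of a complex polynomial at a point of `ℝ²⁰`. -/
def evalPoly (p : MvPolynomial (Fin 20) ℂ) (x : E20) : ℂ :=
  MvPolynomial.eval (fun i => (x i : ℂ)) p

/-- The function `x ↦ G (log |x|) p(x)`, extended by zero to the origin. -/
def radPoly (G : ℝ → ℂ) (p : MvPolynomial (Fin 20) ℂ) (x : E20) : ℂ :=
  if x = 0 then 0 else G (Real.log ‖x‖) * evalPoly p x

theorem radPoly_of_ne {x : E20} (hx : x ≠ 0) (G : ℝ → ℂ) (p : MvPolynomial (Fin 20) ℂ) :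
    radPoly G p x = G (Real.log ‖x‖) * evalPoly p x := if_neg hx

theorem contDiff_evalPoly (p : MvPolynomial (Fin 20) ℂ) :
    ContDiff ℝ (⊤ : ℕ∞) (evalPoly p) := by
  induction p using MvPolynomial.induction_on with
  | C a => 
    have : evalPoly (MvPolynomial.C a) = fun _ => a := by ext x; simp [evalPoly]
    rw [this]
    exact contDiff_const
  | add p q hp hq =>
    have : evalPoly (p + q) = fun x => evalPoly p x + evalPoly q x := by ext x; simp [evalPoly]
    rw [this]
    exact hp.add hq
  | mul_X p i hp =>
    have : evalPoly (p * MvPolynomial.X i) = fun x => evalPoly p x * (x i : ℂ) := by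
      ext x; simp [evalPoly]
    rw [this]
    exact hp.mul (Complex.ofRealCLM.contDiff.comp
      (EuclideanSpace.proj (𝕜 := ℝ) i : E20 →L[ℝ] ℝ).contDiff)

theorem fderiv_evalPoly (p : MvPolynomial (Fin 20) ℂ) (x : E20) (i : Fin 20) :
    fderiv ℝ (evalPoly p) x (EuclideanSpace.single i 1) = evalPoly (MvPolynomial.pderiv i p) x := by
  have hd : ∀ q, DifferentiableAt ℝ (evalPoly q) x := fun q =>
    (contDiff_evalPoly q).differentiable (by simp) x
  induction p using MvPolynomial.induction_on with
  | C a => 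
    have : evalPoly (MvPolynomial.C a) = fun _ => a := by ext x; simp [evalPoly]
    rw [this]
    simp [evalPoly]
  | add p q hp hq =>
    have : evalPoly (p + q) = evalPoly p + evalPoly q := by ext x; simp [evalPoly]
    rw [this, fderiv_add (hd p) (hd q), add_apply, hp, hq]
    simp [evalPoly]
  | mul_X p j hp =>
    let π : E20 →L[ℝ] ℂ := Complex.ofRealCLM.comp
      (EuclideanSpace.proj (𝕜 := ℝ) j : E20 →L[ℝ] ℝ)
    have : evalPoly (p * MvPolynomial.X j) = evalPoly p * π := by
      ext x; simp [evalPoly, π]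
    have hπ : fderiv ℝ π x (EuclideanSpace.single i 1) = if i = j then 1 else 0 := by
      rw [π.fderiv]
      by_cases h : i = j
      · simp [π, h]
      · simp [π, h, Ne.symm h]
    rw [this, fderiv_mul (hd p) π.differentiableAt]
    simp only [add_apply, smul_apply, hp, hπ]
    by_cases h : i = j
    · subst h
      simp [evalPoly, π, mul_comm]
    · simp [evalPoly, π, h, MvPolynomial.pderiv_X_of_ne (Ne.symm h), mul_comm]

variable (G : smoothFn) (p : MvPolynomial (Fin 20) ℂ)

theorem contDiffAt_log_norm {x : E20} (hx : x ≠ 0) :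
    ContDiffAt ℝ (⊤ : ℕ∞) (fun y : E20 => Real.log ‖y‖) x :=
  (contDiffAt_norm ℝ hx).log (by simpa using hx)

theorem contDiffAt_radPoly {x : E20} (hx : x ≠ 0) : ContDiffAt ℝ (⊤ : ℕ∞) (radPoly G.1 p) x := by
  have h1 : radPoly G.1 p =ᶠ[𝓝 x] fun y => G.1 (Real.log ‖y‖) * evalPoly p y := by
    filter_upwards [isOpen_ne.mem_nhds hx] with y hy
    exact radPoly_of_ne hy _ _
  refine ContDiffAt.congr_of_eventuallyEq ?_ h1
  exact ((smoothFn.contDiff G).contDiffAt.comp x (contDiffAt_log_norm hx)).mul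
    (contDiff_evalPoly p).contDiffAt

variable {G} in
theorem isTest_radPoly (hG : HasCompactSupport G.1) : IsTest (radPoly G.1 p) := by
  obtain ⟨R, hR⟩ := hG.isCompact.isBounded.subset_closedBall 0
  have hsub : tsupport (radPoly G.1 p) ⊆
      Metric.closedBall 0 (Real.exp R) \ Metric.ball 0 (Real.exp (-R)) := by
    refine closure_minimal (fun x hx => ?_) (Metric.isClosed_closedBall.sdiff Metric.isOpen_ball)
    have hx0 : x ≠ 0 := fun h => hx (if_pos h)
    rw [Function.mem_support, radPoly_of_ne hx0] at hx
    have h1 := hR (subset_tsupport _ (left_ne_zero_of_mul hx))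
    rw [mem_closedBall_zero_iff, Real.norm_eq_abs, abs_le] at h1
    have h2 : 0 < ‖x‖ := norm_pos_iff.2 hx0
    refine ⟨?_, ?_⟩
    · rw [mem_closedBall_zero_iff]
      exact (Real.log_le_iff_le_exp h2).1 h1.2
    · rw [mem_ball_zero_iff, not_lt]
      exact (Real.le_log_iff_exp_le h2).1 h1.1
  have h0 : (0 : E20) ∉ tsupport (radPoly G.1 p) := fun h => (hsub h).2 (by simp [Real.exp_pos])
  refine ⟨contDiff_iff_contDiffAt.2 fun x => ?_, ?_, h0⟩
  · by_cases hx : x = 0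
    · subst hx
      exact contDiffAt_const.congr_of_eventuallyEq (notMem_tsupport_iff_eventuallyEq.1 h0)
    · exact contDiffAt_radPoly G p hx
  · exact (isCompact_closedBall (0 : E20) (Real.exp R)).of_isClosed_subset (isClosed_tsupport _)
      (hsub.trans Set.sdiff_subset)

theorem hasFDerivAt_log_norm {x : E20} (hx : x ≠ 0) :
    HasFDerivAt (fun y : E20 => Real.log ‖y‖) ((‖x‖ ^ 2)⁻¹ • innerSL ℝ x) x := by
  have h1 := ((hasStrictFDerivAt_norm_sq x).hasFDerivAt.log (by simpa using hx)).const_mul (1 / 2)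
  have h2 : (fun y : E20 => Real.log ‖y‖) = fun y => 1 / 2 * Real.log (‖y‖ ^ 2) := by
    ext y
    rw [Real.log_pow]
    push_cast
    ring
  rw [h2]
  refine h1.congr_fderiv ?_
  ext v
  simp
  ring

theorem exp_log_norm {x : E20} (hx : x ≠ 0) (k : ℕ) :
    Complex.exp (k * (Real.log ‖x‖ : ℝ)) = (‖x‖ : ℂ) ^ k := by
  rw [Complex.exp_nat_mul, ← Complex.ofReal_exp, Real.exp_log (norm_pos_iff.2 hx)]

theorem fderiv_radPoly {x : E20} (hx : x ≠ 0) (i : Fin 20) :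
    fderiv ℝ (radPoly G.1 p) x (EuclideanSpace.single i 1) =
      radPoly (smoothFn.E (-2) (smoothFn.D G)).1 (MvPolynomial.X i * p) x +
        radPoly G.1 (MvPolynomial.pderiv i p) x := by
  have h1 : radPoly G.1 p =ᶠ[𝓝 x] fun y => G.1 (Real.log ‖y‖) * evalPoly p y := by
    filter_upwards [isOpen_ne.mem_nhds hx] with y hy
    exact radPoly_of_ne hy _ _
  have h2 := ((smoothFn.hasDerivAt G (Real.log ‖x‖)).hasFDerivAt.comp x (hasFDerivAt_log_norm hx)).mul
    ((contDiff_evalPoly p).differentiable (by simp) x).hasFDerivAt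
  have h2' : HasFDerivAt (fun y => G.1 (Real.log ‖y‖) * evalPoly p y) _ x := h2
  have h3 : Complex.exp (-2 * (Real.log ‖x‖ : ℝ)) = ((‖x‖ : ℂ) ^ 2)⁻¹ := by
    rw [← exp_log_norm hx 2, ← Complex.exp_neg]
    congr 1
    push_cast
    ring
  rw [h1.fderiv_eq, h2'.fderiv, radPoly_of_ne hx, radPoly_of_ne hx]
  simp only [add_apply, smul_apply, fderiv_evalPoly,
    smoothFn.E_apply, h3]
  simp [evalPoly, EuclideanSpace.inner_single_right]
  ring

end RadialPolynomial

section RadialLaplacian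
open smoothFn (D E)

/-- The Laplacian on polynomials. -/
def polyLap (p : MvPolynomial (Fin 20) ℂ) : MvPolynomial (Fin 20) ℂ :=
  ∑ i, MvPolynomial.pderiv i (MvPolynomial.pderiv i p)

theorem isHomogeneous_polyLap {p : MvPolynomial (Fin 20) ℂ} {k : ℕ} (hp : p.IsHomogeneous k) :
    (polyLap p).IsHomogeneous (k - 1 - 1) :=
  MvPolynomial.IsHomogeneous.sum _ _ _ fun _ _ => hp.pderiv.pderiv

theorem polyLap_eq_zero {p : MvPolynomial (Fin 20) ℂ} (hp : p.IsHomogeneous 0) :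
    polyLap p = 0 := by
  rw [MvPolynomial.totalDegree_eq_zero_iff_eq_C.1 (Nat.le_zero.1 hp.totalDegree_le)]
  simp [polyLap]

/-- The radial part of the Laplacian on `G (log |x|) p(x)`, `p` homogeneous of degree `k`. -/
def radLap (k : ℕ) : Module.End ℂ smoothFn :=
  E (-2) * aeval D (Polynomial.X * (Polynomial.X + Polynomial.C (18 + 2 * k : ℂ)))

variable (G : smoothFn) {p : MvPolynomial (Fin 20) ℂ} {k : ℕ}

theorem evalPoly_mul (p q : MvPolynomial (Fin 20) ℂ) (x : E20) :
    evalPoly (p * q) x = evalPoly p x * evalPoly q x := map_mul _ _ _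

theorem evalPoly_sum {ι : Type*} (s : Finset ι) (p : ι → MvPolynomial (Fin 20) ℂ) (x : E20) :
    evalPoly (∑ i ∈ s, p i) x = ∑ i ∈ s, evalPoly (p i) x := map_sum _ _ _

theorem evalPoly_sum_X_mul_pderiv (hp : p.IsHomogeneous k) (x : E20) :
    ∑ i, (x i : ℂ) * evalPoly (MvPolynomial.pderiv i p) x = k * evalPoly p x := by
  have := congrArg (fun q => evalPoly q x) hp.sum_X_mul_pderiv
  simpa [evalPoly] using this

theorem sum_sq_eq_exp {x : E20} (hx : x ≠ 0) :
    ∑ i, (x i : ℂ) * (x i : ℂ) = Complex.exp (2 * (Real.log ‖x‖ : ℝ)) := by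
  have h := exp_log_norm hx 2
  push_cast at h
  rw [h, ← Complex.ofReal_pow, EuclideanSpace.norm_sq_eq]
  push_cast
  refine Finset.sum_congr rfl fun i _ => ?_
  rw [← Complex.ofReal_pow, Real.norm_eq_abs, sq_abs, sq, Complex.ofReal_mul]

theorem laplacian_radPoly (hp : p.IsHomogeneous k) {x : E20} (hx : x ≠ 0) :
    laplacian (radPoly G.1 p) x = radPoly (radLap k G).1 p x + radPoly G.1 (polyLap p) x := by
  have h1 : ∀ i : Fin 20, fderiv ℝ (fun y => fderiv ℝ (radPoly G.1 p) y (EuclideanSpace.single i 1)) x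
      (EuclideanSpace.single i 1) =
      radPoly (E (-2) (D (E (-2) (D G)))).1 (MvPolynomial.X i * (MvPolynomial.X i * p)) x +
        radPoly (E (-2) (D G)).1 (MvPolynomial.pderiv i (MvPolynomial.X i * p)) x +
      (radPoly (E (-2) (D G)).1 (MvPolynomial.X i * MvPolynomial.pderiv i p) x +
        radPoly G.1 (MvPolynomial.pderiv i (MvPolynomial.pderiv i p)) x) := by
    intro i
    have e1 : (fun y => fderiv ℝ (radPoly G.1 p) y (EuclideanSpace.single i 1)) =ᶠ[𝓝 x]
        radPoly (E (-2) (D G)).1 (MvPolynomial.X i * p) + radPoly G.1 (MvPolynomial.pderiv i p) := by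
      filter_upwards [isOpen_ne.mem_nhds hx] with y hy
      exact fderiv_radPoly G p hy i
    rw [e1.fderiv_eq, fderiv_add ((contDiffAt_radPoly _ _ hx).differentiableAt (by simp))
      ((contDiffAt_radPoly _ _ hx).differentiableAt (by simp)), add_apply, fderiv_radPoly _ _ hx,
      fderiv_radPoly _ _ hx]
  have hD : D (E (-2) (D G)) = E (-2) (D (D G) + (-2 : ℂ) • D G) := by
    have := congrArg (fun T : Module.End ℂ smoothFn => T (D G)) (smoothFn.D_mul_E (-2))
    rw [Module.End.mul_apply, Module.End.mul_apply, LinearMap.add_apply,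
      Module.algebraMap_end_apply] at this
    exact this
  have h3 : ∀ t, (radLap k G).1 t =
      Complex.exp (-2 * t) * ((D (D G)).1 t + (18 + 2 * k) * (D G).1 t) := by
    intro t
    simp [radLap, mul_add]
    ring
  have h4 : evalPoly (polyLap p) x = ∑ i, evalPoly (MvPolynomial.pderiv i (MvPolynomial.pderiv i p)) x :=
    evalPoly_sum _ _ _
  have h5 := evalPoly_sum_X_mul_pderiv hp x
  have h6 := sum_sq_eq_exp hx
  rw [laplacian]
  simp only [h1, radPoly_of_ne hx, h3, h4, hD]
  simp only [Finset.sum_add_distrib, ← Finset.mul_sum]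
  have hX : ∀ i, evalPoly (MvPolynomial.X i) x = x i := fun i => by simp [evalPoly]
  have s1 : ∑ i, evalPoly (MvPolynomial.X i * (MvPolynomial.X i * p)) x =
      Complex.exp (2 * (Real.log ‖x‖ : ℝ)) * evalPoly p x := by
    rw [← h6, Finset.sum_mul]
    simp only [evalPoly_mul, hX, mul_assoc]
  have s2 : ∑ i, evalPoly (MvPolynomial.X i * MvPolynomial.pderiv i p) x = k * evalPoly p x := by
    rw [← h5]
    simp only [evalPoly_mul, hX]
  have s3 : ∑ i, evalPoly (MvPolynomial.pderiv i (MvPolynomial.X i * p)) x =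
      (20 + k) * evalPoly p x := by
    have : ∀ i, evalPoly (MvPolynomial.pderiv i (MvPolynomial.X i * p)) x =
        x i * evalPoly (MvPolynomial.pderiv i p) x + evalPoly p x := by
      intro i
      simp [evalPoly]
    simp only [this, Finset.sum_add_distrib, h5]
    simp
    ring
  rw [s1, s2, s3]
  have he : Complex.exp (2 * (Real.log ‖x‖ : ℝ)) * Complex.exp (-2 * (Real.log ‖x‖ : ℝ)) = 1 := by
    rw [← Complex.exp_add]
    ring_nf
    simp
  simp only [smoothFn.E_apply, Submodule.coe_add, Pi.add_apply, Submodule.coe_smul, Pi.smul_apply,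
    smul_eq_mul]
  linear_combination (Complex.exp (-2 * (Real.log ‖x‖ : ℝ)) * ((D (D G)).1 (Real.log ‖x‖) +
    -2 * (D G).1 (Real.log ‖x‖))) * evalPoly p x * he

variable {G}

theorem negLap_radPoly (hp : p.IsHomogeneous k) (hG : HasCompactSupport G.1) :
    negLap (radPoly G.1 p) = radPoly (-radLap k G).1 p + radPoly (-G).1 (polyLap p) := by
  ext x
  by_cases hx : x = 0
  · subst hx
    rw [image_eq_zero_of_notMem_tsupport (isTest_radPoly p hG).negLap.zero_notMem]
    simp [radPoly]
  · simp only [negLap, laplacian_radPoly G hp hx, Pi.add_apply, radPoly_of_ne hx,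
      Submodule.coe_neg, Pi.neg_apply]
    ring

theorem hasCompactSupport_neg_radLap (hG : HasCompactSupport G.1) (k : ℕ) :
    HasCompactSupport (-radLap k G).1 := by
  have := smoothFn.hasCompactSupport_E (-2) (smoothFn.hasCompactSupport_aeval
    (Polynomial.X * (Polynomial.X + Polynomial.C (18 + 2 * k : ℂ))) hG)
  exact this.neg

theorem hasCompactSupport_neg (hG : HasCompactSupport G.1) : HasCompactSupport (-G).1 :=
  HasCompactSupport.neg hG

/-- The product of the symbols `(k + 5 + 2i)² - X²`. -/
def symbolProd (k : ℕ) : Polynomial ℂ :=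
  ∏ i ∈ Finset.range 5, (Polynomial.C ((k + 5 + 2 * i : ℂ) ^ 2) - Polynomial.X ^ 2)

/-- The Mellin symbol of `(-Δ)⁵ + c|x|⁻¹⁰` on homogeneous polynomials of degree `k`. -/
def symbol (k : ℕ) (c : ℝ) : Polynomial ℂ := symbolProd k + Polynomial.C (c : ℂ)

theorem neg_radLap_mul_E (k : ℕ) (a b : ℂ) (hb : b = a - 2) (P : Polynomial ℂ) :
    -radLap k * (E a * aeval D P) =
      E b * aeval D (-((Polynomial.X + Polynomial.C a) *
        (Polynomial.X + Polynomial.C (a + 18 + 2 * k))) * P) := by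
  have h := smoothFn.aeval_mul_E a (Polynomial.X * (Polynomial.X + Polynomial.C (18 + 2 * k : ℂ)))
  have h2 : (Polynomial.X * (Polynomial.X + Polynomial.C (18 + 2 * k : ℂ))).comp
      (Polynomial.X + Polynomial.C a) = (Polynomial.X + Polynomial.C a) *
        (Polynomial.X + Polynomial.C (a + 18 + 2 * k)) := by
    simp only [Polynomial.mul_comp, Polynomial.add_comp, Polynomial.X_comp, Polynomial.C_comp,
      Polynomial.C_add, add_assoc]
  rw [h2] at h
  have hE : E (-2) * E a = E b := by
    rw [smoothFn.E_mul_E, hb]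
    ring_nf
  have h3 : aeval D (-((Polynomial.X + Polynomial.C a) *
      (Polynomial.X + Polynomial.C (a + 18 + 2 * k))) * P) = -(aeval D ((Polynomial.X +
      Polynomial.C a) * (Polynomial.X + Polynomial.C (a + 18 + 2 * k))) * aeval D P) := by
    rw [neg_mul, map_neg, map_mul _ _ P]
  refine LinearMap.ext fun f => ?_
  have hf := LinearMap.congr_fun h (aeval D P f)
  have hf2 := LinearMap.congr_fun hE (aeval D ((Polynomial.X +
      Polynomial.C a) * (Polynomial.X + Polynomial.C (a + 18 + 2 * k))) (aeval D P f))
  simp only [Module.End.mul_apply] at hf hf2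
  simp only [h3, radLap, Module.End.mul_apply, LinearMap.neg_apply, hf, hf2, map_neg]

theorem symbolProd_eq (k : ℕ) :
    -((Polynomial.X + Polynomial.C (-13 - k : ℂ)) * (Polynomial.X + Polynomial.C (-13 - k + 18 + 2 * k : ℂ))) *
    (-((Polynomial.X + Polynomial.C (-11 - k : ℂ)) * (Polynomial.X + Polynomial.C (-11 - k + 18 + 2 * k : ℂ))) *
    (-((Polynomial.X + Polynomial.C (-9 - k : ℂ)) * (Polynomial.X + Polynomial.C (-9 - k + 18 + 2 * k : ℂ))) *
    (-((Polynomial.X + Polynomial.C (-7 - k : ℂ)) * (Polynomial.X + Polynomial.C (-7 - k + 18 + 2 * k : ℂ))) *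
    (-((Polynomial.X + Polynomial.C (-5 - k : ℂ)) * (Polynomial.X + Polynomial.C (-5 - k + 18 + 2 * k : ℂ))) *
      1)))) = symbolProd k := by
  refine Polynomial.funext fun z => ?_
  simp only [symbolProd, Finset.prod_range_succ, Finset.prod_range_zero, Polynomial.eval_mul,
    Polynomial.eval_neg, Polynomial.eval_add, Polynomial.eval_sub, Polynomial.eval_pow,
    Polynomial.eval_X, Polynomial.eval_C, Polynomial.eval_one]
  push_cast
  ring

theorem neg_radLap_pow_mul_E (k : ℕ) :
    (-radLap k) ^ 5 * E (-5 - k) = E (-15 - k) * aeval D (symbolProd k) := by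
  have h : E (-5 - k) = E (-5 - k) * aeval D (1 : Polynomial ℂ) := by simp
  rw [h]
  simp only [pow_succ, pow_zero, one_mul, mul_assoc]
  rw [neg_radLap_mul_E k (-5 - k) (-7 - k) (by ring), neg_radLap_mul_E k (-7 - k) (-9 - k) (by ring),
    neg_radLap_mul_E k (-9 - k) (-11 - k) (by ring), neg_radLap_mul_E k (-11 - k) (-13 - k) (by ring),
    neg_radLap_mul_E k (-13 - k) (-15 - k) (by ring)]
  rw [symbolProd_eq]

end RadialLaplacian

section RadialReduction
open smoothFn (D E)

variable {G : smoothFn} {p : MvPolynomial (Fin 20) ℂ} {k : ℕ} {U : E20 → ℂ}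

theorem radPoly_zero_right (G : ℝ → ℂ) : radPoly G 0 = 0 := by
  ext x
  simp [radPoly, evalPoly]

theorem radPoly_add (G H : smoothFn) (p : MvPolynomial (Fin 20) ℂ) :
    radPoly (G + H).1 p = radPoly G.1 p + radPoly H.1 p := by
  ext x
  by_cases hx : x = 0
  · simp [radPoly, hx]
  · simp [radPoly_of_ne hx, add_mul]

theorem radPoly_smul (a : ℂ) (G : smoothFn) (p : MvPolynomial (Fin 20) ℂ) :
    radPoly (a • G).1 p = a • radPoly G.1 p := by
  ext x
  by_cases hx : x = 0
  · simp [radPoly, hx]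
  · simp [radPoly_of_ne hx, mul_assoc]

theorem IsTest.integrable_mul_left {φ : E20 → ℂ} (hφ : IsTest φ) (hU : MemLp U 2) :
    Integrable (fun x => U x * φ x) :=
  MemLp.integrable_mul hU (hφ.memLp 2)

theorem potential_mul_radPoly (c : ℝ) (G : smoothFn) (p : MvPolynomial (Fin 20) ℂ) (x : E20) :
    ((c * (‖x‖ ^ 10)⁻¹ : ℝ) : ℂ) * radPoly G.1 p x = radPoly ((c : ℂ) • E (-10) G).1 p x := by
  by_cases hx : x = 0
  · simp [radPoly, hx]
  · have h3 : Complex.exp (-10 * (Real.log ‖x‖ : ℝ)) = ((‖x‖ : ℂ) ^ 10)⁻¹ := by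
      rw [← exp_log_norm hx 10, ← Complex.exp_neg]
      congr 1
      push_cast
      ring
    simp only [radPoly_of_ne hx, Submodule.coe_smul, Pi.smul_apply, smul_eq_mul, smoothFn.E_apply, h3]
    push_cast
    ring

theorem neg_radLap_pow_apply (k : ℕ) (c : ℝ) (G : smoothFn) :
    ((-radLap k) ^ 5) (E (-5 - k) G) + (c : ℂ) • E (-10) (E (-5 - k) G) =
      E (-15 - k) (aeval D (symbol k c) G) := by
  have h1 := LinearMap.congr_fun (neg_radLap_pow_mul_E k) G
  have h2 := LinearMap.congr_fun (smoothFn.E_mul_E (-10) (-5 - k)) G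
  simp only [Module.End.mul_apply] at h1 h2
  rw [h1, h2, symbol, map_add, LinearMap.add_apply, map_add, Polynomial.aeval_C,
    Module.algebraMap_end_apply, map_smul]
  ring_nf

theorem iterate_negLap_radPoly_one (hG : HasCompactSupport G.1) (m : ℕ) :
    negLap^[m] (radPoly G.1 1) = radPoly (((-radLap 0) ^ m) G).1 1 := by
  have hp : (1 : MvPolynomial (Fin 20) ℂ).IsHomogeneous 0 := MvPolynomial.isHomogeneous_one _ _
  induction m generalizing G with
  | zero => rfl
  | succ m ih =>
    rw [Function.iterate_succ_apply, negLap_radPoly hp hG, polyLap_eq_zero hp, radPoly_zero_right,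
      add_zero]
    have := ih (G := (-radLap 0) G) (hasCompactSupport_neg_radLap hG 0)
    refine this.trans ?_
    rw [pow_succ]
    rfl

theorem diffExpr_radPoly_one (hG : HasCompactSupport G.1) (c : ℝ) :
    diffExpr c (radPoly (E (-5) G).1 1) = radPoly (E (-15) (aeval D (symbol 0 c) G)).1 1 := by
  have h := neg_radLap_pow_apply 0 c G
  simp only [Nat.cast_zero, sub_zero] at h
  rw [← h, radPoly_add]
  ext x
  rw [diffExpr, iterate_negLap_radPoly_one (smoothFn.hasCompactSupport_E _ hG),
    potential_mul_radPoly, Pi.add_apply]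

theorem integral_iterate_negLap_radPoly_eq_zero (hU : MemLp U 2)
    (h : ∀ j < k, ∀ q : MvPolynomial (Fin 20) ℂ, q.IsHomogeneous j → ∀ G : smoothFn,
      HasCompactSupport G.1 → ∫ x, U x * radPoly G.1 q x = 0) (m : ℕ) :
    ∀ j < k, ∀ q : MvPolynomial (Fin 20) ℂ, q.IsHomogeneous j → ∀ G : smoothFn,
      HasCompactSupport G.1 → ∫ x, U x * negLap^[m] (radPoly G.1 q) x = 0 := by
  induction m with
  | zero => exact h
  | succ m ih =>
    intro j hj q hq G hG
    have t1 := isTest_radPoly (G := (-radLap j) G) q (hasCompactSupport_neg_radLap hG j)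
    have t2 := isTest_radPoly (polyLap q) (hasCompactSupport_neg hG)
    rw [Function.iterate_succ_apply, negLap_radPoly hq hG]
    have e := iterate_negLap_add t1 t2 m
    have e1 := ih j hj q hq ((-radLap j) G) (hasCompactSupport_neg_radLap hG j)
    have e2 := ih (j - 1 - 1) (by omega) _ (isHomogeneous_polyLap hq) _ (hasCompactSupport_neg hG)
    calc _ = ∫ x, (U x * negLap^[m] (radPoly ((-radLap j) G).1 q) x +
        U x * negLap^[m] (radPoly (-G).1 (polyLap q)) x) := by
          refine integral_congr_ae (.of_forall fun x => ?_)
          exact (congrArg (fun y => U x * y) (congrFun e x)).trans (mul_add _ _ _)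
      _ = 0 := by
          rw [integral_add ((t1.iterate_negLap m).integrable_mul_left hU)
            ((t2.iterate_negLap m).integrable_mul_left hU), e1, e2, add_zero]

theorem integral_iterate_negLap_radPoly (hU : MemLp U 2)
    (h : ∀ j < k, ∀ q : MvPolynomial (Fin 20) ℂ, q.IsHomogeneous j → ∀ G : smoothFn,
      HasCompactSupport G.1 → ∫ x, U x * radPoly G.1 q x = 0) (hp : p.IsHomogeneous k)
    (hG : HasCompactSupport G.1) (m : ℕ) :
    ∫ x, U x * negLap^[m] (radPoly G.1 p) x = ∫ x, U x * radPoly (((-radLap k) ^ m) G).1 p x := by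
  induction m generalizing G with
  | zero => rfl
  | succ m ih =>
    have t1 := isTest_radPoly (G := (-radLap k) G) p (hasCompactSupport_neg_radLap hG k)
    have t2 := isTest_radPoly (polyLap p) (hasCompactSupport_neg hG)
    rw [Function.iterate_succ_apply, negLap_radPoly hp hG]
    have e := iterate_negLap_add t1 t2 m
    have e1 := ih (G := (-radLap k) G) (hasCompactSupport_neg_radLap hG k)
    have e2 : ∫ x, U x * negLap^[m] (radPoly (-G).1 (polyLap p)) x = 0 := by
      rcases Nat.eq_zero_or_pos k with rfl | hk
      · rw [polyLap_eq_zero hp]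
        have : negLap^[m] (radPoly (-G).1 0) = 0 := by
          rw [radPoly_zero_right]
          have := iterate_negLap_smul (IsTest.zero (n := 20)) 0 m
          simpa using this
        simp only [this, Pi.zero_apply, mul_zero, integral_zero]
      · exact integral_iterate_negLap_radPoly_eq_zero hU h m (k - 1 - 1) (by omega) _
          (isHomogeneous_polyLap hp) _ (hasCompactSupport_neg hG)
    calc _ = ∫ x, (U x * negLap^[m] (radPoly ((-radLap k) G).1 p) x +
        U x * negLap^[m] (radPoly (-G).1 (polyLap p)) x) := by
          refine integral_congr_ae (.of_forall fun x => ?_)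
          exact (congrArg (fun y => U x * y) (congrFun e x)).trans (mul_add _ _ _)
      _ = _ := by
          rw [integral_add ((t1.iterate_negLap m).integrable_mul_left hU)
            ((t2.iterate_negLap m).integrable_mul_left hU), e1, e2, add_zero, pow_succ]
          rfl

theorem integral_radPoly_symbol_eq_zero {c : ℝ} {s : ℂ} (hU : MemLp U 2)
    (hT : ∀ φ, IsTest φ → ∫ x, U x * (diffExpr c φ x + s * φ x) = 0)
    (h : ∀ j < k, ∀ q : MvPolynomial (Fin 20) ℂ, q.IsHomogeneous j → ∀ G : smoothFn,
      HasCompactSupport G.1 → ∫ x, U x * radPoly G.1 q x = 0) (hp : p.IsHomogeneous k)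
    (hG : HasCompactSupport G.1) :
    ∫ x, U x * radPoly (E (-15 - k) (aeval D (symbol k c) G + s • E 10 G)).1 p x = 0 := by
  have hG5 := smoothFn.hasCompactSupport_E (-5 - k) hG
  have t := isTest_radPoly p hG5
  have t10 := isTest_radPoly p (smoothFn.hasCompactSupport_E (-10) hG5)
  have e0 : E (-15 - k) (aeval D (symbol k c) G + s • E 10 G) =
      ((-radLap k) ^ 5) (E (-5 - k) G) + ((c : ℂ) • E (-10) (E (-5 - k) G) + s • E (-5 - k) G) := by
    rw [map_add, ← neg_radLap_pow_apply, map_smul, ← add_assoc]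
    congr 2
    have := LinearMap.congr_fun (smoothFn.E_mul_E (-15 - k) 10) G
    rw [Module.End.mul_apply] at this
    rw [this]
    ring_nf
  have tr : IsTest (radPoly (((-radLap k) ^ 5) (E (-5 - k) G)).1 p) := by
    refine isTest_radPoly p ?_
    have := LinearMap.congr_fun (neg_radLap_pow_mul_E k) G
    rw [Module.End.mul_apply] at this
    rw [this]
    exact smoothFn.hasCompactSupport_E _ (smoothFn.hasCompactSupport_aeval _ hG)
  have t2 := (t10.smul (c : ℂ)).add (t.smul s)
  rw [← hT _ t, e0, radPoly_add, radPoly_add, radPoly_smul, radPoly_smul]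
  calc _ = ∫ x, (U x * radPoly (((-radLap k) ^ 5) (E (-5 - k) G)).1 p x + U x *
        ((c : ℂ) • radPoly (E (-10) (E (-5 - k) G)).1 p + s • radPoly (E (-5 - k) G).1 p) x) := by
        refine integral_congr_ae (.of_forall fun x => ?_)
        exact mul_add _ _ _
    _ = ∫ x, (U x * negLap^[5] (radPoly (E (-5 - k) G).1 p) x + U x *
        ((c : ℂ) • radPoly (E (-10) (E (-5 - k) G)).1 p + s • radPoly (E (-5 - k) G).1 p) x) := by
        rw [integral_add (tr.integrable_mul_left hU) (t2.integrable_mul_left hU),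
          integral_add ((t.iterate_negLap 5).integrable_mul_left hU) (t2.integrable_mul_left hU),
          integral_iterate_negLap_radPoly hU h hp hG5]
    _ = _ := by
        refine integral_congr_ae (.of_forall fun x => ?_)
        have := potential_mul_radPoly c (E (-5 - k) G) p x
        rw [radPoly_smul] at this
        simp only [diffExpr, this, Pi.add_apply, Pi.smul_apply, smul_eq_mul]
        ring

end RadialReduction

section RadialMeasure
open smoothFn
open scoped ENNReal

theorem lintegral_fun_norm_addHaar {g : ℝ → ℝ≥0∞} (hg : Measurable g) :
    ∫⁻ x : E20, g ‖x‖ = (volume : Measure E20).toSphere Set.univ *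
      ∫⁻ r in Set.Ioi (0 : ℝ), ENNReal.ofReal (r ^ 19) * g r := by
  have hd : Module.finrank ℝ E20 - 1 = 19 := by simp
  calc
    _ = ∫⁻ x : ({(0)}ᶜ : Set E20), g ‖x.1‖ ∂((volume : Measure E20).comap (↑)) := by
      rw [lintegral_subtype_comap (measurableSet_singleton _).compl fun x ↦ g ‖x‖,
        restrict_compl_singleton]
    _ = ∫⁻ x, g x.2 ∂(volume : Measure E20).toSphere.prod (.volumeIoiPow (Module.finrank ℝ E20 - 1)) := by
      simpa using (Measure.measurePreserving_homeomorphUnitSphereProd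
        (volume : Measure E20)).lintegral_comp_emb
        (Homeomorph.measurableEmbedding _) (g ∘ Subtype.val ∘ Prod.snd)
    _ = (volume : Measure E20).toSphere Set.univ *
        ∫⁻ x : Set.Ioi (0 : ℝ), g x ∂.volumeIoiPow (Module.finrank ℝ E20 - 1) := by
      rw [lintegral_prod _ (by fun_prop)]
      dsimp only
      rw [lintegral_const, mul_comm]
    _ = _ := by
      rw [hd, Measure.volumeIoiPow, lintegral_withDensity_eq_lintegral_mul _ (by fun_prop)
        (by fun_prop)]
      congr 1
      exact lintegral_subtype_comap measurableSet_Ioi fun r => ENNReal.ofReal (r ^ 19) * g r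

theorem lintegral_Ioi_eq_lintegral_exp {g : ℝ → ℝ≥0∞} :
    ∫⁻ r in Set.Ioi (0 : ℝ), g r = ∫⁻ t, ENNReal.ofReal (Real.exp t) * g (Real.exp t) := by
  have := lintegral_image_eq_lintegral_abs_deriv_mul MeasurableSet.univ
    (fun t _ => (Real.hasDerivAt_exp t).hasDerivWithinAt) Real.exp_injective.injOn g
  rw [Set.image_univ, Real.range_exp] at this
  simpa [abs_of_pos (Real.exp_pos _)] using this

/-- The surface area of the unit sphere in `ℝ²⁰`. -/
def sphereArea : ℝ≥0∞ := (volume : Measure E20).toSphere Set.univ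

theorem sphereArea_ne_zero : sphereArea ≠ 0 := by
  rw [sphereArea, Measure.measure_univ_ne_zero]
  exact Measure.toSphere_ne_zero _

theorem sphereArea_ne_top : sphereArea ≠ ⊤ := measure_ne_top _ _

/-- The multiple of the measure `|x|⁻²⁰ dx` which `log |x|` maps to Lebesgue measure. -/
def logMeasure : Measure E20 :=
  sphereArea⁻¹ • volume.withDensity fun x => ENNReal.ofReal ((‖x‖ ^ 20)⁻¹)

theorem measurePreserving_log_norm :
    MeasurePreserving (fun x : E20 => Real.log ‖x‖) logMeasure volume := by
  have hm : Measurable fun x : E20 => Real.log ‖x‖ := by fun_prop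
  refine ⟨hm, Measure.ext fun s hs => ?_⟩
  rw [Measure.map_apply hm hs, logMeasure, Measure.smul_apply, withDensity_apply _ (hm hs),
    ← lintegral_indicator (hm hs)]
  have h1 : ∀ x : E20, ((fun x : E20 => Real.log ‖x‖) ⁻¹' s).indicator
      (fun x => ENNReal.ofReal ((‖x‖ ^ 20)⁻¹)) x =
      (fun r : ℝ => (Real.log ⁻¹' s).indicator (fun r => ENNReal.ofReal ((r ^ 20)⁻¹)) r) ‖x‖ :=
    fun x => rfl
  have h2 : Measurable fun r : ℝ =>
      (Real.log ⁻¹' s).indicator (fun r => ENNReal.ofReal ((r ^ 20)⁻¹)) r :=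
    Measurable.indicator (by fun_prop) (Real.measurable_log hs)
  rw [lintegral_congr h1, lintegral_fun_norm_addHaar h2, lintegral_Ioi_eq_lintegral_exp]
  have h3 : ∀ t, ENNReal.ofReal (Real.exp t) * (ENNReal.ofReal (Real.exp t ^ 19) *
      (Real.log ⁻¹' s).indicator (fun r => ENNReal.ofReal ((r ^ 20)⁻¹)) (Real.exp t)) =
      s.indicator 1 t := by
    intro t
    by_cases ht : t ∈ s
    · rw [Set.indicator_of_mem (by simpa using ht), Set.indicator_of_mem ht, Pi.one_apply,
        ← ENNReal.ofReal_mul (by positivity), ← ENNReal.ofReal_mul (by positivity),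
        ← ENNReal.ofReal_one]
      congr 1
      field_simp
    · rw [Set.indicator_of_notMem (by simpa using ht), Set.indicator_of_notMem ht, mul_zero,
        mul_zero]
  rw [lintegral_congr h3, lintegral_indicator_one hs, smul_eq_mul, ← mul_assoc]
  erw [ENNReal.inv_mul_cancel sphereArea_ne_zero sphereArea_ne_top, one_mul]

end RadialMeasure

section RadialComponent
open smoothFn

theorem logMeasure_absolutelyContinuous : logMeasure ≪ (volume : Measure E20) :=
  Measure.smul_absolutelyContinuous.trans (withDensity_absolutelyContinuous _ _)

theorem integral_logMeasure (h : E20 → ℂ) :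
    ∫ x, h x ∂logMeasure = sphereArea.toReal⁻¹ • ∫ x, (‖x‖ ^ 20)⁻¹ • h x := by
  rw [logMeasure, integral_smul_measure, integral_withDensity_eq_integral_toReal_smul
    (by fun_prop) (by simp), ENNReal.toReal_inv]
  congr 1
  refine integral_congr_ae (.of_forall fun x => ?_)
  dsimp only
  rw [ENNReal.toReal_ofReal (by positivity)]

theorem integrable_logMeasure {F : Type*} [NormedAddCommGroup F] [NormedSpace ℝ F] {h : E20 → F} :
    Integrable h logMeasure ↔ Integrable fun x => (‖x‖ ^ 20)⁻¹ • h x := by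
  rw [logMeasure, integrable_smul_measure (ENNReal.inv_ne_zero.2 sphereArea_ne_top)
    (ENNReal.inv_ne_top.2 sphereArea_ne_zero), integrable_withDensity_iff_integrable_smul'
    (by fun_prop) (by simp)]
  refine integrable_congr (.of_forall fun x => ?_)
  dsimp only
  rw [ENNReal.toReal_ofReal (by positivity)]

variable {k : ℕ} {p : MvPolynomial (Fin 20) ℂ} {U : E20 → ℂ}

theorem exists_norm_evalPoly_le (hp : p.IsHomogeneous k) :
    ∃ C : ℝ, 0 ≤ C ∧ ∀ x, ‖evalPoly p x‖ ≤ C * ‖x‖ ^ k := by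
  refine ⟨∑ d ∈ p.support, ‖p.coeff d‖, by positivity, fun x => ?_⟩
  rw [evalPoly, MvPolynomial.eval_eq', Finset.sum_mul]
  refine norm_sum_le_of_le _ fun d hd => ?_
  rw [norm_mul]
  gcongr
  have hk : ∑ i, d i = k := by
    have := hp (MvPolynomial.mem_support_iff.1 hd)
    rw [← this, Finsupp.weight_apply, Finsupp.sum_fintype _ _ (by simp)]
    simp
  rw [norm_prod, ← hk, ← Finset.prod_pow_eq_pow_sum]
  refine Finset.prod_le_prod (fun _ _ => norm_nonneg _) fun i _ => ?_
  rw [norm_pow]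
  gcongr
  rw [Complex.norm_real]
  exact PiLp.norm_apply_le x i

theorem measurable_radPoly (G : smoothFn) (p : MvPolynomial (Fin 20) ℂ) :
    Measurable (radPoly G.1 p) := by
  have h1 := (continuous G).measurable
  have h2 := (contDiff_evalPoly p).continuous.measurable
  exact Measurable.ite (measurableSet_singleton 0) measurable_const (by fun_prop)

/-- The constant function one. -/
def oneFn : smoothFn := ⟨fun _ => 1, mem_smoothFn.2 contDiff_const⟩

theorem memLp_mul_radPoly (hU : MemLp U 2) (hp : p.IsHomogeneous k) :
    MemLp (fun x => U x * radPoly (E (10 - k) oneFn).1 p x) 2 logMeasure := by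
  have hm : AEStronglyMeasurable (fun x => U x * radPoly (E (10 - k) oneFn).1 p x) volume :=
    hU.1.mul (measurable_radPoly _ _).aestronglyMeasurable
  rw [memLp_two_iff_integrable_sq_norm (hm.mono_ac logMeasure_absolutelyContinuous),
    integrable_logMeasure]
  obtain ⟨C, hC, h⟩ := exists_norm_evalPoly_le hp
  have hi := ((memLp_two_iff_integrable_sq_norm hU.1).1 hU).const_mul (C ^ 2)
  refine hi.mono' (AEStronglyMeasurable.smul (by fun_prop : Measurable
    fun x : E20 => (‖x‖ ^ 20)⁻¹).aestronglyMeasurable (hm.norm.pow 2)) (.of_forall fun x => ?_)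
  rw [norm_smul, norm_mul, Real.norm_of_nonneg (by positivity), Real.norm_of_nonneg (by positivity)]
  by_cases hx : x = 0
  · rw [radPoly, if_pos hx]
    simp
    positivity
  rw [radPoly_of_ne hx, E_apply]
  have hx' := norm_pos_iff.2 hx
  have e : ‖Complex.exp ((10 - k : ℂ) * (Real.log ‖x‖ : ℝ))‖ = ‖x‖ ^ 10 * (‖x‖ ^ k)⁻¹ := by
    have h1 := exp_log_norm hx 10
    have h2 := exp_log_norm hx k
    rw [sub_mul, Complex.exp_sub, h2]
    push_cast at h1
    rw [h1]
    simp [div_eq_mul_inv]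
  rw [norm_mul, norm_mul, e]
  have := h x
  have h3 : ‖x‖ ^ 10 * (‖x‖ ^ k)⁻¹ * ‖oneFn.1 (Real.log ‖x‖)‖ * ‖evalPoly p x‖ ≤ ‖x‖ ^ 10 * C := by
    rw [show oneFn.1 (Real.log ‖x‖) = 1 from rfl, norm_one, mul_one, mul_assoc]
    gcongr
    rw [inv_mul_le_iff₀ (by positivity)]
    linarith
  calc _ ≤ (‖x‖ ^ 20)⁻¹ * (‖U x‖ * (‖x‖ ^ 10 * C)) ^ 2 := by gcongr
    _ = _ := by field_simp

theorem exists_radial_component (hU : MemLp U 2) (hp : p.IsHomogeneous k) :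
    ∃ F : ℝ → ℂ, MemLp F 2 ∧ ∀ G : smoothFn, HasCompactSupport G.1 →
      ∫ x, U x * radPoly (E (-10 - k) G).1 p x = ∫ t, F t * G.1 t := by
  have hW := memLp_mul_radPoly hU hp
  set W := fun x => U x * radPoly (E (10 - k) oneFn).1 p x
  let J : Lp ℂ 2 (volume : Measure ℝ) →L[ℂ] Lp ℂ 2 logMeasure :=
    (Lp.compMeasurePreservingₗᵢ ℂ _ measurePreserving_log_norm).toContinuousLinearMap
  let R := J.adjoint hW.toLp
  refine ⟨fun t => sphereArea.toReal * R t, (Lp.memLp R).const_mul _, fun G hG => ?_⟩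
  have hs : sphereArea.toReal ≠ 0 := ENNReal.toReal_ne_zero.2 ⟨sphereArea_ne_zero, sphereArea_ne_top⟩
  have hG2 : MemLp (fun t => starRingEnd ℂ (G.1 t)) 2 volume :=
    (Complex.continuous_conj.comp (continuous G)).memLp_of_hasCompactSupport
      (hG.comp_left (map_zero _))
  have h1 : ⟪J hG2.toLp, hW.toLp⟫_ℂ = ⟪hG2.toLp, R⟫_ℂ := (J.adjoint_inner_right _ _).symm
  rw [L2.inner_def, L2.inner_def] at h1
  have e1 : ∫ t, ⟪(hG2.toLp : ℝ → ℂ) t, R t⟫_ℂ = ∫ t, R t * G.1 t := by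
    refine integral_congr_ae ?_
    filter_upwards [hG2.coeFn_toLp] with t ht
    rw [ht]
    simp
  have e2 : ∫ x, ⟪(J hG2.toLp : E20 → ℂ) x, (hW.toLp : E20 → ℂ) x⟫_ℂ ∂logMeasure =
      ∫ x, W x * G.1 (Real.log ‖x‖) ∂logMeasure := by
    refine integral_congr_ae ?_
    filter_upwards [hW.coeFn_toLp, Lp.coeFn_compMeasurePreserving hG2.toLp
      measurePreserving_log_norm, measurePreserving_log_norm.quasiMeasurePreserving.ae_eq_comp
      hG2.coeFn_toLp] with x h1 h2 h3
    have : (J hG2.toLp : E20 → ℂ) x = starRingEnd ℂ (G.1 (Real.log ‖x‖)) := h2.trans h3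
    rw [this, h1]
    simp
  rw [e1, e2, integral_logMeasure] at h1
  simp only [mul_assoc]
  rw [integral_const_mul, ← h1, Complex.real_smul, ← mul_assoc, ← Complex.ofReal_mul,
    mul_inv_cancel₀ hs, Complex.ofReal_one, one_mul]
  refine integral_congr_ae ?_
  have h0 : ∀ᵐ x : E20, x ≠ 0 := by simp [ae_iff]
  filter_upwards [h0] with x hx
  have hx' : (‖x‖ : ℂ) ≠ 0 := by simpa using hx
  have h2 := exp_log_norm hx 20
  simp only [W, radPoly_of_ne hx, E_apply, Complex.real_smul]
  rw [show oneFn.1 (Real.log ‖x‖) = 1 from rfl, show (10 - k : ℂ) * (Real.log ‖x‖ : ℝ) =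
    (-10 - k : ℂ) * (Real.log ‖x‖ : ℝ) + (20 : ℕ) * (Real.log ‖x‖ : ℝ) by push_cast; ring,
    Complex.exp_add, h2]
  push_cast
  field_simp

end RadialComponent

section Mollification
open smoothFn
open scoped ENNReal

/-- Convolution of functions on the real line. -/
def conv (κ f : ℝ → ℂ) (t : ℝ) : ℂ := ∫ r, κ (t - r) * f r

variable {f F : ℝ → ℂ} {κ κ' : smoothFn}

theorem conv_eq_convolution (κ f : ℝ → ℂ) :
    conv κ f = convolution κ f (ContinuousLinearMap.mul ℝ ℂ) volume := by
  ext t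
  rw [convolution_eq_swap]
  rfl

theorem integrable_conv (hf : LocallyIntegrable f) {g : ℝ → ℂ} (hg : Continuous g)
    (hc : HasCompactSupport g) (t : ℝ) : Integrable fun r => g (t - r) * f r := by
  have h := hc.convolutionExists_left (ContinuousLinearMap.mul ℝ ℂ) hg hf t
  exact h.integrable_swap

theorem hasDerivAt_conv (hf : LocallyIntegrable f) (hκ : HasCompactSupport κ.1) (t : ℝ) :
    HasDerivAt (conv κ.1 f) (conv (D κ).1 f t) t := by
  rw [conv_eq_convolution, conv_eq_convolution]
  exact hκ.hasDerivAt_convolution_left _ ((contDiff κ).of_le (by simp)) hf t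

/-- The mollification of a locally integrable function by a test function. -/
def mollify (hf : LocallyIntegrable f) (hκ : HasCompactSupport κ.1) : smoothFn :=
  ⟨conv κ.1 f, mem_smoothFn.2 (by
    rw [conv_eq_convolution]
    exact hκ.contDiff_convolution_left _ (contDiff κ) hf)⟩

theorem mollify_apply (hf : LocallyIntegrable f) (hκ : HasCompactSupport κ.1) (t : ℝ) :
    (mollify hf hκ).1 t = ∫ r, κ.1 (t - r) * f r := rfl

theorem D_mollify (hf : LocallyIntegrable f) (hκ : HasCompactSupport κ.1) :
    D (mollify hf hκ) = mollify hf (hasCompactSupport_D hκ) := by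
  ext t
  exact (hasDerivAt_conv hf hκ t).deriv

theorem aeval_mollify (P : Polynomial ℂ) (hf : LocallyIntegrable f) (hκ : HasCompactSupport κ.1) :
    aeval D P (mollify hf hκ) = mollify hf (hasCompactSupport_aeval P hκ) := by
  induction P using Polynomial.induction_on generalizing κ with
  | C c =>
    ext t
    simp only [Polynomial.aeval_C, Module.algebraMap_end_apply, Submodule.coe_smul, Pi.smul_apply,
      smul_eq_mul, mollify_apply, mul_assoc]
    rw [integral_const_mul]
  | add p q hp hq =>
    have e : aeval D (p + q) (mollify hf hκ) =
        aeval D p (mollify hf hκ) + aeval D q (mollify hf hκ) := by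
      rw [map_add, LinearMap.add_apply]
    rw [e, hp hκ, hq hκ]
    ext t
    simp only [Submodule.coe_add, Pi.add_apply, mollify_apply, map_add, LinearMap.add_apply, add_mul]
    rw [integral_add]
    · exact integrable_conv hf (smoothFn.continuous _) (hasCompactSupport_aeval p hκ) t
    · exact integrable_conv hf (smoothFn.continuous _) (hasCompactSupport_aeval q hκ) t
  | monomial n c ih =>
    have e : ∀ g : smoothFn, aeval D (Polynomial.C c * Polynomial.X ^ (n + 1)) g =
        aeval D (Polynomial.C c * Polynomial.X ^ n) (D g) := by
      intro g
      rw [pow_succ, ← mul_assoc, map_mul, Polynomial.aeval_X, Module.End.mul_apply]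
    rw [e, D_mollify, ih]
    congr 1
    exact (e κ).symm

theorem sq_lintegral_mul_le {f g : ℝ → ℝ≥0∞} (hf : AEMeasurable f) (hg : AEMeasurable g) :
    (∫⁻ t, f t * g t) ^ 2 ≤ (∫⁻ t, f t ^ 2) * ∫⁻ t, g t ^ 2 := by
  have h := ENNReal.lintegral_mul_le_Lp_mul_Lq volume (p := 2) (q := 2)
    (Real.holderConjugate_iff.2 (by norm_num)) hf hg
  calc _ ≤ ((∫⁻ t, f t ^ (2 : ℝ)) ^ (1 / 2 : ℝ) * (∫⁻ t, g t ^ (2 : ℝ)) ^ (1 / 2 : ℝ)) ^ 2 :=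
        pow_le_pow_left₀ zero_le h 2
    _ = _ := by
        rw [mul_pow, ← ENNReal.rpow_natCast, ← ENNReal.rpow_natCast, ← ENNReal.rpow_mul,
          ← ENNReal.rpow_mul]
        norm_num

theorem enorm_conv_le (κ f : ℝ → ℂ) (t : ℝ) :
    ‖conv κ f t‖ₑ ≤ ∫⁻ r, ‖κ (t - r)‖ₑ * ‖f r‖ₑ := by
  refine (enorm_integral_le_lintegral_enorm _).trans_eq ?_
  simp_rw [enorm_mul]

theorem lintegral_sq_conv_le {k : ℝ → ℂ} (hk : Continuous k) (hf : AEStronglyMeasurable f) :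
    ∫⁻ t, ‖conv k f t‖ₑ ^ 2 ≤ (∫⁻ t, ‖k t‖ₑ) ^ 2 * ∫⁻ t, ‖f t‖ₑ ^ 2 := by
  have hf' : AEMeasurable fun t => ‖f t‖ₑ := hf.enorm
  have hk' : Measurable k := hk.measurable
  have h1 : ∀ t, ‖conv k f t‖ₑ ^ 2 ≤ (∫⁻ t, ‖k t‖ₑ) * ∫⁻ r, ‖k (t - r)‖ₑ * ‖f r‖ₑ ^ 2 := by
    intro t
    have hkt : Measurable fun r => ‖k (t - r)‖ₑ ^ (1 / 2 : ℝ) := by fun_prop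
    have h := sq_lintegral_mul_le hkt.aemeasurable (hkt.aemeasurable.mul hf')
    have e : ∀ x : ℝ≥0∞, (x ^ (1 / 2 : ℝ)) ^ 2 = x := by
      intro x
      rw [← ENNReal.rpow_natCast, ← ENNReal.rpow_mul]
      norm_num
    have e' : ∀ x : ℝ≥0∞, x ^ (1 / 2 : ℝ) * x ^ (1 / 2 : ℝ) = x := fun x => by rw [← sq, e]
    simp only [Pi.mul_apply, ← mul_assoc, mul_pow, e, e'] at h
    rw [lintegral_sub_left_eq_self (fun r => ‖k r‖ₑ) t] at h
    exact (pow_le_pow_left₀ zero_le (enorm_conv_le k f t) 2).trans h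
  calc _ ≤ ∫⁻ t, (∫⁻ t, ‖k t‖ₑ) * ∫⁻ r, ‖k (t - r)‖ₑ * ‖f r‖ₑ ^ 2 := lintegral_mono h1
    _ = (∫⁻ t, ‖k t‖ₑ) * ∫⁻ t, ∫⁻ r, ‖k (t - r)‖ₑ * ‖f r‖ₑ ^ 2 := by
        refine lintegral_const_mul'' _ (AEMeasurable.lintegral_prod_right' (f := fun z : ℝ × ℝ =>
          ‖k (z.1 - z.2)‖ₑ * ‖f z.2‖ₑ ^ 2) ?_)
        exact AEMeasurable.mul (by fun_prop : Measurable fun z : ℝ × ℝ =>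
          ‖k (z.1 - z.2)‖ₑ).aemeasurable ((hf'.pow_const 2).comp_snd)
    _ = (∫⁻ t, ‖k t‖ₑ) * ∫⁻ r, ∫⁻ t, ‖k (t - r)‖ₑ * ‖f r‖ₑ ^ 2 := by
        rw [lintegral_lintegral_swap]
        exact AEMeasurable.mul (by fun_prop : Measurable fun z : ℝ × ℝ =>
          ‖k (z.1 - z.2)‖ₑ).aemeasurable ((hf'.pow_const 2).comp_snd)
    _ = (∫⁻ t, ‖k t‖ₑ) * ∫⁻ r, (∫⁻ t, ‖k t‖ₑ) * ‖f r‖ₑ ^ 2 := by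
        congr 1
        refine lintegral_congr fun r => ?_
        rw [lintegral_mul_const _ (by fun_prop), lintegral_sub_right_eq_self (fun t => ‖k t‖ₑ) r]
    _ = _ := by rw [lintegral_const_mul'' _ (hf'.pow_const 2), sq, mul_assoc]

theorem memLp_conv {k : ℝ → ℂ} (hk : Continuous k) (hc : HasCompactSupport k) (hf : MemLp f 2) :
    MemLp (conv k f) 2 := by
  have hm : AEStronglyMeasurable (conv k f) volume := by
    have : Continuous (conv k f) := by
      rw [conv_eq_convolution]
      exact hc.continuous_convolution_left _ hk (hf.locallyIntegrable (by norm_num))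
    exact this.aestronglyMeasurable
  have h := lintegral_sq_conv_le hk hf.1
  have h2 : ∀ g : ℝ → ℂ, AEStronglyMeasurable g volume → (MemLp g 2 ↔ ∫⁻ t, ‖g t‖ₑ ^ 2 < ⊤) := by
    intro g hg
    rw [MemLp, eLpNorm_lt_top_iff_lintegral_rpow_enorm_lt_top (by norm_num) (by norm_num)]
    simp [hg]
  rw [h2 _ hm]
  refine h.trans_lt (ENNReal.mul_lt_top (ENNReal.pow_lt_top ?_) ((h2 _ hf.1).1 hf))
  exact (hk.integrable_of_hasCompactSupport hc).2

theorem tendsto_conv_zero {k : ℝ → ℂ} (hk : Continuous k) (hc : HasCompactSupport k)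
    (hf : MemLp f 2) {l : Filter ℝ} [l.IsCountablyGenerated] (hl : l ≤ cocompact ℝ) :
    Tendsto (conv k f) l (𝓝 0) := by
  obtain ⟨R, hR⟩ := hc.isCompact.isBounded.subset_closedBall 0
  have hf' : AEMeasurable fun t => ‖f t‖ₑ := hf.1.enorm
  have hfi : ∫⁻ t, ‖f t‖ₑ ^ 2 ≠ ⊤ := by
    have := hf.2
    rw [eLpNorm_lt_top_iff_lintegral_rpow_enorm_lt_top (by norm_num) (by norm_num)] at this
    simpa using this.ne
  have hki : ∫⁻ t, ‖k t‖ₑ ^ 2 ≠ ⊤ := by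
    have := (hk.memLp_of_hasCompactSupport hc (p := 2) (μ := volume)).2
    rw [eLpNorm_lt_top_iff_lintegral_rpow_enorm_lt_top (by norm_num) (by norm_num)] at this
    simpa using this.ne
  have h1 : ∀ t, ‖conv k f t‖ₑ ^ 2 ≤ (∫⁻ t, ‖k t‖ₑ ^ 2) *
      ∫⁻ r, (Metric.closedBall t R).indicator (fun r => ‖f r‖ₑ ^ 2) r := by
    intro t
    have h := sq_lintegral_mul_le (f := fun r => ‖k (t - r)‖ₑ)
      (g := (Metric.closedBall t R).indicator fun r => ‖f r‖ₑ) (by fun_prop)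
      (hf'.indicator measurableSet_closedBall)
    rw [lintegral_sub_left_eq_self (fun r => ‖k r‖ₑ ^ 2) t] at h
    refine le_trans (pow_le_pow_left₀ zero_le ((enorm_conv_le k f t).trans_eq ?_) 2)
      (h.trans_eq ?_)
    · refine lintegral_congr fun r => ?_
      by_cases hr : r ∈ Metric.closedBall t R
      · rw [Set.indicator_of_mem hr]
      · rw [image_eq_zero_of_notMem_tsupport (f := k) (x := t - r), enorm_zero, zero_mul, zero_mul]
        intro hh
        have := hR hh
        rw [mem_closedBall_zero_iff] at this
        exact hr (by rwa [Metric.mem_closedBall, dist_comm, dist_eq_norm])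
    · congr 1
      refine lintegral_congr fun r => ?_
      by_cases hr : r ∈ Metric.closedBall t R <;> simp [hr]
  have h2 : Tendsto (fun t => ∫⁻ r, (Metric.closedBall t R).indicator (fun r => ‖f r‖ₑ ^ 2) r)
      l (𝓝 (∫⁻ _ : ℝ, 0)) := by
    refine tendsto_lintegral_filter_of_dominated_convergence' (fun r => ‖f r‖ₑ ^ 2)
      (.of_forall fun t => (hf'.pow_const 2).indicator measurableSet_closedBall)
      (.of_forall fun t => .of_forall fun r => Set.indicator_le_self _ _ r) hfi
      (.of_forall fun r => ?_)
    refine (tendsto_const_nhds (x := (0 : ℝ≥0∞))).congr' ?_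
    filter_upwards [hl (isCompact_closedBall r R).compl_mem_cocompact] with t ht
    rw [Set.indicator_of_notMem]
    intro h
    exact ht (by rwa [Metric.mem_closedBall, dist_comm] at h)
  rw [lintegral_zero] at h2
  have h3 := ENNReal.Tendsto.const_mul h2 (Or.inr hki)
  rw [mul_zero] at h3
  have h4 := tendsto_of_tendsto_of_tendsto_of_le_of_le tendsto_const_nhds h3 (fun _ => zero_le) h1
  rw [tendsto_zero_iff_enorm_tendsto_zero]
  have h5 := h4.ennrpow_const (1 / 2 : ℝ)
  rw [ENNReal.zero_rpow_of_pos (by norm_num)] at h5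
  refine h5.congr fun t => ?_
  rw [← ENNReal.rpow_natCast, ← ENNReal.rpow_mul]
  norm_num

end Mollification

section Growth
open smoothFn

theorem norm_cexp_mul_ofReal (w : ℂ) (t : ℝ) : ‖Complex.exp (w * t)‖ = Real.exp (w.re * t) := by
  rw [Complex.norm_exp]
  simp

theorem exists_bound_of_first_order {w : ℂ} (hw : 5 ≤ |w.re|) {y : smoothFn}
    (hy : Tendsto (fun t => Real.exp (5 * t) * ‖y.1 t‖) atBot (𝓝 0))
    (hz : ∃ C, ∀ t ≤ 0, ‖(D y - w • y).1 t‖ ≤ C * Real.exp t) :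
    ∃ C, ∀ t ≤ 0, ‖y.1 t‖ ≤ C * Real.exp t := by
  obtain ⟨C, hC⟩ := hz
  have hC0 : 0 ≤ C := by simpa using (norm_nonneg _).trans (hC 0 le_rfl)
  set a := w.re
  set u := E (-w) y
  have hu : D u = E (-w) (D y - w • y) := by
    have := LinearMap.congr_fun (D_mul_E (-w)) y
    rw [Module.End.mul_apply] at this
    rw [this]
    ext t
    simp
    ring
  have hun : ∀ t, ‖u.1 t‖ = Real.exp (-a * t) * ‖y.1 t‖ := by
    intro t
    rw [E_apply, norm_mul, norm_cexp_mul_ofReal, Complex.neg_re]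
  have hyn : ∀ t, ‖y.1 t‖ = Real.exp (a * t) * ‖u.1 t‖ := by
    intro t
    rw [hun, ← mul_assoc, ← Real.exp_add]
    simp
  have hb : 1 - a ≠ 0 := by
    intro h
    rw [show a = 1 by linarith] at hw
    norm_num at hw
  have key : ∀ s t, s ≤ t → t ≤ 0 → ‖u.1 t - u.1 s‖ ≤
      C / (1 - a) * (Real.exp ((1 - a) * t) - Real.exp ((1 - a) * s)) := by
    intro s t hst ht
    refine image_norm_le_of_norm_deriv_right_le_deriv_boundary (f := fun r => u.1 r - u.1 s)
      (f' := (D u).1) (a := s) (b := t)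
      (B := fun r => C / (1 - a) * (Real.exp ((1 - a) * r) - Real.exp ((1 - a) * s)))
      (B' := fun r => C * Real.exp ((1 - a) * r)) ((smoothFn.continuous u).sub
        continuous_const).continuousOn (fun r _ => ((hasDerivAt u r).sub_const _).hasDerivWithinAt)
      (by simp) (fun r => ?_) (fun r hr => ?_) ⟨hst, le_rfl⟩
    · have := (((hasDerivAt_id r).const_mul (1 - a)).exp.sub_const
        (Real.exp ((1 - a) * s))).const_mul (C / (1 - a))
      refine this.congr_deriv ?_
      simp only [id, mul_one]
      field_simp
    · rw [hu, E_apply, norm_mul, norm_cexp_mul_ofReal, Complex.neg_re]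
      have := hC r (hr.2.le.trans ht)
      calc _ ≤ Real.exp (-a * r) * (C * Real.exp r) := by gcongr
        _ = _ := by rw [mul_left_comm, ← Real.exp_add]; ring_nf
  rcases le_abs.1 hw with h | h
  · refine ⟨‖u.1 0‖ + C / (a - 1), fun t ht => ?_⟩
    have h1 := key t 0 ht le_rfl
    have h2 : ‖u.1 t‖ ≤ ‖u.1 0‖ + ‖u.1 0 - u.1 t‖ := by
      have := norm_sub_le (u.1 0) (u.1 0 - u.1 t)
      rwa [sub_sub_cancel] at this
    have h3 : C / (1 - a) = -(C / (a - 1)) := by rw [← neg_sub a 1, div_neg]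
    rw [h3, mul_zero, Real.exp_zero] at h1
    have h4 : 0 ≤ C / (a - 1) := div_nonneg hC0 (by linarith)
    have h5 : Real.exp (a * t) ≤ Real.exp t := Real.exp_le_exp.2 (by nlinarith)
    have h6 : Real.exp (a * t) * Real.exp ((1 - a) * t) = Real.exp t := by
      rw [← Real.exp_add]; ring_nf
    calc _ = Real.exp (a * t) * ‖u.1 t‖ := hyn t
      _ ≤ Real.exp (a * t) * (‖u.1 0‖ + C / (a - 1) * Real.exp ((1 - a) * t)) := by
          gcongr
          linarith
      _ = Real.exp (a * t) * ‖u.1 0‖ + C / (a - 1) * Real.exp t := by rw [← h6]; ring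
      _ ≤ Real.exp t * ‖u.1 0‖ + C / (a - 1) * Real.exp t := by gcongr
      _ = _ := by ring
  · refine ⟨C / (1 - a), fun t ht => ?_⟩
    have hb0 : 0 < 1 - a := by linarith
    have h0 : Tendsto (fun s => ‖u.1 s‖) atBot (𝓝 0) := by
      refine tendsto_of_tendsto_of_tendsto_of_le_of_le' tendsto_const_nhds hy
        (.of_forall fun _ => norm_nonneg _) ?_
      filter_upwards [eventually_le_atBot 0] with s hs
      rw [hun]
      gcongr ?_ * _
      exact Real.exp_le_exp.2 (by nlinarith)
    have h1 : ‖u.1 t‖ ≤ C / (1 - a) * Real.exp ((1 - a) * t) := by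
      have h7 := h0.add_const (C / (1 - a) * Real.exp ((1 - a) * t))
      rw [zero_add] at h7
      refine ge_of_tendsto h7 ?_
      filter_upwards [eventually_le_atBot t] with s hs
      have h1 := key s t hs ht
      have h2 : ‖u.1 t‖ ≤ ‖u.1 t - u.1 s‖ + ‖u.1 s‖ := by
        have := norm_add_le (u.1 t - u.1 s) (u.1 s)
        rwa [sub_add_cancel] at this
      have : 0 ≤ C / (1 - a) * Real.exp ((1 - a) * s) := by positivity
      linarith
    calc _ = Real.exp (a * t) * ‖u.1 t‖ := hyn t
      _ ≤ Real.exp (a * t) * (C / (1 - a) * Real.exp ((1 - a) * t)) := by gcongr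
      _ = _ := by rw [mul_left_comm, ← Real.exp_add]; ring_nf

theorem aeval_mul_apply (P Q : Polynomial ℂ) (y : smoothFn) :
    aeval D (P * Q) y = aeval D P (aeval D Q y) := by
  rw [map_mul, Module.End.mul_apply]

theorem exists_bound_of_aeval {Q : Polynomial ℂ} (hQ0 : Q ≠ 0)
    (hQ : ∀ w, Q.IsRoot w → 5 ≤ |w.re|) {y : smoothFn}
    (hy : ∀ P : Polynomial ℂ, Tendsto (fun t => Real.exp (5 * t) * ‖(aeval D P y).1 t‖) atBot (𝓝 0))
    (hz : ∀ P : Polynomial ℂ, ∃ C, ∀ t ≤ 0, ‖(aeval D P (aeval D Q y)).1 t‖ ≤ C * Real.exp t) (P : Polynomial ℂ) :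
    ∃ C, ∀ t ≤ 0, ‖(aeval D P y).1 t‖ ≤ C * Real.exp t := by
  induction hn : Q.natDegree generalizing Q P with
  | zero =>
    rw [Polynomial.natDegree_eq_zero] at hn
    obtain ⟨b, rfl⟩ := hn
    have hb : b ≠ 0 := by simpa using hQ0
    obtain ⟨C, hC⟩ := hz (Polynomial.C b⁻¹ * P)
    refine ⟨C, fun t ht => ?_⟩
    have := hC t ht
    rwa [← aeval_mul_apply, mul_right_comm, ← Polynomial.C_mul, inv_mul_cancel₀ hb,
      Polynomial.C_1, one_mul] at this
  | succ n ih =>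
    obtain ⟨w, hw⟩ := IsAlgClosed.exists_root Q (by
      rw [Polynomial.degree_eq_natDegree hQ0, hn]
      exact_mod_cast Nat.succ_ne_zero n)
    obtain ⟨R, rfl⟩ := Polynomial.dvd_iff_isRoot.2 hw
    have hR0 := right_ne_zero_of_mul hQ0
    refine ih hR0 (fun v hv => hQ v (hv.dvd (Dvd.intro_left _ rfl))) (fun P => ?_) P ?_
    · refine exists_bound_of_first_order (hQ w hw) ?_ ?_
      · rw [← aeval_mul_apply]
        exact hy _
      · obtain ⟨C, hC⟩ := hz P
        refine ⟨C, fun t ht => ?_⟩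
        have := hC t ht
        convert this using 4
        rw [← aeval_mul_apply, ← aeval_mul_apply, show P * ((Polynomial.X - Polynomial.C w) * R) =
          (Polynomial.X - Polynomial.C w) * (P * R) by ring,
          aeval_mul_apply (Polynomial.X - Polynomial.C w)]
        simp
    · rw [Polynomial.natDegree_mul (Polynomial.X_sub_C_ne_zero w) hR0,
        Polynomial.natDegree_X_sub_C] at hn
      omega

/-- Exponential decay of a smooth function together with all its derivatives. -/
def Decays (y : smoothFn) : Prop := ∀ P : Polynomial ℂ, ∃ C, ∀ t, ‖(aeval D P y).1 t‖ ≤ C * Real.exp (-|t|)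

theorem Decays.aeval {y : smoothFn} (h : Decays y) (P : Polynomial ℂ) : Decays (aeval D P y) := by
  intro R
  rw [← aeval_mul_apply]
  exact h _

theorem integrable_exp_neg_abs : Integrable fun t : ℝ => Real.exp (-|t|) := by
  rw [← integrableOn_univ, ← Set.Iic_union_Ioi (a := (0 : ℝ)), integrableOn_union]
  refine ⟨(integrableOn_exp_Iic 0).congr_fun (fun t ht => ?_) measurableSet_Iic,
    (integrableOn_exp_neg_Ioi 0).congr_fun (fun t ht => ?_) measurableSet_Ioi⟩
  · rw [abs_of_nonpos ht, neg_neg]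
  · rw [abs_of_pos ht]

theorem Decays.exists_norm_le {y : smoothFn} (h : Decays y) :
    ∃ C, ∀ t, ‖y.1 t‖ ≤ C * Real.exp (-|t|) := by
  have := h 1
  rwa [map_one] at this

theorem Decays.integrable_mul_conj {u v : smoothFn} (hu : Decays u) (hv : Decays v) :
    Integrable fun t => u.1 t * starRingEnd ℂ (v.1 t) := by
  obtain ⟨C, hC⟩ := hu.exists_norm_le
  obtain ⟨C', hC'⟩ := hv.exists_norm_le
  refine (integrable_exp_neg_abs.const_mul (C * C')).mono' ((smoothFn.continuous u).mul
    (Complex.continuous_conj.comp (smoothFn.continuous v))).aestronglyMeasurable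
    (.of_forall fun t => ?_)
  rw [norm_mul, RCLike.norm_conj]
  have h0 : 0 ≤ C := by simpa using (norm_nonneg _).trans (hC 0)
  have h0' : 0 ≤ C' := by simpa using (norm_nonneg _).trans (hC' 0)
  calc _ ≤ (C * Real.exp (-|t|)) * (C' * Real.exp (-|t|)) :=
        mul_le_mul (hC t) (hC' t) (norm_nonneg _) (by positivity)
    _ ≤ (C * Real.exp (-|t|)) * (C' * 1) := by
        gcongr
        rw [Real.exp_le_one_iff]
        simp
    _ = _ := by ring

theorem Decays.D {u : smoothFn} (hu : Decays u) : Decays (D u) := by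
  simpa using hu.aeval Polynomial.X

theorem Decays.integral_D_mul_conj {u v : smoothFn} (hu : Decays u) (hv : Decays v) :
    ∫ t, (smoothFn.D u).1 t * starRingEnd ℂ (v.1 t) =
      -∫ t, u.1 t * starRingEnd ℂ ((smoothFn.D v).1 t) := by
  rw [eq_comm, neg_eq_iff_eq_neg]
  refine integral_mul_deriv_eq_deriv_mul_of_integrable (fun t _ => hasDerivAt u t) (fun t _ => ?_)
    (hu.integrable_mul_conj hv.D) (hu.D.integrable_mul_conj hv) (hu.integrable_mul_conj hv)
  exact (hasDerivAt v t).star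

/-- Polynomials in `d/dt` which are symmetric on the decaying functions. -/
def IsSymm (Q : Polynomial ℂ) : Prop := ∀ u v : smoothFn, Decays u → Decays v →
  ∫ t, (aeval D Q u).1 t * starRingEnd ℂ (v.1 t) = ∫ t, u.1 t * starRingEnd ℂ ((aeval D Q v).1 t)

theorem IsSymm.mul {P Q : Polynomial ℂ} (hP : IsSymm P) (hQ : IsSymm Q) : IsSymm (P * Q) := by
  intro u v hu hv
  rw [aeval_mul_apply, hP _ _ (hu.aeval Q) hv, hQ _ _ hu (hv.aeval P), ← aeval_mul_apply, mul_comm]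

theorem IsSymm.add {P Q : Polynomial ℂ} (hP : IsSymm P) (hQ : IsSymm Q) : IsSymm (P + Q) := by
  intro u v hu hv
  simp only [map_add, LinearMap.add_apply, Submodule.coe_add, Pi.add_apply, add_mul, mul_add]
  rw [integral_add ((hu.aeval P).integrable_mul_conj hv) ((hu.aeval Q).integrable_mul_conj hv),
    integral_add (hu.integrable_mul_conj (hv.aeval P)) (hu.integrable_mul_conj (hv.aeval Q)),
    hP u v hu hv, hQ u v hu hv]

theorem isSymm_C (b : ℝ) : IsSymm (Polynomial.C (b : ℂ)) := by
  intro u v _ _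
  refine integral_congr_ae (.of_forall fun t => ?_)
  simp only [Polynomial.aeval_C, Module.algebraMap_end_apply, Submodule.coe_smul, Pi.smul_apply,
    smul_eq_mul, map_mul, Complex.conj_ofReal]
  ring

theorem isSymm_X_sq : IsSymm (Polynomial.X ^ 2) := by
  intro u v hu hv
  simp only [pow_two, aeval_mul_apply, Polynomial.aeval_X]
  rw [hu.D.integral_D_mul_conj hv, hu.integral_D_mul_conj hv.D, neg_neg]

theorem isSymm_symbol (k : ℕ) (c : ℝ) : IsSymm (symbol k c) := by
  refine IsSymm.add ?_ (isSymm_C c)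
  refine Finset.prod_induction _ IsSymm (fun _ _ h h' => h.mul h') ?_ fun i _ => ?_
  · simpa using isSymm_C 1
  · have h1 := isSymm_C ((k + 5 + 2 * i : ℝ) ^ 2)
    have h2 := (isSymm_C (-1)).mul isSymm_X_sq
    have := h1.add h2
    convert this using 1
    push_cast
    simp [sub_eq_add_neg]

theorem comp_neg_X_symbol (k : ℕ) (c : ℝ) : (symbol k c).comp (-Polynomial.X) = symbol k c := by
  simp [symbol, symbolProd, Polynomial.prod_comp]

end Growth

section Uniqueness
open smoothFn
open scoped ENNReal

/-- The map sending `κ` to the function `r ↦ κ (t - r)`. -/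
def reflect (t : ℝ) : Module.End ℂ smoothFn where
  toFun κ := ⟨fun r => κ.1 (t - r), mem_smoothFn.2
    ((contDiff κ).comp (contDiff_const.sub contDiff_id))⟩
  map_add' _ _ := rfl
  map_smul' _ _ := rfl

theorem reflect_apply (t : ℝ) (κ : smoothFn) (r : ℝ) : (reflect t κ).1 r = κ.1 (t - r) := rfl

theorem hasCompactSupport_reflect (t : ℝ) {κ : smoothFn} (hκ : HasCompactSupport κ.1) :
    HasCompactSupport (reflect t κ).1 :=
  hκ.comp_homeomorph (Homeomorph.subLeft t)

theorem D_mul_reflect (t : ℝ) : D * reflect t = reflect t * -D := by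
  ext κ r
  have := (hasDerivAt κ (t - r)).scomp r ((hasDerivAt_id r).const_sub t)
  refine this.deriv.trans ?_
  simp [Module.End.mul_apply, reflect_apply]

theorem aeval_mul_reflect (t : ℝ) (P : Polynomial ℂ) :
    aeval D P * reflect t = reflect t * aeval D (P.comp (-Polynomial.X)) := by
  have h1 : aeval D (P.comp (-Polynomial.X)) = aeval (-D) P := by
    rw [Polynomial.aeval_comp]
    simp
  rw [h1]
  induction P using Polynomial.induction_on' with
  | add p q hp hq => rw [map_add, map_add, add_mul, mul_add,
      hp (by rw [Polynomial.aeval_comp]; simp), hq (by rw [Polynomial.aeval_comp]; simp)]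
  | monomial n c =>
    have h2 : SemiconjBy (reflect t) (-D) D := (D_mul_reflect t).symm
    have h3 := (h2.pow_right n).eq
    rw [Polynomial.aeval_monomial, Polynomial.aeval_monomial, mul_assoc, ← h3, ← mul_assoc,
      ← mul_assoc, Algebra.commutes]

theorem locallyIntegrable_cexp_mul {F : ℝ → ℂ} (hF : LocallyIntegrable F) (a : ℂ) :
    LocallyIntegrable fun t : ℝ => Complex.exp (a * t) * F t := by
  have : Continuous fun t : ℝ => Complex.exp (a * t) := by fun_prop
  rw [← locallyIntegrableOn_univ] at hF ⊢
  exact hF.continuousOn_mul this.continuousOn isOpen_univ.isLocallyClosed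

theorem conv_cexp_mul (a : ℂ) (κ : smoothFn) (F : ℝ → ℂ) (t : ℝ) :
    conv κ.1 (fun r => Complex.exp (a * r) * F r) t =
      Complex.exp (a * t) * conv (E (-a) κ).1 F t := by
  rw [conv, conv, ← integral_const_mul]
  refine integral_congr_ae (.of_forall fun r => ?_)
  simp only [E_apply]
  rw [show a * (t : ℂ) = a * r + a * ((t - r : ℝ) : ℂ) by push_cast; ring, Complex.exp_add, neg_mul,
    Complex.exp_neg]
  field_simp

theorem exists_norm_conv_le {F : ℝ → ℂ} (hF : MemLp F 2) {k : ℝ → ℂ} (hk : Continuous k)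
    (hc : HasCompactSupport k) : ∃ C, ∀ t, ‖conv k F t‖ ≤ C := by
  have hcont : Continuous (conv k F) := by
    rw [conv_eq_convolution]
    exact hc.continuous_convolution_left _ hk (hF.locallyIntegrable (by norm_num))
  have : (cocompact ℝ).IsCountablyGenerated := by
    rw [cocompact_eq_atBot_atTop]
    infer_instance
  let f : ZeroAtInftyContinuousMap ℝ ℂ := ⟨⟨conv k F, hcont⟩, tendsto_conv_zero hk hc hF le_rfl⟩
  obtain ⟨C, hC⟩ := f.isBounded_range.exists_norm_le
  exact ⟨C, fun t => hC _ ⟨t, rfl⟩⟩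

variable {F : ℝ → ℂ} {Q : Polynomial ℂ} {s : ℂ} {κ : smoothFn}

theorem aeval_mollify_eq (hF : LocallyIntegrable F) (hQ : Q.comp (-Polynomial.X) = Q)
    (hT : ∀ G : smoothFn, HasCompactSupport G.1 →
      ∫ t, F t * (E (-5) (aeval D Q G + s • E 10 G)).1 t = 0)
    (hκ : HasCompactSupport κ.1) :
    aeval D Q (mollify (locallyIntegrable_cexp_mul hF (-5)) hκ) =
      -s • mollify (locallyIntegrable_cexp_mul hF 5) hκ := by
  rw [aeval_mollify]
  ext t
  have h := hT _ (hasCompactSupport_reflect t hκ)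
  have h1 := LinearMap.congr_fun (aeval_mul_reflect t Q) κ
  rw [Module.End.mul_apply, Module.End.mul_apply, hQ] at h1
  rw [h1] at h
  have h2 : ∀ r : ℝ, F r * (E (-5) (reflect t (aeval D Q κ) + s • E 10 (reflect t κ))).1 r =
      (aeval D Q κ).1 (t - r) * (Complex.exp (-5 * r) * F r) +
        s * (κ.1 (t - r) * (Complex.exp (5 * r) * F r)) := by
    intro r
    simp only [E_apply, Submodule.coe_add, Submodule.coe_smul, Pi.add_apply, Pi.smul_apply,
      reflect_apply, smul_eq_mul]
    rw [show (5 : ℂ) * r = -5 * r + 10 * r by ring, Complex.exp_add]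
    ring
  simp only [h2] at h
  rw [integral_add (integrable_conv (locallyIntegrable_cexp_mul hF (-5)) (smoothFn.continuous _)
    (hasCompactSupport_aeval Q hκ) t) ((integrable_conv (locallyIntegrable_cexp_mul hF 5)
    (smoothFn.continuous _) hκ t).const_mul s), integral_const_mul] at h
  rw [Submodule.coe_smul, Pi.smul_apply, mollify_apply, mollify_apply, smul_eq_mul, neg_mul]
  exact eq_neg_of_add_eq_zero_left h

theorem decays_mollify (hF : MemLp F 2) (hQ0 : Q ≠ 0) (hQr : ∀ w, Q.IsRoot w → 5 ≤ |w.re|)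
    (hκ : HasCompactSupport κ.1)
    (hy : aeval D Q (mollify (locallyIntegrable_cexp_mul (hF.locallyIntegrable (by norm_num)) (-5)) hκ) =
      -s • mollify (locallyIntegrable_cexp_mul (hF.locallyIntegrable (by norm_num)) 5) hκ) :
    Decays (mollify (locallyIntegrable_cexp_mul (hF.locallyIntegrable (by norm_num)) (-5)) hκ) := by
  have hFl : LocallyIntegrable F := hF.locallyIntegrable (by norm_num)
  have h1 : ∀ (a : ℝ) (P : Polynomial ℂ) (t : ℝ),
      ‖(aeval D P (mollify (locallyIntegrable_cexp_mul hFl a) hκ)).1 t‖ =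
        Real.exp (a * t) * ‖conv (E (-a) (aeval D P κ)).1 F t‖ := by
    intro a P t
    rw [aeval_mollify]
    refine (congrArg norm (conv_cexp_mul a (aeval D P κ) F t)).trans ?_
    rw [norm_mul, norm_cexp_mul_ofReal, Complex.ofReal_re]
  have hm5 : ((-5 : ℝ) : ℂ) = -5 := by norm_num
  have h5 : ((5 : ℝ) : ℂ) = 5 := by norm_num
  intro P
  have hc : ∀ (a : ℂ) (P : Polynomial ℂ), HasCompactSupport (E a (aeval D P κ)).1 :=
    fun a P => hasCompactSupport_E a (hasCompactSupport_aeval P hκ)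
  obtain ⟨C, hC⟩ := exists_bound_of_aeval hQ0 hQr (P := P)
    (y := mollify (locallyIntegrable_cexp_mul hFl (-5)) hκ) (fun P => by
      have := (tendsto_conv_zero (smoothFn.continuous _) (hc 5 P) hF (l := atBot)
        atBot_le_cocompact).norm
      rw [norm_zero] at this
      refine this.congr fun t => ?_
      have := h1 (-5) P t
      simp only [hm5, neg_neg] at this
      rw [this, ← mul_assoc, ← Real.exp_add]
      simp)
    (fun P => by
      obtain ⟨C, hC⟩ := exists_norm_conv_le hF (smoothFn.continuous _) (hc (-5) P)
      refine ⟨‖s‖ * C, fun t ht => ?_⟩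
      rw [hy, map_smul, Submodule.coe_smul, Pi.smul_apply, norm_smul, norm_neg]
      have := h1 5 P t
      simp only [h5] at this
      rw [this, mul_assoc, mul_comm C]
      gcongr
      · linarith
      · exact hC t)
  obtain ⟨C', hC'⟩ := exists_norm_conv_le hF (smoothFn.continuous _) (hc 5 P)
  refine ⟨max C C', fun t => ?_⟩
  rcases le_total t 0 with ht | ht
  · rw [abs_of_nonpos ht, neg_neg]
    refine (hC t ht).trans ?_
    gcongr
    exact le_max_left _ _
  · rw [abs_of_nonneg ht]
    have := h1 (-5) P t
    simp only [hm5, neg_neg] at this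
    rw [this, mul_comm]
    have h0 : 0 ≤ max C C' := (norm_nonneg _).trans ((hC' t).trans (le_max_right _ _))
    gcongr
    · exact (hC' t).trans (le_max_right _ _)
    · linarith

theorem re_integral_conv_mul_conj_eq_zero (hF : MemLp F 2) (hQ0 : Q ≠ 0)
    (hQr : ∀ w, Q.IsRoot w → 5 ≤ |w.re|) (hQ : Q.comp (-Polynomial.X) = Q) (hQs : IsSymm Q)
    (hs : s.re = 0) (hs0 : s ≠ 0)
    (hT : ∀ G : smoothFn, HasCompactSupport G.1 →
      ∫ t, F t * (E (-5) (aeval D Q G + s • E 10 G)).1 t = 0)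
    (hκ : HasCompactSupport κ.1) :
    (∫ t, conv (E (-5) κ).1 F t * starRingEnd ℂ (conv (E 5 κ).1 F t)).re = 0 := by
  have hFl : LocallyIntegrable F := hF.locallyIntegrable (by norm_num)
  have hy := aeval_mollify_eq hFl hQ hT hκ
  have hd := decays_mollify hF hQ0 hQr hκ hy
  have h := hQs _ _ hd hd
  have hsc : starRingEnd ℂ s = -s := by
    apply Complex.ext <;> simp [hs]
  set I := ∫ t, conv (E (-5) κ).1 F t * starRingEnd ℂ (conv (E 5 κ).1 F t)
  have e5 : ∀ t : ℝ, Complex.exp (5 * t) * starRingEnd ℂ (Complex.exp (-5 * t)) = 1 := by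
    intro t
    rw [← Complex.exp_conj, ← Complex.exp_add]
    simp [map_ofNat]
  have e1 : ∀ t : ℝ, (-s • mollify (locallyIntegrable_cexp_mul hFl 5) hκ).1 t *
      starRingEnd ℂ ((mollify (locallyIntegrable_cexp_mul hFl (-5)) hκ).1 t) =
      -s * (conv (E (-5) κ).1 F t * starRingEnd ℂ (conv (E 5 κ).1 F t)) := by
    intro t
    have h5 := conv_cexp_mul 5 κ F t
    have hm5 := conv_cexp_mul (-5) κ F t
    rw [neg_neg] at hm5
    have : starRingEnd ℂ ((mollify (locallyIntegrable_cexp_mul hFl (-5)) hκ).1 t) =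
      starRingEnd ℂ (Complex.exp (-5 * t)) * starRingEnd ℂ (conv (E 5 κ).1 F t) := by
      rw [← map_mul]
      exact congrArg _ hm5
    rw [this, Submodule.coe_smul, Pi.smul_apply, smul_eq_mul]
    refine (congrArg (fun z => -s * z * _) h5).trans ?_
    linear_combination -s * conv (E (-5) κ).1 F t * starRingEnd ℂ (conv (E 5 κ).1 F t) * e5 t
  have h2 : ∫ t, (mollify (locallyIntegrable_cexp_mul hFl (-5)) hκ).1 t * starRingEnd ℂ
      ((-s • mollify (locallyIntegrable_cexp_mul hFl 5) hκ).1 t) = starRingEnd ℂ (-s * I) := by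
    rw [← integral_const_mul, ← integral_conj]
    refine integral_congr_ae (.of_forall fun t => ?_)
    simp only [← e1, map_mul, Complex.conj_conj]
    ring
  rw [hy, h2] at h
  simp only [e1] at h
  rw [integral_const_mul, map_mul, map_neg, hsc, neg_neg, neg_mul, ← mul_neg] at h
  have h3 := congrArg Complex.re (mul_left_cancel₀ hs0 h)
  simp only [Complex.neg_re, Complex.conj_re] at h3
  change I.re = 0
  linarith

theorem lintegral_sq_enorm_eq {f : ℝ → ℂ} (hf : MemLp f 2) :
    ∫⁻ t, ‖f t‖ₑ ^ 2 = ENNReal.ofReal (∫ t, ‖f t‖ ^ 2) := by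
  rw [ofReal_integral_eq_lintegral_ofReal ((memLp_two_iff_integrable_sq_norm hf.1).1 hf)
    (.of_forall fun _ => sq_nonneg _)]
  refine lintegral_congr fun t => ?_
  rw [ENNReal.ofReal_pow (norm_nonneg _), ofReal_norm]

theorem lintegral_sq_le_of_re_integral_eq_zero {A B : ℝ → ℂ} (hA : MemLp A 2) (hB : MemLp B 2)
    (h : (∫ t, B t * starRingEnd ℂ (A t)).re = 0) :
    ∫⁻ t, ‖A t‖ₑ ^ 2 ≤ ∫⁻ t, ‖A t - B t‖ₑ ^ 2 := by
  rw [lintegral_sq_enorm_eq hA]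
  refine le_of_le_of_eq ?_ (lintegral_sq_enorm_eq (hA.sub hB)).symm
  refine ENNReal.ofReal_le_ofReal ?_
  have hi : Integrable fun t => B t * starRingEnd ℂ (A t) := hB.integrable_mul hA.star
  have hre : ∫ t, (B t * starRingEnd ℂ (A t)).re = 0 := by
    rw [← h]
    exact integral_re hi
  have hi' : Integrable fun t => (B t * starRingEnd ℂ (A t)).re := hi.re
  have h0 := (memLp_two_iff_integrable_sq_norm hA.1).1 hA
  have h1 := (memLp_two_iff_integrable_sq_norm (hA.sub hB).1).1 (hA.sub hB)
  calc _ ≤ ∫ t, (‖(A - B) t‖ ^ 2 + 2 * (B t * starRingEnd ℂ (A t)).re) := by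
        refine integral_mono h0 (h1.add (hi'.const_mul 2)) fun t => ?_
        simp only [Pi.sub_apply, Complex.sq_norm, Complex.normSq_apply, Complex.sub_re,
          Complex.sub_im, Complex.mul_re, Complex.conj_re, Complex.conj_im]
        nlinarith [sq_nonneg (B t).re, sq_nonneg (B t).im]
    _ = _ := by
        rw [integral_add h1 (hi'.const_mul 2), integral_const_mul, hre]
        simp

end Uniqueness

section ApproximateIdentity
open smoothFn
open scoped ENNReal

/-- A smooth bump function on the line, supported in `[-ε, ε]`. -/
def lineBump {ε : ℝ} (hε : 0 < ε) : ContDiffBump (0 : ℝ) := ⟨ε / 2, ε, by positivity, by linarith⟩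

/-- A normalized smooth bump function on the line, supported in `[-ε, ε]`. -/
def lineMollifier {ε : ℝ} (hε : 0 < ε) : smoothFn :=
  ⟨fun t => ((lineBump hε).normed volume t : ℂ), mem_smoothFn.2
    (Complex.ofRealCLM.contDiff.comp (lineBump hε).contDiff_normed)⟩

theorem hasCompactSupport_lineMollifier {ε : ℝ} (hε : 0 < ε) :
    HasCompactSupport (lineMollifier hε).1 :=
  (lineBump hε).hasCompactSupport_normed.comp_left Complex.ofReal_zero

theorem lintegral_enorm_E_sub_E_lineMollifier_le {ε : ℝ} (hε : 0 < ε) :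
    ∫⁻ t, ‖(E 5 (lineMollifier hε) - E (-5) (lineMollifier hε)).1 t‖ₑ ≤
      ENNReal.ofReal (2 * Real.sinh (5 * ε)) := by
  have hs : 0 ≤ 2 * Real.sinh (5 * ε) := by
    have := Real.sinh_nonneg_iff.2 (by positivity : 0 ≤ 5 * ε)
    positivity
  have hi := (lineBump hε).integrable_normed (μ := volume)
  have h1 : ∫⁻ t, ENNReal.ofReal ((lineBump hε).normed volume t) = 1 := by
    rw [← ofReal_integral_eq_lintegral_ofReal hi
      (.of_forall fun t => (lineBump hε).nonneg_normed t), (lineBump hε).integral_normed,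
      ENNReal.ofReal_one]
  calc _ ≤ ∫⁻ t, ENNReal.ofReal (2 * Real.sinh (5 * ε)) *
        ENNReal.ofReal ((lineBump hε).normed volume t) := by
        refine lintegral_mono fun t => ?_
        rw [← ENNReal.ofReal_mul hs, ← ofReal_norm]
        refine ENNReal.ofReal_le_ofReal ?_
        have he : (E 5 (lineMollifier hε) - E (-5) (lineMollifier hε)).1 t =
            ((2 * Real.sinh (5 * t) * (lineBump hε).normed volume t : ℝ) : ℂ) := by
          rw [Real.sinh_eq]
          change (E 5 (lineMollifier hε)).1 t - (E (-5) (lineMollifier hε)).1 t = _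
          simp only [E_apply, lineMollifier]
          push_cast
          ring_nf
        rw [he, Complex.norm_real, norm_mul, norm_mul, Real.norm_eq_abs, Real.norm_eq_abs,
          Real.norm_eq_abs, abs_two, abs_of_nonneg ((lineBump hε).nonneg_normed t)]
        by_cases ht : |t| < ε
        · gcongr
          · exact (lineBump hε).nonneg_normed t
          · rw [Real.abs_sinh, Real.sinh_le_sinh, abs_mul, abs_of_pos (by norm_num : (0 : ℝ) < 5)]
            linarith
        · have : (lineBump hε).normed volume t = 0 := by
            rw [← Function.notMem_support, (lineBump hε).support_normed_eq]
            simpa [lineBump] using ht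
          rw [this, mul_zero, mul_zero]
    _ = _ := by rw [lintegral_const_mul' _ _ ENNReal.ofReal_ne_top, h1, mul_one]

theorem ae_tendsto_conv_lineMollifier {F : ℝ → ℂ} (hF : LocallyIntegrable F) :
    ∀ᵐ t, Tendsto (fun n : ℕ =>
      conv (lineMollifier (Nat.one_div_pos_of_nat (α := ℝ) (n := n))).1 F t) atTop (𝓝 (F t)) := by
  have := ContDiffBump.ae_convolution_tendsto_right_of_locallyIntegrable (μ := (volume : Measure ℝ))
    (φ := fun n : ℕ => lineBump (Nat.one_div_pos_of_nat (α := ℝ) (n := n))) (l := atTop) (K := 2)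
    tendsto_one_div_add_atTop_nhds_zero_nat
    (.of_forall fun n => by simp only [lineBump]; linarith) hF
  filter_upwards [this] with t ht
  refine ht.congr fun n => ?_
  rw [convolution_eq_swap, conv]
  refine integral_congr_ae (.of_forall fun r => ?_)
  simp [lineMollifier]

variable {F : ℝ → ℂ} {Q : Polynomial ℂ} {s : ℂ}

/-- An `L²` weak solution of `Q(d/dt) (e^{-5t} F) = -s e^{5t} F` vanishes. -/
theorem ae_eq_zero_of_forall_integral_eq_zero (hF : MemLp F 2) (hQ0 : Q ≠ 0)
    (hQr : ∀ w, Q.IsRoot w → 5 ≤ |w.re|) (hQ : Q.comp (-Polynomial.X) = Q) (hQs : IsSymm Q)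
    (hs : s.re = 0) (hs0 : s ≠ 0)
    (hT : ∀ G : smoothFn, HasCompactSupport G.1 →
      ∫ t, F t * (E (-5) (aeval D Q G + s • E 10 G)).1 t = 0) :
    F =ᵐ[volume] 0 := by
  have hFl : LocallyIntegrable F := hF.locallyIntegrable (by norm_num)
  set κ : ℕ → smoothFn := fun n => lineMollifier (Nat.one_div_pos_of_nat (α := ℝ) (n := n))
  have hκ : ∀ n, HasCompactSupport (κ n).1 := fun n => hasCompactSupport_lineMollifier _
  have hI : ∫⁻ t, ‖F t‖ₑ ^ 2 ≠ ⊤ := by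
    rw [lintegral_sq_enorm_eq hF]
    exact ENNReal.ofReal_ne_top
  have hae : ∀ᵐ t, Tendsto (fun n => conv (E 5 (κ n)).1 F t) atTop (𝓝 (F t)) := by
    filter_upwards [ae_tendsto_conv_lineMollifier (locallyIntegrable_cexp_mul hFl (-5))] with t ht
    have h1 := ht.const_mul (Complex.exp (5 * t))
    have h2 : ∀ z, Complex.exp (5 * t) * (Complex.exp (-5 * t) * z) = z := by
      intro z
      rw [← mul_assoc, ← Complex.exp_add]
      simp
    rw [h2] at h1
    refine h1.congr fun n => ?_
    rw [conv_cexp_mul, h2, neg_neg]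
  have hle : ∀ n, ∫⁻ t, ‖conv (E 5 (κ n)).1 F t‖ₑ ^ 2 ≤
      ENNReal.ofReal (2 * Real.sinh (5 * (1 / ((n : ℝ) + 1)))) ^ 2 * ∫⁻ t, ‖F t‖ₑ ^ 2 := by
    intro n
    have hA := memLp_conv (smoothFn.continuous _) (hasCompactSupport_E 5 (hκ n)) hF
    have hB := memLp_conv (smoothFn.continuous _) (hasCompactSupport_E (-5) (hκ n)) hF
    refine (lintegral_sq_le_of_re_integral_eq_zero hA hB
      (re_integral_conv_mul_conj_eq_zero hF hQ0 hQr hQ hQs hs hs0 hT (hκ n))).trans ?_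
    have hsub : ∀ t, conv (E 5 (κ n)).1 F t - conv (E (-5) (κ n)).1 F t =
        conv (E 5 (κ n) - E (-5) (κ n)).1 F t := by
      intro t
      rw [conv, conv, conv, ← integral_sub
        (integrable_conv hFl (smoothFn.continuous _) (hasCompactSupport_E 5 (hκ n)) t)
        (integrable_conv hFl (smoothFn.continuous _) (hasCompactSupport_E (-5) (hκ n)) t)]
      refine integral_congr_ae (.of_forall fun r => ?_)
      exact (sub_mul _ _ _).symm
    simp only [hsub]
    refine (lintegral_sq_conv_le (smoothFn.continuous _) hF.1).trans ?_
    gcongr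
    exact lintegral_enorm_E_sub_E_lineMollifier_le _
  have hlim : Tendsto (fun n : ℕ => ENNReal.ofReal (2 * Real.sinh (5 * (1 / ((n : ℝ) + 1)))) ^ 2 *
      ∫⁻ t, ‖F t‖ₑ ^ 2) atTop (𝓝 0) := by
    have h1 : Tendsto (fun x : ℝ => 2 * Real.sinh (5 * x)) (𝓝 0) (𝓝 0) := by
      have : Continuous fun x : ℝ => 2 * Real.sinh (5 * x) := by
        have := Real.continuous_sinh
        fun_prop
      simpa using this.tendsto 0
    have h2 := ENNReal.tendsto_ofReal (h1.comp tendsto_one_div_add_atTop_nhds_zero_nat)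
    have h3 := ENNReal.Tendsto.mul_const (ENNReal.Tendsto.pow (n := 2) h2) (Or.inr hI)
    simpa using h3
  have hfatou : ∫⁻ t, ‖F t‖ₑ ^ 2 ≤ 0 := by
    calc ∫⁻ t, ‖F t‖ₑ ^ 2 = ∫⁻ t, liminf (fun n => ‖conv (E 5 (κ n)).1 F t‖ₑ ^ 2) atTop := by
          refine lintegral_congr_ae ?_
          filter_upwards [hae] with t ht
          exact (ENNReal.Tendsto.pow ht.enorm).liminf_eq.symm
      _ ≤ liminf (fun n => ∫⁻ t, ‖conv (E 5 (κ n)).1 F t‖ₑ ^ 2) atTop := by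
          refine lintegral_liminf_le' fun n => ?_
          have := (memLp_conv (smoothFn.continuous _) (hasCompactSupport_E 5 (hκ n)) hF).1
          exact this.enorm.pow_const 2
      _ ≤ liminf (fun n : ℕ => ENNReal.ofReal (2 * Real.sinh (5 * (1 / ((n : ℝ) + 1)))) ^ 2 *
            ∫⁻ t, ‖F t‖ₑ ^ 2) atTop := liminf_le_liminf (.of_forall hle)
      _ = 0 := hlim.liminf_eq
  have := (lintegral_eq_zero_iff' (hF.1.enorm.pow_const 2)).1 (nonpos_iff_eq_zero.1 hfatou)
  filter_upwards [this] with t ht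
  simpa using ht

end ApproximateIdentity

section Completeness
open smoothFn

variable {U : E20 → ℂ} {c : ℝ} {s : ℂ}

theorem E_E_apply (a b : ℂ) (G : smoothFn) : E a (E b G) = E (a + b) G := by
  rw [← E_mul_E, Module.End.mul_apply]

theorem integral_radPoly_eq_zero_of_isHomogeneous (hr : ∀ k w, (symbol k c).IsRoot w → 5 ≤ |w.re|)
    (hs : s.re = 0) (hs0 : s ≠ 0) (hU : MemLp U 2)
    (hT : ∀ φ, IsTest φ → ∫ x, U x * (diffExpr c φ x + s * φ x) = 0) (k : ℕ) :
    ∀ p : MvPolynomial (Fin 20) ℂ, p.IsHomogeneous k → ∀ G : smoothFn,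
      HasCompactSupport G.1 → ∫ x, U x * radPoly G.1 p x = 0 := by
  induction k using Nat.strong_induction_on with
  | _ k ih =>
  intro p hp G hG
  obtain ⟨F, hF, hFU⟩ := exists_radial_component hU hp
  have hQ0 : symbol k c ≠ 0 := by
    intro h
    have := hr k 0 (by simp [h])
    norm_num at this
  have hF0 : F =ᵐ[volume] 0 := by
    refine ae_eq_zero_of_forall_integral_eq_zero hF hQ0 (hr k) (comp_neg_X_symbol k c)
      (isSymm_symbol k c) hs hs0 fun G hG => ?_
    have h1 : HasCompactSupport (aeval D (symbol k c) G + s • E 10 G).1 :=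
      (hasCompactSupport_aeval _ hG).add ((hasCompactSupport_E 10 hG).comp_left (smul_zero s))
    rw [← hFU _ (hasCompactSupport_E (-5) h1), E_E_apply,
      show (-10 - k + -5 : ℂ) = -15 - k by ring]
    exact integral_radPoly_symbol_eq_zero hU hT ih hp hG
  have h2 := hFU _ (hasCompactSupport_E (10 + k) hG)
  rw [E_E_apply, show (-10 - k + (10 + k) : ℂ) = 0 by ring, E_zero] at h2
  refine h2.trans ?_
  refine integral_eq_zero_of_ae ?_
  filter_upwards [hF0] with t ht
  simp [ht]

theorem integral_radPoly_eq_zero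
    (h : ∀ k, ∀ p : MvPolynomial (Fin 20) ℂ, p.IsHomogeneous k → ∀ G : smoothFn,
      HasCompactSupport G.1 → ∫ x, U x * radPoly G.1 p x = 0) (hU : MemLp U 2)
    (p : MvPolynomial (Fin 20) ℂ) {G : smoothFn} (hG : HasCompactSupport G.1) :
    ∫ x, U x * radPoly G.1 p x = 0 := by
  have h1 : ∀ x, U x * radPoly G.1 p x = ∑ i ∈ Finset.range (p.totalDegree + 1),
      U x * radPoly G.1 (MvPolynomial.homogeneousComponent i p) x := by
    intro x
    rw [← Finset.mul_sum]
    congr 1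
    by_cases hx : x = 0
    · simp [radPoly, hx]
    · simp only [radPoly_of_ne hx]
      rw [← Finset.mul_sum, ← evalPoly_sum, MvPolynomial.sum_homogeneousComponent]
  simp only [h1]
  rw [integral_finsetSum _ fun i _ => (isTest_radPoly _ hG).integrable_mul_left hU]
  exact Finset.sum_eq_zero fun i _ =>
    h i _ (MvPolynomial.homogeneousComponent_isHomogeneous i p) G hG

theorem exists_evalPoly_near {K : Set E20} (hK : IsCompact K) {φ : E20 → ℂ} (hφ : Continuous φ)
    {ε : ℝ} (hε : 0 < ε) : ∃ p, ∀ x ∈ K, ‖φ x - evalPoly p x‖ ≤ ε := by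
  have : CompactSpace K := isCompact_iff_compactSpace.1 hK
  let X : Fin 20 → C(K, ℂ) := fun i => ⟨fun x => ((x : E20) i : ℂ), by fun_prop⟩
  have hX : ∀ p (x : K), MvPolynomial.aeval X p x = evalPoly p x := by
    intro p x
    rw [evalPoly]
    induction p using MvPolynomial.induction_on with
    | C a => simp
    | add p q hp hq => simp [hp, hq]
    | mul_X p i hp =>
      simp only [map_mul, MvPolynomial.aeval_X, ContinuousMap.mul_apply, hp, MvPolynomial.eval_X]
      rfl
  let A : StarSubalgebra ℂ C(K, ℂ) :=
    { (MvPolynomial.aeval X : MvPolynomial (Fin 20) ℂ →ₐ[ℂ] C(K, ℂ)).range with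
      star_mem' := by
        rintro _ ⟨p, rfl⟩
        refine ⟨MvPolynomial.map (starRingEnd ℂ) p, ?_⟩
        ext x
        change MvPolynomial.aeval X _ x = starRingEnd ℂ (MvPolynomial.aeval X p x)
        rw [hX, hX, evalPoly, evalPoly, MvPolynomial.map_eval]
        congr 2
        ext i
        simp }
  have hA : A.SeparatesPoints := by
    intro x y hxy
    obtain ⟨i, hi⟩ : ∃ i, (x : E20) i ≠ (y : E20) i := by
      by_contra! h
      exact hxy (Subtype.ext (PiLp.ext h))
    refine ⟨X i, ⟨X i, ⟨MvPolynomial.X i, MvPolynomial.aeval_X _ _⟩, rfl⟩, ?_⟩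
    exact fun h => hi (Complex.ofReal_injective h)
  have htop := ContinuousMap.starSubalgebra_topologicalClosure_eq_top_of_separatesPoints A hA
  let f : C(K, ℂ) := ⟨fun x => φ x, by fun_prop⟩
  have hf : f ∈ A.topologicalClosure := by
    rw [htop]
    exact StarSubalgebra.mem_top
  obtain ⟨g, ⟨p, hp⟩, hg⟩ := Metric.mem_closure_iff.1 hf ε hε
  refine ⟨p, fun x hx => ?_⟩
  have h1 := (ContinuousMap.dist_lt_iff hε).1 hg ⟨x, hx⟩
  rw [← hp, dist_eq_norm] at h1
  have h2 := hX p ⟨x, hx⟩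
  refine le_of_eq_of_le ?_ h1.le
  rw [← h2]
  rfl

/-- A smooth bump function on the line which equals one on `[-R, R]`. -/
def cutoffBump {R : ℝ} (hR : 0 < R) : ContDiffBump (0 : ℝ) := ⟨R, R + 1, hR, by linarith⟩

/-- A smooth cutoff function on the line which equals one on `[-R, R]`. -/
def lineCutoff {R : ℝ} (hR : 0 < R) : smoothFn :=
  ⟨fun t => (cutoffBump hR t : ℂ), mem_smoothFn.2
    (Complex.ofRealCLM.contDiff.comp (cutoffBump hR).contDiff)⟩

theorem hasCompactSupport_lineCutoff {R : ℝ} (hR : 0 < R) : HasCompactSupport (lineCutoff hR).1 :=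
  (cutoffBump hR).hasCompactSupport.comp_left Complex.ofReal_zero

theorem lineCutoff_eq_one {R : ℝ} (hR : 0 < R) {t : ℝ} (ht : |t| ≤ R) :
    (lineCutoff hR).1 t = 1 := by
  have : t ∈ Metric.closedBall (0 : ℝ) (cutoffBump hR).rIn := by
    simpa [cutoffBump] using ht
  exact (congrArg _ ((cutoffBump hR).one_of_mem_closedBall this)).trans Complex.ofReal_one

theorem IsTest.exists_bound {φ : E20 → ℂ} (hφ : IsTest φ) :
    ∃ R > 0, ∀ x ∈ tsupport φ, x ≠ 0 ∧ |Real.log ‖x‖| < R := by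
  have hK : IsCompact (tsupport φ) := hφ.compact
  have hx0 : ∀ x ∈ tsupport φ, x ≠ 0 := fun x hx h => hφ.zero_notMem (h ▸ hx)
  have hc : ContinuousOn (fun x : E20 => Real.log ‖x‖) (tsupport φ) :=
    continuous_norm.continuousOn.log fun x hx => norm_ne_zero_iff.2 (hx0 x hx)
  obtain ⟨C, hC⟩ := hK.exists_bound_of_continuousOn hc
  refine ⟨max C 0 + 1, by positivity, fun x hx => ⟨hx0 x hx, ?_⟩⟩
  have := hC x hx
  rw [Real.norm_eq_abs] at this
  linarith [le_max_left C 0]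

theorem ae_eq_zero_of_forall_radPoly (hU : MemLp U 2)
    (h : ∀ p (G : smoothFn), HasCompactSupport G.1 → ∫ x, U x * radPoly G.1 p x = 0) :
    U =ᵐ[volume] 0 := by
  refine ae_eq_zero_of_forall_isTest (hU.locallyIntegrable (by norm_num)) fun φ hφ => ?_
  obtain ⟨R, hR, hφR⟩ := hφ.exists_bound
  set G := lineCutoff hR
  have hG : HasCompactSupport G.1 := hasCompactSupport_lineCutoff hR
  have hi := (isTest_radPoly 1 hG).integrable_mul_left hU
  have hK := ((isTest_radPoly 1 hG).compact)
  set θ := radPoly G.1 1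
  have hθ : ∀ p x, radPoly G.1 p x = θ x * evalPoly p x := by
    intro p x
    by_cases hx : x = 0
    · simp [θ, radPoly, hx]
    · simp [θ, radPoly_of_ne hx, evalPoly]
  have hφθ : ∀ x, φ x = θ x * φ x := by
    intro x
    by_cases hx : x ∈ tsupport φ
    · have := hφR x hx
      rw [show θ x = 1 by
        simp only [θ, radPoly_of_ne this.1, G, lineCutoff_eq_one hR this.2.le, evalPoly]
        simp, one_mul]
    · rw [image_eq_zero_of_notMem_tsupport hx, mul_zero]
  have hb : ∀ ε > 0, ‖∫ x, U x * φ x‖ ≤ ε * ∫ x, ‖U x * θ x‖ := by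
    intro ε hε
    obtain ⟨p, hp⟩ := exists_evalPoly_near hK hφ.continuous hε
    have h0 := h p G hG
    have h1 : ∫ x, U x * φ x = ∫ x, U x * θ x * (φ x - evalPoly p x) := by
      rw [← sub_zero (∫ x, U x * φ x), ← h0, ← integral_sub (hφ.integrable_mul_left hU)
        ((isTest_radPoly p hG).integrable_mul_left hU)]
      refine integral_congr_ae (.of_forall fun x => ?_)
      simp only [hθ p]
      nth_rewrite 1 [hφθ x]
      ring
    rw [h1, ← integral_const_mul]
    refine norm_integral_le_of_norm_le (hi.norm.const_mul ε) (.of_forall fun x => ?_)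
    rw [norm_mul, mul_comm]
    by_cases hx : x ∈ tsupport θ
    · gcongr
      exact hp x hx
    · rw [image_eq_zero_of_notMem_tsupport hx]
      simp
  have h2 : Tendsto (fun ε : ℝ => ε * ∫ x, ‖U x * θ x‖) (𝓝[>] 0) (𝓝 0) := by
    have : Continuous fun ε : ℝ => ε * ∫ x, ‖U x * θ x‖ := by fun_prop
    simpa using (this.tendsto 0).mono_left nhdsWithin_le_nhds
  refine norm_le_zero_iff.1 (ge_of_tendsto h2 ?_)
  filter_upwards [self_mem_nhdsWithin] with ε hε using hb ε hε

theorem essentiallySelfAdjoint_T5op_of_roots (hr : ∀ k w, (symbol k c).IsRoot w → 5 ≤ |w.re|) :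
    EssentiallySelfAdjoint (T5op c) :=
  essentiallySelfAdjoint_T5op_of_forall fun _ hs hs0 _ hU hT =>
    ae_eq_zero_of_forall_radPoly hU fun p _ hG => integral_radPoly_eq_zero
      (integral_radPoly_eq_zero_of_isHomogeneous hr hs hs0 hU hT) hU p hG

end Completeness

section RadialSolutions
open smoothFn

theorem radPoly_E_neg_ten {x : E20} (hx : x ≠ 0) (h : smoothFn) :
    radPoly (E (-10) h).1 1 x = ((‖x‖ : ℂ) ^ 10)⁻¹ * h.1 (Real.log ‖x‖) := by
  have h1 : Complex.exp (-10 * (Real.log ‖x‖ : ℝ)) = ((‖x‖ : ℂ) ^ 10)⁻¹ := by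
    rw [← exp_log_norm hx 10, ← Complex.exp_neg]
    push_cast
    ring_nf
  rw [radPoly_of_ne hx, E_apply, h1]
  simp [evalPoly]

theorem memLp_radPoly {h : smoothFn} (hh : MemLp h.1 2) : MemLp (radPoly (E (-10) h).1 1) 2 := by
  have h1 := hh.comp_measurePreserving measurePreserving_log_norm
  rw [memLp_two_iff_integrable_sq_norm h1.1, integrable_logMeasure] at h1
  rw [memLp_two_iff_integrable_sq_norm (measurable_radPoly _ _).aestronglyMeasurable]
  refine h1.congr ?_
  filter_upwards [Measure.ae_ne volume (0 : E20)] with x hx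
  rw [radPoly_E_neg_ten hx, norm_mul, norm_inv, norm_pow, Complex.norm_real, norm_norm, mul_pow,
    inv_pow, ← pow_mul, smul_eq_mul]
  rfl

theorem integral_radPoly_mul_conj (h g : smoothFn) :
    ∫ x, radPoly (E (-10) h).1 1 x * starRingEnd ℂ (radPoly (E (-10) g).1 1 x) =
      sphereArea.toReal * ∫ t, h.1 t * starRingEnd ℂ (g.1 t) := by
  have hs : sphereArea.toReal ≠ 0 := (ENNReal.toReal_pos sphereArea_ne_zero sphereArea_ne_top).ne'
  have hc : Continuous fun t => h.1 t * starRingEnd ℂ (g.1 t) :=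
    (smoothFn.continuous h).mul (Complex.continuous_conj.comp (smoothFn.continuous g))
  rw [← measurePreserving_log_norm.map_eq, integral_map measurePreserving_log_norm.aemeasurable
    hc.aestronglyMeasurable, integral_logMeasure, Complex.real_smul, ← mul_assoc,
    Complex.ofReal_inv, mul_inv_cancel₀ (by exact_mod_cast hs), one_mul]
  refine integral_congr_ae ?_
  filter_upwards [Measure.ae_ne volume (0 : E20)] with x hx
  rw [radPoly_E_neg_ten hx, radPoly_E_neg_ten hx, Complex.real_smul]
  simp only [map_mul, map_inv₀, map_pow, Complex.conj_ofReal]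
  push_cast
  ring

/-- The pointwise product of smooth functions on the line. -/
def mulFn (f g : smoothFn) : smoothFn :=
  ⟨fun t => f.1 t * g.1 t, mem_smoothFn.2 ((contDiff f).mul (contDiff g))⟩

theorem integral_radPoly_mul_diffExpr (f : smoothFn) (c : ℝ) {φ : E20 → ℂ} (hφ : IsTest φ) :
    ∫ x, radPoly (E (-5) f).1 1 x * diffExpr c φ x =
      ∫ x, radPoly (E (-15) (aeval D (symbol 0 c) f)).1 1 x * φ x := by
  obtain ⟨R₁, hR₁, h₁⟩ := hφ.exists_bound
  obtain ⟨R₂, hR₂, h₂⟩ := (hφ.diffExpr c).exists_bound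
  have hR : 0 < max R₁ R₂ := lt_max_of_lt_left hR₁
  set F := mulFn (lineCutoff hR) f
  have hF : HasCompactSupport F.1 := (hasCompactSupport_lineCutoff hR).mul_right
  have hFf : ∀ t, |t| < max R₁ R₂ → F.1 =ᶠ[𝓝 t] f.1 := by
    intro t ht
    filter_upwards [continuous_abs.continuousAt.eventually_lt_const ht] with r hr
    change (lineCutoff hR).1 r * f.1 r = f.1 r
    rw [lineCutoff_eq_one hR hr.le, one_mul]
  have key := integral_diffExpr_mul (isTest_radPoly (G := E (-5) F) 1 (hasCompactSupport_E (-5) hF)) hφ c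
  rw [diffExpr_radPoly_one hF] at key
  trans ∫ x, radPoly (E (-5) F).1 1 x * diffExpr c φ x
  · refine integral_congr_ae (.of_forall fun x => ?_)
    by_cases hx : x ∈ tsupport (diffExpr c φ)
    · obtain ⟨hx0, hxR⟩ := h₂ x hx
      simp only [radPoly_of_ne hx0, E_apply, (hFf _ (lt_max_of_lt_right hxR)).self_of_nhds]
    · simp [image_eq_zero_of_notMem_tsupport hx]
  · rw [← key]
    refine integral_congr_ae (.of_forall fun x => ?_)
    by_cases hx : x ∈ tsupport φ
    · obtain ⟨hx0, hxR⟩ := h₁ x hx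
      simp only [radPoly_of_ne hx0, E_apply,
        (aeval_congr (symbol 0 c) (hFf _ (lt_max_of_lt_left hxR))).self_of_nhds]
    · simp [image_eq_zero_of_notMem_tsupport hx]

theorem EssentiallySelfAdjoint.integral_symbol_mul_conj {c : ℝ}
    (h : EssentiallySelfAdjoint (T5op c)) {f g : smoothFn}
    (hf : MemLp (E 5 f).1 2) (hf' : MemLp (E (-5) (aeval D (symbol 0 c) f)).1 2)
    (hg : MemLp (E 5 g).1 2) (hg' : MemLp (E (-5) (aeval D (symbol 0 c) g)).1 2) :
    ∫ t, (aeval D (symbol 0 c) f).1 t * starRingEnd ℂ (g.1 t) =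
      ∫ t, f.1 t * starRingEnd ℂ ((aeval D (symbol 0 c) g).1 t) := by
  have e1 : ∀ h, E (-5) h = E (-10) (E 5 h) := fun h => by
    rw [E_E_apply]
    norm_num
  have e2 : ∀ h, E (-15) h = E (-10) (E (-5) h) := fun h => by
    rw [E_E_apply]
    norm_num
  have e3 : ∀ (t : ℝ), Complex.exp (5 * t) * starRingEnd ℂ (Complex.exp (-5 * t)) = 1 := by
    intro t
    rw [← Complex.exp_conj, ← Complex.exp_add]
    simp [map_ofNat]
  have e4 : ∀ (t : ℝ), Complex.exp (-5 * t) * starRingEnd ℂ (Complex.exp (5 * t)) = 1 := by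
    intro t
    rw [← Complex.exp_conj, ← Complex.exp_add]
    simp [map_ofNat]
  have key := h.integral_eq (u := radPoly (E (-5) f).1 1) (v := radPoly (E (-5) g).1 1)
    (by rw [e1]; exact memLp_radPoly hf) (by rw [e2]; exact memLp_radPoly hf')
    (by rw [e1]; exact memLp_radPoly hg) (by rw [e2]; exact memLp_radPoly hg')
    (fun φ hφ => integral_radPoly_mul_diffExpr f c hφ)
    (fun φ hφ => integral_radPoly_mul_diffExpr g c hφ)
  rw [e1, e1, e2, e2, integral_radPoly_mul_conj, integral_radPoly_mul_conj] at key
  have hs : (sphereArea.toReal : ℂ) ≠ 0 := by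
    exact_mod_cast (ENNReal.toReal_pos sphereArea_ne_zero sphereArea_ne_top).ne'
  refine Eq.trans ?_ ((mul_left_cancel₀ hs key).trans ?_)
  · refine integral_congr_ae (.of_forall fun t => ?_)
    simp only [E_apply, map_mul]
    linear_combination -((aeval D (symbol 0 c) f).1 t * starRingEnd ℂ (g.1 t)) * e4 t
  · refine integral_congr_ae (.of_forall fun t => ?_)
    simp only [E_apply, map_mul]
    linear_combination (f.1 t * starRingEnd ℂ ((aeval D (symbol 0 c) g).1 t)) * e3 t

end RadialSolutions

section Defect
open smoothFn

/-- A smooth cutoff function which equals one on `(-∞, a - 1]` and vanishes on `[a, ∞)`. -/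
def cut (a : ℝ) : smoothFn :=
  ⟨fun t => (Real.smoothTransition (a - t) : ℂ), mem_smoothFn.2
    (Complex.ofRealCLM.contDiff.comp (Real.smoothTransition.contDiff.comp
      (contDiff_const.sub contDiff_id)))⟩

/-- The identity function. -/
def idFn : smoothFn := ⟨fun t => (t : ℂ), mem_smoothFn.2 Complex.ofRealCLM.contDiff⟩

theorem cut_eq_one {a t : ℝ} (h : t ≤ a - 1) : (cut a).1 t = 1 := by
  simp [cut, Real.smoothTransition.one_of_one_le (show 1 ≤ a - t by linarith)]

theorem cut_eq_zero {a t : ℝ} (h : a ≤ t) : (cut a).1 t = 0 := by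
  simp [cut, Real.smoothTransition.zero_of_nonpos (show a - t ≤ 0 by linarith)]

theorem norm_cut_le (a t : ℝ) : ‖(cut a).1 t‖ ≤ 1 := by
  simp only [cut, Complex.norm_real, Real.norm_eq_abs]
  rw [abs_of_nonneg (Real.smoothTransition.nonneg _)]
  exact Real.smoothTransition.le_one _

theorem aeval_E_oneFn (P : Polynomial ℂ) (w : ℂ) :
    aeval D P (E w oneFn) = P.eval w • E w oneFn := by
  refine Module.End.aeval_apply_of_hasEigenvector ⟨Module.End.mem_eigenspace_iff.2 ?_, ?_⟩
  · have h := LinearMap.congr_fun (D_mul_E w) oneFn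
    rw [Module.End.mul_apply] at h
    rw [h]
    ext t
    simp [oneFn, mul_comm]
  · intro h
    have := congrFun (congrArg Subtype.val h) 0
    simp [oneFn] at this

theorem aeval_oneFn (P : Polynomial ℂ) : aeval D P oneFn = P.eval 0 • oneFn := by
  simpa [E_zero] using aeval_E_oneFn P 0

theorem mulFn_cut_eventuallyEq_of_lt {a t : ℝ} (h : t < a - 1) (f : smoothFn) :
    (mulFn (cut a) f).1 =ᶠ[𝓝 t] f.1 := by
  filter_upwards [eventually_lt_nhds h] with r hr
  change (cut a).1 r * f.1 r = f.1 r
  rw [cut_eq_one hr.le, one_mul]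

theorem mulFn_cut_eventuallyEq_of_gt {a t : ℝ} (h : a < t) (f : smoothFn) :
    (mulFn (cut a) f).1 =ᶠ[𝓝 t] (0 : smoothFn).1 := by
  filter_upwards [eventually_gt_nhds h] with r hr
  change (cut a).1 r * f.1 r = 0
  rw [cut_eq_zero hr.le, zero_mul]

theorem aeval_mulFn_cut_of_lt (P : Polynomial ℂ) {a t : ℝ} (h : t < a - 1) (f : smoothFn) :
    (aeval D P (mulFn (cut a) f)).1 t = (aeval D P f).1 t :=
  (aeval_congr P (mulFn_cut_eventuallyEq_of_lt h f)).self_of_nhds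

theorem aeval_mulFn_cut_of_gt (P : Polynomial ℂ) {a t : ℝ} (h : a < t) (f : smoothFn) :
    (aeval D P (mulFn (cut a) f)).1 t = 0 := by
  rw [(aeval_congr P (mulFn_cut_eventuallyEq_of_gt h f)).self_of_nhds, map_zero]
  rfl

theorem mulFn_oneFn (f : smoothFn) : mulFn f oneFn = f := by
  ext t
  exact mul_one _

theorem mulFn_E (z : ℂ) (f g : smoothFn) : mulFn f (E z g) = E z (mulFn f g) := by
  ext t
  simp only [mulFn, E_apply]
  ring

theorem aeval_cut_of_lt (P : Polynomial ℂ) {a t : ℝ} (h : t < a - 1) :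
    (aeval D P (cut a)).1 t = P.eval 0 := by
  have := aeval_mulFn_cut_of_lt P h oneFn
  rw [mulFn_oneFn, aeval_oneFn] at this
  simpa [oneFn] using this

theorem aeval_cut_of_gt (P : Polynomial ℂ) {a t : ℝ} (h : a < t) :
    (aeval D P (cut a)).1 t = 0 := by
  simpa [mulFn_oneFn] using aeval_mulFn_cut_of_gt P h oneFn

theorem hasCompactSupport_aeval_mulFn_cut {P : Polynomial ℂ} {f : smoothFn}
    (h : aeval D P f = 0) (a : ℝ) : HasCompactSupport (aeval D P (mulFn (cut a) f)).1 := by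
  refine HasCompactSupport.intro (isCompact_Icc (a := a - 1) (b := a)) fun t ht => ?_
  rw [Set.mem_Icc, not_and_or, not_le, not_le] at ht
  rcases ht with ht | ht
  · rw [aeval_mulFn_cut_of_lt P ht, h]
    rfl
  · exact aeval_mulFn_cut_of_gt P ht f

theorem memLp_E_aeval_mulFn_cut {P : Polynomial ℂ} {f : smoothFn} (h : aeval D P f = 0) (a : ℝ)
    (z : ℂ) : MemLp (E z (aeval D P (mulFn (cut a) f))).1 2 :=
  (smoothFn.continuous _).memLp_of_hasCompactSupport
    (hasCompactSupport_E z (hasCompactSupport_aeval_mulFn_cut h a))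

theorem memLp_of_norm_le_exp {h : smoothFn} {a C δ : ℝ} (hδ : 0 < δ) (h0 : ∀ t, a < t → h.1 t = 0)
    (hb : ∀ t ≤ a, ‖h.1 t‖ ≤ C * Real.exp (δ * t)) : MemLp h.1 2 := by
  rw [memLp_two_iff_integrable_sq_norm (smoothFn.continuous h).aestronglyMeasurable,
    ← integrableOn_univ, ← Set.Iic_union_Ioi (a := a), integrableOn_union]
  constructor
  · refine ((integrableOn_exp_mul_Iic (show 0 < 2 * δ by positivity) a).const_mul (C ^ 2)).mono'
      ((smoothFn.continuous h).norm.pow 2).aestronglyMeasurable ?_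
    filter_upwards [ae_restrict_mem measurableSet_Iic] with t ht
    rw [Real.norm_of_nonneg (by positivity)]
    calc _ ≤ (C * Real.exp (δ * t)) ^ 2 := by
          gcongr
          exact hb t ht
      _ = _ := by
          rw [mul_pow, ← Real.exp_nat_mul]
          push_cast
          ring_nf
  · refine integrableOn_zero.congr_fun (fun t ht => ?_) measurableSet_Ioi
    rw [h0 t ht]
    simp

theorem memLp_E_cut {z : ℂ} (hz : 0 < z.re) (a : ℝ) : MemLp (E z (cut a)).1 2 := by
  refine memLp_of_norm_le_exp (a := a) (C := 1) hz (fun t ht => ?_) (fun t _ => ?_)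
  · rw [E_apply, cut_eq_zero ht.le, mul_zero]
  · rw [E_apply, norm_mul, norm_cexp_mul_ofReal, mul_comm]
    gcongr
    exact norm_cut_le a t

theorem memLp_E_mulFn_cut_idFn : MemLp (E 5 (mulFn (cut 2) idFn)).1 2 := by
  refine memLp_of_norm_le_exp (a := 2) (C := Real.exp 4) (show (0 : ℝ) < 4 by norm_num)
    (fun t ht => ?_) (fun t ht => ?_)
  · rw [E_apply]
    simp [mulFn, cut_eq_zero ht.le]
  · have h1 := norm_cut_le 2 t
    rw [E_apply, norm_mul, norm_cexp_mul_ofReal]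
    change Real.exp _ * ‖(cut 2).1 t * (t : ℂ)‖ ≤ _
    rw [norm_mul, Complex.norm_real, Real.norm_eq_abs]
    have h2 : |t| ≤ Real.exp |t| := by linarith [Real.add_one_le_exp |t|]
    calc _ ≤ Real.exp ((5 : ℂ).re * t) * (1 * Real.exp |t|) := by gcongr
      _ = Real.exp (5 * t + |t|) := by
          rw [one_mul, ← Real.exp_add]
          norm_num
      _ ≤ Real.exp (4 + 4 * t) := by
          rw [Real.exp_le_exp]
          cases abs_cases t <;> linarith
      _ = _ := Real.exp_add _ _

theorem integral_D_eq {h : smoothFn} {m : ℂ} (hD : HasCompactSupport (D h).1)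
    (hm : Tendsto h.1 atBot (𝓝 m)) (h0 : Tendsto h.1 atTop (𝓝 0)) : ∫ t, (D h).1 t = -m := by
  rw [integral_of_hasDerivAt_of_tendsto (hasDerivAt h)
    ((smoothFn.continuous _).integrable_of_hasCompactSupport hD) hm h0, zero_sub]

theorem tendsto_aeval_cut_atBot (P : Polynomial ℂ) (a : ℝ) :
    Tendsto (aeval D P (cut a)).1 atBot (𝓝 (P.eval 0)) := by
  refine tendsto_const_nhds.congr' ?_
  filter_upwards [eventually_lt_atBot (a - 1)] with t ht
  exact (aeval_cut_of_lt P ht).symm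

theorem tendsto_aeval_cut_atTop (P : Polynomial ℂ) (a : ℝ) :
    Tendsto (aeval D P (cut a)).1 atTop (𝓝 0) := by
  refine tendsto_const_nhds.congr' ?_
  filter_upwards [eventually_gt_atTop a] with t ht
  exact (aeval_cut_of_gt P ht).symm

/-- The boundary form vanishes on functions whose supports are cut off at different places. -/
theorem EssentiallySelfAdjoint.integral_cut_eq_zero {c : ℝ} (h : EssentiallySelfAdjoint (T5op c))
    {f g : smoothFn} (hf : aeval D (symbol 0 c) f = 0) (hg : aeval D (symbol 0 c) g = 0)
    (hf2 : MemLp (E 5 (mulFn (cut 0) f)).1 2) (hg2 : MemLp (E 5 (mulFn (cut 2) g)).1 2) :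
    ∫ t, (aeval D (symbol 0 c) (mulFn (cut 0) f)).1 t * starRingEnd ℂ (g.1 t) = 0 := by
  have key := h.integral_symbol_mul_conj hf2 (memLp_E_aeval_mulFn_cut hf 0 (-5)) hg2
    (memLp_E_aeval_mulFn_cut hg 2 (-5))
  trans ∫ t, (aeval D (symbol 0 c) (mulFn (cut 0) f)).1 t * starRingEnd ℂ ((mulFn (cut 2) g).1 t)
  · refine integral_congr_ae (.of_forall fun t => ?_)
    rcases le_or_gt t 1 with ht | ht
    · simp only [mulFn, cut_eq_one (show t ≤ 2 - 1 by linarith), one_mul]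
    · simp only
      rw [aeval_mulFn_cut_of_gt _ (by linarith), zero_mul, zero_mul]
  · rw [key]
    refine integral_eq_zero_of_ae (.of_forall fun t => ?_)
    rcases lt_or_ge t 1 with ht | ht
    · simp only
      rw [aeval_mulFn_cut_of_lt _ (by linarith), hg]
      simp
    · simp [mulFn, cut_eq_zero (show 0 ≤ t by linarith)]

theorem eval_symbol_neg_conj (k : ℕ) (c : ℝ) (w : ℂ) :
    (symbol k c).eval (-starRingEnd ℂ w) = starRingEnd ℂ ((symbol k c).eval w) := by
  simp [symbol, symbolProd, Polynomial.eval_prod, map_prod, map_ofNat]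

theorem not_essentiallySelfAdjoint_of_simple_root {c : ℝ} {w : ℂ} (hw : |w.re| < 5)
    (hr : (symbol 0 c).IsRoot w) (hd : (symbol 0 c).derivative.eval w ≠ 0) :
    ¬EssentiallySelfAdjoint (T5op c) := by
  intro h
  rw [abs_lt] at hw
  obtain ⟨R, hR⟩ := Polynomial.dvd_iff_isRoot.2 hr
  have hd' : R.eval w ≠ 0 := by
    rw [hR] at hd
    simpa [Polynomial.derivative_mul] using hd
  have hf : aeval D (symbol 0 c) (E w oneFn) = 0 := by
    rw [aeval_E_oneFn, hr.eq_zero, zero_smul]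
  have hg : aeval D (symbol 0 c) (E (-starRingEnd ℂ w) oneFn) = 0 := by
    rw [aeval_E_oneFn, eval_symbol_neg_conj, hr.eq_zero, map_zero, zero_smul]
  have key := h.integral_cut_eq_zero hf hg
    (by
      rw [mulFn_E, mulFn_oneFn, E_E_apply]
      exact memLp_E_cut (by simp; linarith) 0)
    (by
      rw [mulFn_E, mulFn_oneFn, E_E_apply]
      exact memLp_E_cut (by simp; linarith) 2)
  set P := R.comp (Polynomial.X + Polynomial.C w)
  have hP : (symbol 0 c).comp (Polynomial.X + Polynomial.C w) = Polynomial.X * P := by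
    rw [hR]
    simp [P]
  have h1 : aeval D (symbol 0 c) (mulFn (cut 0) (E w oneFn)) = E w (D (aeval D P (cut 0))) := by
    have := LinearMap.congr_fun (aeval_mul_E w (symbol 0 c)) (cut 0)
    rw [Module.End.mul_apply, Module.End.mul_apply, hP, aeval_mul_apply, Polynomial.aeval_X] at this
    rw [mulFn_E, mulFn_oneFn, this]
  have hc := hasCompactSupport_aeval_mulFn_cut hf 0
  rw [h1] at hc key
  have hc' := hasCompactSupport_E (-w) hc
  rw [E_E_apply, neg_add_cancel, E_zero] at hc'
  have h2 := integral_D_eq hc' (tendsto_aeval_cut_atBot P 0) (tendsto_aeval_cut_atTop P 0)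
  have h3 : ∀ t, (E w (D (aeval D P (cut 0)))).1 t *
      starRingEnd ℂ ((E (-starRingEnd ℂ w) oneFn).1 t) = (D (aeval D P (cut 0))).1 t := by
    intro t
    rw [E_apply, E_apply, map_mul, ← Complex.exp_conj, mul_mul_mul_comm, ← Complex.exp_add]
    simp [oneFn]
  simp only [h3] at key
  rw [h2] at key
  simp [P] at key
  exact hd' key

theorem not_essentiallySelfAdjoint_of_double_root {c : ℝ} {R : Polynomial ℂ}
    (hR : symbol 0 c = Polynomial.X ^ 2 * R) (hR0 : R.eval 0 ≠ 0) :
    ¬EssentiallySelfAdjoint (T5op c) := by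
  intro h
  have hf : aeval D (symbol 0 c) oneFn = 0 := by
    rw [aeval_oneFn, hR]
    simp
  have hDD : D (D idFn) = 0 := by
    have h1 : D idFn = oneFn := by
      ext t
      exact (Complex.ofRealCLM.hasDerivAt (x := t)).deriv
    rw [h1]
    ext t
    simp [oneFn]
  have hg : aeval D (symbol 0 c) idFn = 0 := by
    rw [hR, mul_comm, pow_two, aeval_mul_apply, aeval_mul_apply, Polynomial.aeval_X, hDD, map_zero]
  have key := h.integral_cut_eq_zero hf hg
    (by
      rw [mulFn_oneFn]
      exact memLp_E_cut (by norm_num) 0) memLp_E_mulFn_cut_idFn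
  set u := aeval D R (cut 0)
  have h1 : aeval D (symbol 0 c) (mulFn (cut 0) oneFn) = D (D u) := by
    rw [mulFn_oneFn, hR, pow_two, aeval_mul_apply, aeval_mul_apply, Polynomial.aeval_X]
  have hc := hasCompactSupport_aeval_mulFn_cut hf 0
  rw [h1] at hc key
  have h2 : D (mulFn idFn (D u) - u) = mulFn idFn (D (D u)) := by
    ext t
    have h3 := (((Complex.ofRealCLM.hasDerivAt (x := t)).mul (hasDerivAt (D u) t)).sub
      (hasDerivAt u t)).deriv
    refine h3.trans ?_
    simp [mulFn, idFn]
  have hu : D u = aeval D (Polynomial.X * R) (cut 0) := by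
    rw [aeval_mul_apply, Polynomial.aeval_X]
  have h4 := integral_D_eq (h := mulFn idFn (D u) - u) (m := -R.eval 0)
    (by
      rw [h2]
      exact hc.mul_left)
    (by
      refine tendsto_const_nhds.congr' ?_
      filter_upwards [eventually_lt_atBot (-1)] with t ht
      change _ = (t : ℂ) * (D u).1 t - u.1 t
      rw [hu, aeval_cut_of_lt _ (by linarith), aeval_cut_of_lt _ (by linarith)]
      simp)
    (by
      refine tendsto_const_nhds.congr' ?_
      filter_upwards [eventually_gt_atTop 0] with t ht
      change _ = (t : ℂ) * (D u).1 t - u.1 t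
      rw [hu, aeval_cut_of_gt _ ht, aeval_cut_of_gt _ ht]
      simp)
  rw [h2, neg_neg] at h4
  refine hR0 (h4.symm.trans (Eq.trans ?_ key))
  refine integral_congr_ae (.of_forall fun t => ?_)
  simp only [mulFn, idFn, Complex.conj_ofReal]
  ring

end Defect

theorem eval_symbol_zero (c : ℝ) (w : ℂ) :
    (symbol 0 c).eval w = (25 - w ^ 2) * (49 - w ^ 2) * (81 - w ^ 2) * (121 - w ^ 2) *
      (169 - w ^ 2) + c := by
  simp only [symbol, symbolProd, Finset.prod_range_succ, Finset.prod_range_zero,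
    Polynomial.eval_add, Polynomial.eval_mul, Polynomial.eval_sub, Polynomial.eval_pow,
    Polynomial.eval_X, Polynomial.eval_C, Polynomial.eval_one]
  norm_num

theorem inv_sub_sq_re_pos {w : ℂ} (hw : |w.re| < 5) {a : ℝ} (ha : 25 ≤ a) :
    0 < ((a - w ^ 2 : ℂ)⁻¹).re := by
  have h : 0 < (a - w ^ 2 : ℂ).re := by
    have := sq_lt_sq' (abs_lt.1 hw).1 (abs_lt.1 hw).2
    simp [pow_two] at *
    nlinarith [mul_self_nonneg w.im]
  rw [Complex.inv_re]
  exact div_pos h (Complex.normSq_pos.2 fun h0 => by simp [h0] at h)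

theorem derivative_symbol_zero_eval_ne_zero {c : ℝ} {w : ℂ} (hw : |w.re| < 5) (h0 : w ≠ 0) :
    (symbol 0 c).derivative.eval w ≠ 0 := by
  have hpos : ∀ {a : ℝ}, 25 ≤ a → 0 < ((a - w ^ 2 : ℂ)⁻¹).re := inv_sub_sq_re_pos hw
  have hne : ∀ {a : ℝ}, 25 ≤ a → (a - w ^ 2 : ℂ) ≠ 0 := fun ha h => by
    have := hpos ha
    rw [h] at this
    simp at this
  have e1 := hne (a := 25) (by norm_num)
  have e2 := hne (a := 49) (by norm_num)
  have e3 := hne (a := 81) (by norm_num)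
  have e4 := hne (a := 121) (by norm_num)
  have e5 := hne (a := 169) (by norm_num)
  have p1 := hpos (a := 25) (by norm_num)
  have p2 := hpos (a := 49) (by norm_num)
  have p3 := hpos (a := 81) (by norm_num)
  have p4 := hpos (a := 121) (by norm_num)
  have p5 := hpos (a := 169) (by norm_num)
  push_cast at e1 e2 e3 e4 e5 p1 p2 p3 p4 p5
  have hd : (symbol 0 c).derivative.eval w = -2 * w * ((25 - w ^ 2) * (49 - w ^ 2) *
      (81 - w ^ 2) * (121 - w ^ 2) * (169 - w ^ 2)) * ((25 - w ^ 2)⁻¹ + (49 - w ^ 2)⁻¹ +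
      (81 - w ^ 2)⁻¹ + (121 - w ^ 2)⁻¹ + (169 - w ^ 2)⁻¹) := by
    simp only [symbol, symbolProd, Finset.prod_range_succ, Finset.prod_range_zero,
      Polynomial.derivative_add, Polynomial.derivative_mul, Polynomial.derivative_sub,
      Polynomial.derivative_C, Polynomial.derivative_X_pow, Polynomial.derivative_one,
      Polynomial.eval_add, Polynomial.eval_mul, Polynomial.eval_sub, Polynomial.eval_pow,
      Polynomial.eval_X, Polynomial.eval_C, Polynomial.eval_one, Polynomial.eval_zero]
    norm_num
    field_simp
    ring
  rw [hd]
  refine mul_ne_zero (mul_ne_zero (mul_ne_zero (by norm_num) h0) ?_) fun h => ?_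
  · simp only [mul_ne_zero_iff]
    exact ⟨⟨⟨⟨e1, e2⟩, e3⟩, e4⟩, e5⟩
  · have := congrArg Complex.re h
    simp only [Complex.add_re, Complex.zero_re] at this
    linarith

theorem not_essentiallySelfAdjoint_of_root {c : ℝ} {w : ℂ} (hw : |w.re| < 5)
    (hr : (symbol 0 c).IsRoot w) : ¬EssentiallySelfAdjoint (T5op c) := by
  rcases eq_or_ne w 0 with rfl | h0
  · have hc : (c : ℂ) = -(25 * 49 * 81 * 121 * 169) := by
      rw [Polynomial.IsRoot.def, eval_symbol_zero] at hr
      linear_combination hr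
    refine not_essentiallySelfAdjoint_of_double_root
      (R := Polynomial.C (-(49 * 81 * 121 * 169 + 25 * 81 * 121 * 169 + 25 * 49 * 121 * 169 +
        25 * 49 * 81 * 169 + 25 * 49 * 81 * 121))
        + Polynomial.C (25 * 49 * 81 + 25 * 49 * 121 + 25 * 49 * 169 + 25 * 81 * 121 +
          25 * 81 * 169 + 25 * 121 * 169 + 49 * 81 * 121 + 49 * 81 * 169 + 49 * 121 * 169 +
          81 * 121 * 169) * Polynomial.X ^ 2
        - Polynomial.C (25 * (49 + 81 + 121 + 169) + 49 * (81 + 121 + 169) + 81 * (121 + 169) +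
          121 * 169) * Polynomial.X ^ 4
        + Polynomial.C (25 + 49 + 81 + 121 + 169) * Polynomial.X ^ 6 - Polynomial.X ^ 8) ?_ ?_
    · refine Polynomial.funext fun z => ?_
      rw [eval_symbol_zero, hc]
      simp only [Polynomial.eval_add, Polynomial.eval_mul, Polynomial.eval_sub,
        Polynomial.eval_pow, Polynomial.eval_X, Polynomial.eval_C]
      ring
    · simp only [Polynomial.eval_add, Polynomial.eval_mul, Polynomial.eval_sub,
        Polynomial.eval_pow, Polynomial.eval_X, Polynomial.eval_C]
      norm_num
  · exact not_essentiallySelfAdjoint_of_simple_root hw hr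
      (derivative_symbol_zero_eval_ne_zero hw h0)

/-- The real part of `∏ (a i - v * I)`, as a function of the `a i` and of `v²`. -/
def reProd (a b c d e v : ℝ) : ℝ :=
  a * b * c * d * e - v * (a * b * c + a * b * d + a * b * e + a * c * d + a * c * e + a * d * e +
    b * c * d + b * c * e + b * d * e + c * d * e) + v ^ 2 * (a + b + c + d + e)

/-- The imaginary part of `∏ (a i - v * I)` divided by `-v`, as a function of the `a i`
and of `v²`. -/
def imProd (a b c d e v : ℝ) : ℝ :=
  b * c * d * e + a * c * d * e + a * b * d * e + a * b * c * e + a * b * c * d -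
    v * (a * b + a * c + a * d + a * e + b * c + b * d + b * e + c * d + c * e + d * e) + v ^ 2

/-- The factor of `-2xy` in the imaginary part of `symbolProd k` at `x + iy`, in terms of
`p = x²` and `q = y²`. -/
def stripIm (k p q : ℝ) : ℝ :=
  imProd ((k + 5) ^ 2 - p + q) ((k + 7) ^ 2 - p + q) ((k + 9) ^ 2 - p + q)
    ((k + 11) ^ 2 - p + q) ((k + 13) ^ 2 - p + q) (4 * p * q)

/-- The real part of `symbolProd k` at `x + iy`, in terms of `p = x²` and `q = y²`. -/
def stripRe (k p q : ℝ) : ℝ :=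
  reProd ((k + 5) ^ 2 - p + q) ((k + 7) ^ 2 - p + q) ((k + 9) ^ 2 - p + q)
    ((k + 11) ^ 2 - p + q) ((k + 13) ^ 2 - p + q) (4 * p * q)

theorem prod_sub_mul_I (a b c d e v : ℝ) :
    ((a - v * Complex.I) * (b - v * Complex.I) * (c - v * Complex.I) * (d - v * Complex.I) *
      (e - v * Complex.I) : ℂ) =
    (reProd a b c d e (v ^ 2) : ℂ) - (v * imProd a b c d e (v ^ 2) : ℝ) * Complex.I := by
  apply Complex.ext
  · simp [reProd, -Complex.ofReal_pow]
    ring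
  · simp [imProd, -Complex.ofReal_pow]
    ring

theorem eval_symbol (k : ℕ) (c : ℝ) (w : ℂ) :
    (symbol k c).eval w =
      ((stripRe k (w.re ^ 2) (w.im ^ 2) + c : ℝ) : ℂ) -
        ((2 * w.re * w.im * stripIm k (w.re ^ 2) (w.im ^ 2) : ℝ) : ℂ) * Complex.I := by
  have hw : w ^ 2 = ((w.re ^ 2 - w.im ^ 2 : ℝ) : ℂ) + (2 * w.re * w.im : ℝ) * Complex.I := by
    apply Complex.ext
    · simp [pow_two]
    · simp [pow_two]
      ring
  have h := prod_sub_mul_I (((k : ℝ) + 5) ^ 2 - w.re ^ 2 + w.im ^ 2)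
    (((k : ℝ) + 7) ^ 2 - w.re ^ 2 + w.im ^ 2) (((k : ℝ) + 9) ^ 2 - w.re ^ 2 + w.im ^ 2)
    (((k : ℝ) + 11) ^ 2 - w.re ^ 2 + w.im ^ 2) (((k : ℝ) + 13) ^ 2 - w.re ^ 2 + w.im ^ 2)
    (2 * w.re * w.im)
  rw [show (2 * w.re * w.im) ^ 2 = 4 * w.re ^ 2 * w.im ^ 2 by ring] at h
  change _ = (stripRe k (w.re ^ 2) (w.im ^ 2) : ℂ) -
    ((2 * w.re * w.im * stripIm k (w.re ^ 2) (w.im ^ 2) : ℝ) : ℂ) * Complex.I at h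
  rw [Complex.ofReal_add, add_sub_right_comm, ← h]
  simp only [symbol, symbolProd, Finset.prod_range_succ, Finset.prod_range_zero,
    Polynomial.eval_add, Polynomial.eval_mul, Polynomial.eval_sub, Polynomial.eval_pow,
    Polynomial.eval_X, Polynomial.eval_C, Polynomial.eval_one, hw]
  push_cast
  ring

theorem isRoot_symbol_iff {k : ℕ} {c : ℝ} {w : ℂ} :
    (symbol k c).IsRoot w ↔ stripRe k (w.re ^ 2) (w.im ^ 2) = -c ∧
      w.re * w.im * stripIm k (w.re ^ 2) (w.im ^ 2) = 0 := by
  rw [Polynomial.IsRoot.def, eval_symbol, Complex.ext_iff]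
  simp only [Complex.sub_re, Complex.ofReal_re, Complex.mul_re, Complex.I_re, Complex.ofReal_im,
    Complex.I_im, Complex.sub_im, Complex.mul_im, Complex.zero_re, Complex.zero_im]
  constructor
  · rintro ⟨h1, h2⟩
    constructor <;> linarith
  · rintro ⟨h1, h2⟩
    constructor <;> linarith

theorem stripRe_pos {k p q : ℝ} (hk : 0 ≤ k) (hp : p < 25) (hq : 0 ≤ q) (h : p * q = 0) :
    0 < stripRe k p q := by
  have : ∀ a : ℝ, 5 ≤ a → 0 < (k + a) ^ 2 - p + q := fun a ha => by nlinarith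
  have h5 := this 5 (by norm_num)
  have h7 := this 7 (by norm_num)
  have h9 := this 9 (by norm_num)
  have h11 := this 11 (by norm_num)
  have h13 := this 13 (by norm_num)
  rw [stripRe, mul_assoc, h, reProd]
  simp only [mul_zero, zero_mul, sub_zero, add_zero, ne_eq, OfNat.ofNat_ne_zero,
    not_false_eq_true, zero_pow]
  positivity

/-- A root in the open strip is, for `c ≥ 0`, a common zero of the two strip polynomials. -/
theorem stripIm_eq_zero_of_isRoot {k : ℕ} {c : ℝ} {w : ℂ} (hc : 0 ≤ c) (hw : |w.re| < 5)
    (hr : (symbol k c).IsRoot w) : stripIm k (w.re ^ 2) (w.im ^ 2) = 0 := by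
  obtain ⟨h1, h2⟩ := isRoot_symbol_iff.1 hr
  by_contra h
  have h0 : w.re * w.im = 0 := (mul_eq_zero.1 h2).resolve_right h
  have := stripRe_pos (k := k) (p := w.re ^ 2) (q := w.im ^ 2) (Nat.cast_nonneg k)
    (by have := sq_lt_sq' (abs_lt.1 hw).1 (abs_lt.1 hw).2; linarith) (sq_nonneg _)
    (by rw [← mul_pow, h0, zero_pow two_ne_zero])
  linarith

theorem stripIm_succ_pos {k p q : ℝ} (hk : 0 ≤ k) (hp : p ≤ 25) (hq : 0 ≤ q) :
    0 < stripIm (k + 1) p q := by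
  obtain ⟨d, rfl⟩ : ∃ d, p = 25 - d := ⟨25 - p, by ring⟩
  have hd : 0 ≤ d := by linarith
  have h : stripIm (k + 1) (25 - d) q =
      94369221 + 1497620 * q + 26334 * q ^ 2 + 660 * q ^ 3 + 5 * q ^ 4 + 7575420 * d +
      441780 * d * q + 8820 * d * q ^ 2 + 60 * d * q ^ 3 + 182334 * d ^ 2 + 10620 * d ^ 2 *
      q + 126 * d ^ 2 * q ^ 2 + 1660 * d ^ 3 + 60 * d ^ 3 * q + 5 * d ^ 4 + 125430000 * k +
      3372400 * k * q + 54800 * k * q ^ 2 + 400 * k * q ^ 3 + 6532400 * k * d + 276000 * k *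
      d * q + 2800 * k * d * q ^ 2 + 94800 * k * d ^ 2 + 2800 * k * d ^ 2 * q + 400 * k * d
      ^ 3 + 64395500 * k ^ 2 + 1568620 * k ^ 2 * q + 14740 * k ^ 2 * q ^ 2 + 20 * k ^ 2 * q
      ^ 3 + 2126620 * k ^ 2 * d + 53800 * k ^ 2 * d * q + 140 * k ^ 2 * d * q ^ 2 + 16740 *
      k ^ 2 * d ^ 2 + 140 * k ^ 2 * d ^ 2 * q + 20 * k ^ 2 * d ^ 3 + 17172400 * k ^ 3 +
      300000 * k ^ 3 * q + 1200 * k ^ 3 * q ^ 2 + 340000 * k ^ 3 * d + 4000 * k ^ 3 * d * q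
      + 1200 * k ^ 3 * d ^ 2 + 2649310 * k ^ 4 + 27500 * k ^ 4 * q + 30 * k ^ 4 * q ^ 2 +
      28500 * k ^ 4 * d + 100 * k ^ 4 * d * q + 30 * k ^ 4 * d ^ 2 + 245200 * k ^ 5 + 1200 *
      k ^ 5 * q + 1200 * k ^ 5 * d + 13420 * k ^ 6 + 20 * k ^ 6 * q + 20 * k ^ 6 * d + 400 *
      k ^ 7 + 5 * k ^ 8 := by
    simp only [stripIm, imProd]
    ring
  rw [h]
  positivity

theorem five_le_of_isRoot_succ {k : ℕ} {c : ℝ} {w : ℂ} (hc : 0 ≤ c)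
    (hr : (symbol (k + 1) c).IsRoot w) : 5 ≤ |w.re| := by
  by_contra! hw
  have h := stripIm_eq_zero_of_isRoot hc hw hr
  push_cast at h
  exact (stripIm_succ_pos (Nat.cast_nonneg k)
    (by have := sq_lt_sq' (abs_lt.1 hw).1 (abs_lt.1 hw).2; linarith) (sq_nonneg _)).ne' h

theorem quartic_neg_stripRe (q : ℝ) :
    quartic (-stripRe 0 25 q) = stripIm 0 25 q *
      (33900185500856517377147440988160000 + 8050607559918003492542707295846400 * q +
        955087823899862412593616874635264 * q ^ 2 + 65780110822750865402694834585600 * q ^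
        3 + 2942186332165169755864650743808 * q ^ 4 + 90576275829158083010054062080 * q ^
        5 + 1989770001475948577787215872 * q ^ 6 + 31681003260673163672944640 * q ^ 7 +
        362777352532320322584576 * q ^ 8 + 2852066640290270740480 * q ^ 9 +
        13457871575589294080 * q ^ 10 + 18273792135628800 * q ^ 11 - 143802686521600 * q ^
        12 - 344038784000 * q ^ 13 + 1563942000 * q ^ 14 - 1735000 * q ^ 15 + 625 * q ^ 16) := by
  simp only [quartic, stripRe, stripIm, reProd, imProd]
  ring

theorem stripIm_pos_of_mul_le {p q : ℝ} (hp0 : 0 ≤ p) (hp : p ≤ 25) (hq : 0 ≤ q)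
    (h : q ≤ 1 ∨ 1000 ≤ q) : 0 < stripIm 0 p q := by
  obtain ⟨t, ht⟩ : ∃ t, t = 25 - p + q := ⟨_, rfl⟩
  have htq : q ≤ t := by linarith
  have ht0 : 0 ≤ t := hq.trans htq
  have h1 : stripIm 0 p q = (18579456 + 2856960 * t + 103104 * t ^ 2 + 1280 * t ^ 3 + 5 * t ^ 4) -
      4 * p * q * (34368 + 1280 * t + 10 * t ^ 2) + (4 * p * q) ^ 2 := by
    simp only [stripIm, imProd, ht]
    ring
  have h2 : 4 * p * q * (34368 + 1280 * t + 10 * t ^ 2) ≤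
      100 * q * (34368 + 1280 * t + 10 * t ^ 2) := by
    gcongr
    linarith
  have h3 : 100 * q * (34368 + 1280 * t + 10 * t ^ 2) ≤
      18579455 + 2856960 * t + 103104 * t ^ 2 + 1280 * t ^ 3 + 5 * t ^ 4 := by
    rcases h with h | h
    · have : 100 * q * (34368 + 1280 * t + 10 * t ^ 2) ≤
          100 * 1 * (34368 + 1280 * t + 10 * t ^ 2) := by gcongr
      have : 0 ≤ t ^ 2 := by positivity
      have : 0 ≤ t ^ 3 := by positivity
      have : 0 ≤ t ^ 4 := by positivity
      linarith
    · have h4 : 100 * q ≤ t ^ 2 / 10 := by nlinarith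
      have : 100 * q * (34368 + 1280 * t + 10 * t ^ 2) ≤
          t ^ 2 / 10 * (34368 + 1280 * t + 10 * t ^ 2) := by gcongr
      have h5 : t ^ 2 / 10 * (34368 + 1280 * t + 10 * t ^ 2) =
        3436.8 * t ^ 2 + 128 * t ^ 3 + t ^ 4 := by ring
      have : 0 ≤ t ^ 2 := by positivity
      have : 0 ≤ t ^ 3 := by positivity
      have : 0 ≤ t ^ 4 := by positivity
      linarith
  have h6 : 0 ≤ (4 * p * q) ^ 2 := sq_nonneg _
  linarith

theorem exists_stripIm_eq_zero : ∃ p ∈ Set.Ico (24 : ℝ) 25,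
    stripIm 0 p 28 = 0 ∧ stripRe 0 p 28 < 0 := by
  have hc : ContinuousOn (fun p => stripIm 0 p 28) (Set.Icc 24 25) := by
    unfold stripIm imProd
    fun_prop
  obtain ⟨p, hp, h⟩ := intermediate_value_Icc' (by norm_num) hc
    (show (0 : ℝ) ∈ Set.Icc (stripIm 0 25 28) (stripIm 0 24 28) by
      norm_num [stripIm, imProd])
  have h25 : p ≠ 25 := by
    rintro rfl
    norm_num [stripIm, imProd] at h
  refine ⟨p, ⟨hp.1, lt_of_le_of_ne hp.2 h25⟩, h, ?_⟩
  obtain ⟨d, rfl⟩ : ∃ d, p = 25 - d := ⟨25 - p, by ring⟩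
  have hd0 : 0 ≤ d := by linarith [hp.2]
  have hd1 : d ≤ 1 := by linarith [hp.1]
  have hR : stripRe 0 (25 - d) 28 = -10697637888 - 17833984 * d + 27170560 * d ^ 2 +
      421888 * d ^ 3 + 1580 * d ^ 4 + d ^ 5 := by
    simp only [stripRe, reProd]
    ring
  have h1 : ∀ n : ℕ, d ^ n ≤ 1 := fun n => pow_le_one₀ hd0 hd1
  linarith [h1 2, h1 3, h1 4, h1 5]

theorem quartic_pos_of_nonpos {x : ℝ} (hx : x ≤ 0) : 0 < quartic x := by
  obtain ⟨z, rfl⟩ : ∃ z, x = -z := ⟨-x, by ring⟩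
  have hz : 0 ≤ z := by linarith
  have h4 : 0 ≤ z ^ 4 := by positivity
  unfold quartic
  rcases le_total z 1000000000 with h | h
  · have h3 : 0 ≤ z ^ 3 := by positivity
    nlinarith [sq_nonneg (z - 1000000000)]
  · have h3 : 1000000000 * z ^ 2 ≤ z ^ 3 := by nlinarith [sq_nonneg z]
    nlinarith [sq_nonneg (z - 1018000000)]

theorem exists_quartic_roots : ∃ β γ : ℝ, 1 < β ∧ β < γ ∧ quartic β = 0 ∧ quartic γ = 0 ∧
    ∀ x : ℝ, quartic x = 0 → x = β ∨ x = γ := by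
  have hc : Continuous quartic := by
    unfold quartic
    fun_prop
  obtain ⟨β, hβ, hβ0⟩ := intermediate_value_Icc' (f := quartic)
    (show (10400000000 : ℝ) ≤ 11000000000 by norm_num)
    hc.continuousOn (show (0 : ℝ) ∈ Set.Icc _ _ by norm_num [quartic])
  obtain ⟨γ, hγ, hγ0⟩ := intermediate_value_Icc (f := quartic)
    (show (18000000000 : ℝ) ≤ 19000000000 by norm_num)
    hc.continuousOn (show (0 : ℝ) ∈ Set.Icc _ _ by norm_num [quartic])
  have hβ1 := hβ.1
  have hβ2 := hβ.2
  have hγ1 := hγ.1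
  refine ⟨β, γ, by linarith, by linarith, hβ0, hγ0, fun x hx => ?_⟩
  have hx0 : 0 < x := by
    by_contra! h
    exact (quartic_pos_of_nonpos h).ne' hx
  by_contra! hne
  obtain ⟨m, hm⟩ : ∃ m, m = 3125 * (β + γ) - 83914629120000 := ⟨_, rfl⟩
  obtain ⟨n, hn⟩ : ∃ n, n = 429438995162964368031744 - 83914629120000 * (β + γ) +
    3125 * (β ^ 2 + β * γ + γ ^ 2) := ⟨_, rfl⟩
  have hm0 : 0 < m := by linarith
  have h1 : (γ - β) * (629847004905001626921946285352115240960000 - n * (β * γ)) = 0 := by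
    have : (γ - β) * (629847004905001626921946285352115240960000 - n * (β * γ)) =
        γ * quartic β - β * quartic γ := by
      rw [hn]
      unfold quartic
      ring
    rw [this, hβ0, hγ0]
    ring
  have h2 : n * (β * γ) = 629847004905001626921946285352115240960000 := by
    rcases mul_eq_zero.1 h1 with h | h <;> linarith
  have hn0 : 0 < n := by
    refine pos_of_mul_pos_left (b := β * γ) (by rw [h2]; norm_num) ?_
    have : 0 ≤ β := by linarith
    have : 0 ≤ γ := by linarith
    positivity
  have h3 : (γ - β) * ((x - β) * (x - γ) * (3125 * x ^ 2 + m * x + n)) = 0 := by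
    have : (γ - β) * ((x - β) * (x - γ) * (3125 * x ^ 2 + m * x + n)) =
        (γ - β) * quartic x - (x - β) * quartic γ - (γ - x) * quartic β := by
      rw [hn, hm]
      unfold quartic
      ring
    rw [this, hx, hβ0, hγ0]
    ring
  have h4 : 0 < 3125 * x ^ 2 + m * x + n := by positivity
  have h5 : γ - β ≠ 0 := by linarith
  simp only [mul_eq_zero, h5, sub_eq_zero, hne.1, hne.2, h4.ne', false_or] at h3

/-- The set of `c` for which the radial symbol has a root in the open strip `|Re w| < 5`. -/
def stripSet : Set ℝ := {c | ∃ w : ℂ, |w.re| < 5 ∧ (symbol 0 c).IsRoot w}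

theorem isRoot_symbol_iff_eval {c : ℝ} {w : ℂ} :
    (symbol 0 c).IsRoot w ↔ (-symbolProd 0).eval w = c := by
  simp only [symbol, Polynomial.IsRoot.def, Polynomial.eval_add, Polynomial.eval_C,
    Polynomial.eval_neg]
  rw [neg_eq_iff_eq_neg, eq_neg_iff_add_eq_zero]

theorem natDegree_symbolProd_zero : (-symbolProd 0).natDegree ≠ 0 := by
  intro h
  rw [Polynomial.natDegree_eq_zero] at h
  obtain ⟨x, hx⟩ := h
  have h0 := eval_symbol_zero 0 0
  have h5 := eval_symbol_zero 0 5
  have e : ∀ w : ℂ, (symbol 0 0).eval w = -x := fun w => by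
    rw [symbol, ← neg_eq_iff_eq_neg.2 hx.symm.symm]
    simp
  rw [e] at h0 h5
  rw [h0] at h5
  norm_num at h5

theorem isOpen_stripSet : IsOpen stripSet := by
  have h : stripSet = Complex.ofReal ⁻¹' ((-symbolProd 0).eval '' {w | |w.re| < 5}) := by
    ext c
    simp only [stripSet, isRoot_symbol_iff_eval]
    rfl
  rw [h]
  exact ((Polynomial.isOpenQuotientMap_eval _ natDegree_symbolProd_zero).isOpenMap _
    (isOpen_lt (by fun_prop) continuous_const)).preimage Complex.continuous_ofReal

theorem isClosed_setOf_exists_root :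
    IsClosed {c : ℝ | ∃ w : ℂ, |w.re| ≤ 5 ∧ (symbol 0 c).IsRoot w} := by
  have h : {c : ℝ | ∃ w : ℂ, |w.re| ≤ 5 ∧ (symbol 0 c).IsRoot w} =
      Complex.ofReal ⁻¹' ((-symbolProd 0).eval '' {w | |w.re| ≤ 5}) := by
    ext c
    simp only [isRoot_symbol_iff_eval]
    rfl
  rw [h]
  exact ((-symbolProd 0).isClosedMap_eval _
    (isClosed_le (by fun_prop) continuous_const)).preimage Complex.continuous_ofReal

theorem quartic_eq_zero_of_isRoot {c : ℝ} {w : ℂ} (hc : 0 < c) (hw : |w.re| = 5)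
    (hr : (symbol 0 c).IsRoot w) : quartic c = 0 := by
  obtain ⟨h1, h2⟩ := isRoot_symbol_iff.1 hr
  have hp : w.re ^ 2 = 25 := by
    rw [← sq_abs, hw]
    norm_num
  rw [hp, Nat.cast_zero] at h1 h2
  rw [show c = -stripRe 0 25 (w.im ^ 2) by linarith, quartic_neg_stripRe]
  rcases mul_eq_zero.1 h2 with h | h
  · rcases mul_eq_zero.1 h with h | h
    · norm_num [h] at hp
    · have : stripRe 0 25 (w.im ^ 2) = 0 := by
        rw [h]
        norm_num [stripRe, reProd]
      linarith
  · rw [h, zero_mul]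

theorem subset_stripSet_or_compl {I : Set ℝ} (hI : IsPreconnected I) (hpos : ∀ c ∈ I, 0 < c)
    (hq : ∀ c ∈ I, quartic c ≠ 0) : I ⊆ stripSet ∨ I ⊆ stripSetᶜ := by
  have h := IsPreconnected.subset_or_subset isOpen_stripSet isClosed_setOf_exists_root.isOpen_compl
    (Set.disjoint_compl_right_iff_subset.2 fun c ⟨w, hw, hr⟩ => ⟨w, hw.le, hr⟩)
    (fun c hc => ?_) hI
  · refine h.imp_right fun h c hc hcs => h hc ?_
    obtain ⟨w, hw, hr⟩ := hcs
    exact ⟨w, hw.le, hr⟩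
  · by_cases hcs : c ∈ stripSet
    · exact Or.inl hcs
    · refine Or.inr fun ⟨w, hw, hr⟩ => ?_
      rcases hw.lt_or_eq with hw | hw
      · exact hcs ⟨w, hw, hr⟩
      · exact hq c hc (quartic_eq_zero_of_isRoot (hpos c hc) hw hr)

theorem im_sq_bounds {c : ℝ} {w : ℂ} (hc : 0 ≤ c) (hw : |w.re| < 5)
    (hr : (symbol 0 c).IsRoot w) : 1 < w.im ^ 2 ∧ w.im ^ 2 < 1000 := by
  have h := stripIm_eq_zero_of_isRoot hc hw hr
  rw [Nat.cast_zero] at h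
  by_contra! hcon
  refine (stripIm_pos_of_mul_le (sq_nonneg w.re) ?_ (sq_nonneg w.im) ?_).ne' h
  · have := sq_lt_sq' (abs_lt.1 hw).1 (abs_lt.1 hw).2
    linarith
  · by_cases h1 : w.im ^ 2 ≤ 1
    · exact Or.inl h1
    · exact Or.inr (hcon (not_le.1 h1))

theorem notMem_stripSet_of_lt_one {c : ℝ} (hc : 0 ≤ c) (hc1 : c < 1) : c ∉ stripSet := by
  rintro ⟨w, hw, hr⟩
  have him : 1 ≤ |w.im| := by
    have := (im_sq_bounds hc hw hr).1
    rw [← sq_abs] at this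
    nlinarith [abs_nonneg w.im]
  have h1 : ∀ a : ℝ, 1 ≤ ‖(a ^ 2 : ℂ) - w ^ 2‖ := fun a => by
    rw [sq_sub_sq, norm_mul]
    refine one_le_mul_of_one_le_of_one_le (him.trans ?_) (him.trans ?_)
    · simpa using Complex.abs_im_le_norm (a + w)
    · simpa using Complex.abs_im_le_norm (a - w)
  have h := eval_symbol_zero c w
  rw [hr.eq_zero] at h
  have h2 : (c : ℂ) = -(((5 : ℝ) ^ 2 - w ^ 2) * ((7 : ℝ) ^ 2 - w ^ 2) * ((9 : ℝ) ^ 2 - w ^ 2) *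
      ((11 : ℝ) ^ 2 - w ^ 2) * ((13 : ℝ) ^ 2 - w ^ 2)) := by
    push_cast
    linear_combination -h
  have h3 : 1 ≤ ‖(c : ℂ)‖ := by
    rw [h2, norm_neg]
    simp only [norm_mul]
    exact one_le_mul_of_one_le_of_one_le (one_le_mul_of_one_le_of_one_le
      (one_le_mul_of_one_le_of_one_le (one_le_mul_of_one_le_of_one_le (h1 _) (h1 _)) (h1 _))
      (h1 _)) (h1 _)
  rw [Complex.norm_real, Real.norm_of_nonneg hc] at h3
  linarith

theorem exists_gt_notMem_stripSet (γ : ℝ) : ∃ c, γ < c ∧ c ∉ stripSet := by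
  obtain ⟨M, hM⟩ := (isCompact_closedBall (0 : ℂ) 1000).exists_bound_of_continuousOn
    (-symbolProd 0).continuous.continuousOn
  refine ⟨max (max γ M) 0 + 1, ?_, ?_⟩
  · have := (le_max_left γ M).trans (le_max_left _ 0)
    linarith
  · rintro ⟨w, hw, hr⟩
    have h0 := le_max_right (max γ M) 0
    have h1 := (le_max_right γ M).trans (le_max_left _ 0)
    have him := (im_sq_bounds (by linarith) hw hr).2
    have hwM := hM w (by
      rw [mem_closedBall_zero_iff]
      have : |w.im| < 100 := by
        rw [← sq_abs] at him
        nlinarith [abs_nonneg w.im]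
      linarith [Complex.norm_le_abs_re_add_abs_im w])
    rw [isRoot_symbol_iff_eval.1 hr, Complex.norm_real] at hwM
    have := (le_abs_self _).trans hwM
    linarith

theorem exists_pos_mem_stripSet : ∃ c, 0 < c ∧ c ∈ stripSet := by
  obtain ⟨p, hp, hS, hR⟩ := exists_stripIm_eq_zero
  have hp0 : 0 ≤ p := by linarith [hp.1]
  refine ⟨-stripRe 0 p 28, by linarith, ⟨√p, √28⟩, ?_, isRoot_symbol_iff.2 ?_⟩
  · rw [abs_of_nonneg (Real.sqrt_nonneg p), Real.sqrt_lt' (by norm_num)]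
    linarith [hp.2]
  · simp [Real.sq_sqrt hp0, hS]

theorem mem_stripSet_of_neg {c : ℝ} (hc : c < 0) : c ∈ stripSet := by
  have hcont : ContinuousOn (fun s : ℝ => (25 - s) * (49 - s) * (81 - s) * (121 - s) * (169 - s))
      (Set.Icc c 25) := by fun_prop
  obtain ⟨s, hs, h⟩ := intermediate_value_Icc' (by linarith) hcont (show -c ∈ Set.Icc _ _ by
    refine ⟨by norm_num; exact hc.le, ?_⟩
    have h1 : ∀ a : ℝ, 1 ≤ a → 1 ≤ a - c := fun a ha => by linarith
    have h2 : 0 ≤ (25 - c) := by linarith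
    calc -c ≤ 25 - c := by linarith
      _ ≤ (25 - c) * ((49 - c) * (81 - c) * (121 - c) * (169 - c)) :=
        le_mul_of_one_le_right h2 (one_le_mul_of_one_le_of_one_le (one_le_mul_of_one_le_of_one_le
          (one_le_mul_of_one_le_of_one_le (h1 _ (by norm_num)) (h1 _ (by norm_num)))
          (h1 _ (by norm_num))) (h1 _ (by norm_num)))
      _ = _ := by ring)
  have hs25 : s < 25 := lt_of_le_of_ne hs.2 (by
    rintro rfl
    norm_num at h
    linarith)
  obtain ⟨w, hw⟩ := IsAlgClosed.exists_pow_nat_eq (s : ℂ) (n := 2) (by norm_num)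
  refine ⟨w, ?_, ?_⟩
  · have hre := congrArg Complex.re hw
    have him := congrArg Complex.im hw
    simp [pow_two] at hre him
    rw [← sq_lt_sq₀ (abs_nonneg _) (by norm_num), sq_abs]
    have h0 : w.re * w.im = 0 := by linarith
    rcases mul_eq_zero.1 h0 with h | h
    · norm_num [h]
    · rw [h] at hre
      nlinarith
  · rw [Polynomial.IsRoot.def, eval_symbol_zero, hw]
    have := congrArg (Complex.ofReal) h
    push_cast at this
    linear_combination this

theorem mem_stripSet_iff {β γ : ℝ} (hβ1 : 1 < β) (hβγ : β < γ)
    (h : ∀ x : ℝ, quartic x = 0 → x = β ∨ x = γ) {c : ℝ} :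
    c ∈ stripSet ↔ c ∉ Set.Icc 0 β ∪ Set.Ici γ := by
  have hclosed : IsClosed stripSetᶜ := isOpen_stripSet.isClosed_compl
  have hlow : Set.Icc 0 β ⊆ stripSetᶜ := by
    have : Set.Ioo 0 β ⊆ stripSetᶜ := by
      refine (subset_stripSet_or_compl isPreconnected_Ioo (fun c hc => hc.1) fun c hc hq => ?_
        ).resolve_left fun hsub => ?_
      · rcases h c hq with rfl | rfl
        · exact lt_irrefl _ hc.2
        · exact lt_asymm hc.2 hβγ
      · exact notMem_stripSet_of_lt_one (c := 1 / 2) (by norm_num) (by norm_num)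
          (hsub ⟨by norm_num, by linarith⟩)
    rw [← closure_Ioo (by linarith : (0 : ℝ) ≠ β)]
    exact closure_minimal this hclosed
  have hhigh : Set.Ici γ ⊆ stripSetᶜ := by
    have : Set.Ioi γ ⊆ stripSetᶜ := by
      refine (subset_stripSet_or_compl isPreconnected_Ioi
        (fun c (hc : γ < c) => by linarith) fun c (hc : γ < c) hq => ?_
        ).resolve_left fun hsub => ?_
      · rcases h c hq with rfl | rfl
        · exact lt_asymm hc hβγ
        · exact lt_irrefl _ hc
      · obtain ⟨c, hc, hcs⟩ := exists_gt_notMem_stripSet γ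
        exact hcs (hsub hc)
    rw [← closure_Ioi γ]
    exact closure_minimal this hclosed
  have hmid : Set.Ioo β γ ⊆ stripSet := by
    refine (subset_stripSet_or_compl isPreconnected_Ioo
      (fun c hc => by linarith [hc.1]) fun c hc hq => ?_).resolve_right fun hsub => ?_
    · rcases h c hq with rfl | rfl
      · exact lt_irrefl _ hc.1
      · exact lt_irrefl _ hc.2
    · obtain ⟨c, hc, hcs⟩ := exists_pos_mem_stripSet
      rcases le_or_gt c β with h1 | h1
      · exact hlow ⟨hc.le, h1⟩ hcs
      · rcases le_or_gt γ c with h2 | h2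
        · exact hhigh h2 hcs
        · exact hsub ⟨h1, h2⟩ hcs
  constructor
  · rintro hc (h1 | h1)
    · exact hlow h1 hc
    · exact hhigh h1 hc
  · intro hc
    rcases lt_or_ge c 0 with h0 | h0
    · exact mem_stripSet_of_neg h0
    · exact hmid ⟨not_le.1 fun h1 => hc (Or.inl ⟨h0, h1⟩), not_le.1 fun h1 => hc (Or.inr h1)⟩

theorem essentiallySelfAdjoint_T5op_iff {c : ℝ} :
    EssentiallySelfAdjoint (T5op c) ↔ c ∉ stripSet := by
  refine ⟨fun h ⟨w, hw, hr⟩ => not_essentiallySelfAdjoint_of_root hw hr h, fun h => ?_⟩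
  have hc : 0 ≤ c := by
    by_contra! hc
    exact h (mem_stripSet_of_neg hc)
  refine essentiallySelfAdjoint_T5op_of_roots fun k w hr => ?_
  rcases k with _ | k
  · by_contra! hw
    exact h ⟨w, hw, hr⟩
  · exact five_le_of_isRoot_succ hc hr

theorem stmt12 :
    ∃ β γ : ℝ, β < γ ∧ quartic β = 0 ∧ quartic γ = 0 ∧
      (∀ x : ℝ, quartic x = 0 → x = β ∨ x = γ) ∧
      ∀ c : ℝ, EssentiallySelfAdjoint (T5op c) ↔ c ∈ Set.Icc 0 β ∪ Set.Ici γ := by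
  obtain ⟨β, γ, hβ1, hβγ, hβ, hγ, h⟩ := exists_quartic_roots
  refine ⟨β, γ, hβγ, hβ, hγ, h, fun c => ?_⟩
  rw [essentiallySelfAdjoint_T5op_iff, mem_stripSet_iff hβ1 hβγ h, not_not]
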